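/- arXiv:1909.06958 — 5 statements merged into one kernel-verified Lean document; each statement's English description precedes it below -/
import Mathlib

section
/- Let G be a connected unicyclic nonbipartite graph, so its unique cycle C is odd of length 2k+1, and let I = I(G) be its edge ideal. Then for every integer m ≥ 1: if m < d_G then (Iᵐ : 𝔪) = Iᵐ, and if m ≥ d_G then (Iᵐ : 𝔪) = Iᵐ + u_G·I^{m−d_G} (with I⁰ = S). This is the ideal-theoretic content of Theorem: Soc(I(G)) is a free module of rank 1 over the fiber cone, generated by the class of u_G in degree d_G − 1. -/
open MvPolynomial

/-- The monomial `X i * X j` attached to an edge of a graph. -/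
noncomputable def edgeMon {n : ℕ} (K : Type*) [Field K] :
    Sym2 (Fin n) → MvPolynomial (Fin n) K :=
  Sym2.lift ⟨fun i j => X i * X j, fun _ _ => mul_comm _ _⟩

/-- An edge is a leaf if one of its endpoints is adjacent to exactly one vertex. -/
def IsLeafEdge {n : ℕ} (G : SimpleGraph (Fin n)) (e : Sym2 (Fin n)) : Prop :=
  ∃ x, x ∈ e ∧ ∃! y, G.Adj x y


/-- `ES G N z`: the exponent vector `z` is a sum of `N` edge vectors of `G`. -/
inductive ES {n : ℕ} (G : SimpleGraph (Fin n)) : ℕ → (Fin n →₀ ℕ) → Prop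
  | zero : ES G 0 0
  | step {N : ℕ} {z : Fin n →₀ ℕ} {x y : Fin n} (h : ES G N z) (hxy : G.Adj x y) :
      ES G (N + 1) (z + (Finsupp.single x 1 + Finsupp.single y 1))

theorem ES.add {n : ℕ} {G : SimpleGraph (Fin n)} {N M : ℕ} {z w : Fin n →₀ ℕ}
    (hz : ES G N z) (hw : ES G M w) : ES G (N + M) (z + w) := by
  induction hw with
  | zero => simpa using hz
  | step h hxy ih =>
    rw [← add_assoc, ← add_assoc]
    exact ES.step ih hxy

theorem ES.single {n : ℕ} {G : SimpleGraph (Fin n)} {x y : Fin n} (hxy : G.Adj x y) :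
    ES G 1 (Finsupp.single x 1 + Finsupp.single y 1) := by
  simpa using ES.step ES.zero hxy

theorem ES.nsmul {n : ℕ} {G : SimpleGraph (Fin n)} {N : ℕ} {z : Fin n →₀ ℕ}
    (hz : ES G N z) (j : ℕ) : ES G (j * N) (j • z) := by
  induction j with
  | zero => simpa using ES.zero
  | succ j ih => rw [add_mul, one_mul, add_smul, one_smul]; exact ih.add hz

theorem ES.sum {n : ℕ} {G : SimpleGraph (Fin n)} {ι : Type*} (s : Finset ι) (N : ι → ℕ)
    (z : ι → Fin n →₀ ℕ) (h : ∀ i ∈ s, ES G (N i) (z i)) :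
    ES G (∑ i ∈ s, N i) (∑ i ∈ s, z i) := by
  classical
  induction s using Finset.induction_on with
  | empty => simpa using ES.zero
  | insert i s hi ih =>
    rw [Finset.sum_insert hi, Finset.sum_insert hi]
    exact (h i (Finset.mem_insert_self i s)).add
      (ih fun j hj => h j (Finset.mem_insert_of_mem hj))

theorem ES.mono {n : ℕ} {G H : SimpleGraph (Fin n)} (hle : H ≤ G) {N : ℕ} {z : Fin n →₀ ℕ}
    (hz : ES H N z) : ES G N z := by
  induction hz with
  | zero => exact ES.zero
  | step h hxy ih => exact ES.step ih (hle hxy)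

/-- weighted lower bound -/
theorem ES.weight {n : ℕ} {G : SimpleGraph (Fin n)} {N : ℕ} {z : Fin n →₀ ℕ}
    (hz : ES G N z) (y : Fin n → ℤ) (t : ℤ) (hy : ∀ i j, G.Adj i j → t ≤ y i + y j) :
    t * N ≤ ∑ x, y x * (z x : ℤ) := by
  induction hz with
  | zero => simp
  | @step N z i j h hxy ih =>
    have h1 := hy i j hxy
    simp only [Finsupp.add_apply, Finsupp.single_apply, Nat.cast_add, mul_add,
      Finset.sum_add_distrib]
    simp
    linarith

theorem ES.degree {n : ℕ} {G : SimpleGraph (Fin n)} {N : ℕ} {z : Fin n →₀ ℕ}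
    (hz : ES G N z) : ∑ x, z x = 2 * N := by
  induction hz with
  | zero => simp
  | @step N z i j h hxy ih =>
    simp only [Finsupp.add_apply, Finsupp.single_apply, 
      Finset.sum_add_distrib]
    simp
    linarith

theorem konig {n : ℕ} (H : SimpleGraph (Fin n)) (ψ : Fin n → Prop)
    (hψ : ∀ x y, H.Adj x y → (ψ x ↔ ¬ ψ y)) (b : Fin n → ℕ) (N : ℕ)
    (hcov : ∀ S : Finset (Fin n), (∀ x y, H.Adj x y → x ∈ S ∨ y ∈ S) → N ≤ ∑ x ∈ S, b x) :
    ∃ z, ES H N z ∧ ∀ x, z x ≤ b x := by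
  classical
  let ι := {p : Σ x : Fin n, Fin (b x) // ψ p.1}
  have cardf : ∀ S : Finset (Fin n),
      (Finset.univ.filter fun q : Σ x : Fin n, Fin (b x) => q.1 ∈ S).card = ∑ x ∈ S, b x := by
    intro S
    have : (Finset.univ.filter fun q : Σ x : Fin n, Fin (b x) => q.1 ∈ S)
        = S.sigma (fun x => Finset.univ) := by
      ext q; simp
    rw [this, Finset.card_sigma]; simp
  let A0 : Finset (Fin n) := Finset.univ.filter ψ
  have hA0 : N ≤ ∑ x ∈ A0, b x := by
    apply hcov
    intro x y hxy
    have := hψ x y hxy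
    by_cases hx : ψ x
    · left; simp [A0, hx]
    · right; simp [A0]; tauto
  have hι : Fintype.card ι = ∑ x ∈ A0, b x := by
    rw [← cardf, Fintype.card_subtype]
    simp [A0]
  let d := ∑ x ∈ A0, b x - N
  let r : ι → (Σ x : Fin n, Fin (b x)) ⊕ Fin d → Prop := fun p q =>
    Sum.elim (fun s => H.Adj p.1.1 s.1) (fun _ => True) q
  have hall : ∀ A : Finset ι, A.card ≤ (Finset.univ.filter fun q => ∃ p ∈ A, r p q).card := by
    intro A
    rcases A.eq_empty_or_nonempty with rfl | ⟨p0, hp0⟩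
    · simp
    let P : Finset (Fin n) := A.image fun p => p.1.1
    let Q : Finset (Fin n) := Finset.univ.filter fun y => ∃ x ∈ P, H.Adj x y
    have hPA : P ⊆ A0 := by
      intro x hx
      simp only [P, Finset.mem_image] at hx
      obtain ⟨p, _, rfl⟩ := hx
      simpa [A0] using p.2
    have h1 : A.card ≤ ∑ x ∈ P, b x := by
      rw [← cardf, ← Finset.card_map (Function.Embedding.subtype _)]
      apply Finset.card_le_card
      intro q hq
      simp only [Finset.mem_map] at hq
      obtain ⟨p, hp, rfl⟩ := hq
      simp only [Finset.mem_filter, Finset.mem_univ, true_and]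
      exact Finset.mem_image_of_mem _ hp
    have h2 : N ≤ ∑ x ∈ (A0 \ P) ∪ Q, b x := by
      apply hcov
      intro x y hxy
      have := hψ x y hxy
      simp only [Finset.mem_union, Finset.mem_sdiff, A0, Q, Finset.mem_filter, Finset.mem_univ,
        true_and]
      by_cases hx : ψ x
      · by_cases hxP : x ∈ P
        · exact Or.inr (Or.inr ⟨x, hxP, hxy⟩)
        · exact Or.inl (Or.inl ⟨hx, hxP⟩)
      · by_cases hyP : y ∈ P
        · exact Or.inl (Or.inr ⟨y, hyP, hxy.symm⟩)
        · exact Or.inr (Or.inl ⟨by tauto, hyP⟩)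
    have h3 : ∑ x ∈ (A0 \ P) ∪ Q, b x ≤ ∑ x ∈ A0 \ P, b x + ∑ x ∈ Q, b x := by
      rw [← Finset.sum_union_inter]; omega
    have h4 := Finset.sum_sdiff (f := b) hPA
    have h5 : ∑ x ∈ Q, b x + d ≤ (Finset.univ.filter fun q => ∃ p ∈ A, r p q).card := by
      have : (Finset.univ.filter fun q : Σ x : Fin n, Fin (b x) => q.1 ∈ Q).disjSum
          (Finset.univ : Finset (Fin d)) ⊆ (Finset.univ.filter fun q => ∃ p ∈ A, r p q) := by
        intro q hq
        rcases q with q | q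
        · simp only [Finset.inl_mem_disjSum, Q, P, Finset.mem_filter, Finset.mem_univ, true_and,
            Finset.mem_image] at hq
          obtain ⟨_, ⟨p, hp, rfl⟩, hadj⟩ := hq
          simp only [Finset.mem_filter, Finset.mem_univ, true_and]
          exact ⟨p, hp, hadj⟩
        · simp only [Finset.mem_filter, Finset.mem_univ, true_and]
          exact ⟨p0, hp0, trivial⟩
      have := Finset.card_le_card this
      rw [Finset.card_disjSum, cardf] at this
      simpa using this
    omega
  obtain ⟨g, ginj, hg⟩ := (Fintype.all_card_le_filter_rel_iff_exists_injective r).1 hall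
  let P0 : Finset ι := Finset.univ.filter fun p => (g p).isLeft
  have hP0 : N ≤ P0.card := by
    have h1 : (Finset.univ.filter fun p : ι => ¬ (g p).isLeft).card ≤ d := by
      have : (Finset.univ.filter fun p : ι => ¬ (g p).isLeft).card ≤
          ((Finset.univ : Finset (Fin d)).map Function.Embedding.inr
            (β := (Σ x : Fin n, Fin (b x)) ⊕ Fin d)).card := by
        apply Finset.card_le_card_of_injOn g
        · intro p hp
          simp only [Finset.coe_filter, Finset.mem_univ, true_and, Set.mem_ofPred_eq] at hp
          rcases h : g p with q | q
          · simp [h] at hp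
          · simp
        · exact ginj.injOn
      simpa using this
    have h2 := Finset.card_filter_add_card_filter_not (s := (Finset.univ : Finset ι))
      (fun p => ((g p).isLeft : Prop))
    rw [Finset.card_univ, hι] at h2
    have : P0.card = (Finset.univ.filter fun p : ι => ((g p).isLeft : Prop)).card := rfl
    omega
  obtain ⟨P, hPP, hPc⟩ := Finset.exists_subset_card_eq hP0
  have hq : ∀ p : ι, ∃ q : Σ x : Fin n, Fin (b x), p ∈ P → g p = Sum.inl q := by
    intro p
    by_cases hp : p ∈ P
    · have := hPP hp
      simp only [P0, Finset.mem_filter, Finset.mem_univ, true_and] at this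
      obtain ⟨q, hq⟩ := Sum.isLeft_iff.1 this
      exact ⟨q, fun _ => hq⟩
    · exact ⟨p.1, fun h => absurd h hp⟩
  choose q hq using hq
  have hadj : ∀ p ∈ P, H.Adj p.1.1 (q p).1 := by
    intro p hp
    have := hg p
    rw [hq p hp] at this
    exact this
  refine ⟨∑ p ∈ P, (Finsupp.single p.1.1 1 + Finsupp.single (q p).1 1), ?_, ?_⟩
  · have := ES.sum (G := H) P (fun _ => 1)
      (fun p => (Finsupp.single p.1.1 1 + Finsupp.single (q p).1 1))
      (fun p hp => ES.single (hadj p hp))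
    simpa [hPc] using this
  · intro x
    rw [Finset.sum_add_distrib, Finsupp.add_apply, Finsupp.finsetSum_apply,
      Finsupp.finsetSum_apply]
    simp only [Finsupp.single_apply]
    have hb := cardf {x}
    simp only [Finset.mem_singleton, Finset.sum_singleton] at hb
    by_cases hx : ψ x
    · have h2 : ∑ p ∈ P, (if (q p).1 = x then 1 else 0) = 0 := by
        apply Finset.sum_eq_zero
        intro p hp
        rw [if_neg]
        rintro rfl
        exact ((hψ _ _ (hadj p hp)).1 p.2) hx
      rw [h2, add_zero, ← hb, ← Finset.card_filter]
      apply Finset.card_le_card_of_injOn (fun p => p.1)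
      · intro p hp
        simp at hp ⊢
        exact hp.2
      · exact Subtype.val_injective.injOn
    · have h2 : ∑ p ∈ P, (if p.1.1 = x then 1 else 0) = 0 := by
        apply Finset.sum_eq_zero
        intro p hp
        rw [if_neg]
        rintro rfl
        exact hx p.2
      rw [h2, zero_add, ← hb, ← Finset.card_filter]
      apply Finset.card_le_card_of_injOn q
      · intro p hp
        simp at hp ⊢
        exact hp.2
      · intro p hp p' hp' h
        simp at hp hp'
        apply ginj
        rw [hq p hp.1, hq p' hp'.1, h]

theorem critical_card {n : ℕ} (G : SimpleGraph (Fin n)) (x0 y0 : Fin n) (h0 : G.Adj x0 y0)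
    (ψ : Fin n → Prop)
    (hψ : ∀ x y, G.Adj x y → s(x, y) ≠ s(x0, y0) → (ψ x ↔ ¬ ψ y))
    (a : Fin n →₀ ℕ) (m : ℕ)
    (hcrit : ∀ v, ∃ z, ES G m z ∧ z ≤ a + Finsupp.single v 1)
    (hn : ¬ ∃ z, ES G m z ∧ z ≤ a) : ∑ x, a x + 1 ≤ 2 * m := by
  classical
  by_contra hcon
  have hbig : 2 * m ≤ ∑ x, a x := by omega
  -- weights
  have key : ∀ (y : Fin n → ℤ) (t : ℤ), (∀ i j, G.Adj i j → t ≤ y i + y j) → (∀ x, 0 ≤ y x) →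
      ∀ v, y v = 0 → t * m ≤ ∑ x, y x * (a x : ℤ) := by
    intro y t hy hy0 v hv
    obtain ⟨z, hz, hza⟩ := hcrit v
    refine (hz.weight y t hy).trans ?_
    apply Finset.sum_le_sum
    intro x _
    have := hza x
    rw [Finsupp.add_apply, Finsupp.single_apply] at this
    split_ifs at this with hvx
    · subst hvx; simp [hv]
    · exact mul_le_mul_of_nonneg_left (by exact_mod_cast this) (hy0 x)
  have ind : ∀ S : Finset (Fin n), ∑ x, (if x ∈ S then (1 : ℤ) else 0) * (a x : ℤ)
      = ((∑ x ∈ S, a x : ℕ) : ℤ) := by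
    intro S; simp
  have hS : ∀ S : Finset (Fin n), (∀ x y, G.Adj x y → x ∈ S ∨ y ∈ S) → m ≤ ∑ x ∈ S, a x := by
    intro S hcov
    by_cases hu : S = Finset.univ
    · subst hu; omega
    · have : ∃ v, v ∉ S := by
        by_contra h; push Not at h; exact hu (Finset.eq_univ_iff_forall.2 h)
      obtain ⟨v, hv⟩ := this
      have := key (fun x => if x ∈ S then 1 else 0) 1 (by
        intro i j hij
        have := hcov i j hij
        split_ifs <;> first | omega | tauto) (by intro x; split_ifs <;> simp) v
          (by simp [hv])
      rw [ind] at this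
      rw [one_mul] at this
      exact_mod_cast this
  let Cov : Finset (Fin n) → Prop := fun S =>
    ∀ x y, G.Adj x y → s(x, y) ≠ s(x0, y0) → x ∈ S ∨ y ∈ S
  have hSS : ∀ S T : Finset (Fin n), Cov S → Cov T → x0 ∉ S → y0 ∉ S → x0 ∈ T → y0 ∈ T →
      2 * m ≤ ∑ x ∈ S, a x + ∑ x ∈ T, a x := by
    intro S T hcS hcT hxS hyS hxT hyT
    by_cases hu : S ∪ T = Finset.univ
    · have h1 := Finset.sum_union_inter (s₁ := S) (s₂ := T) (f := a)
      rw [hu] at h1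
      omega
    · have : ∃ v, v ∉ S ∪ T := by
        by_contra h; push Not at h; exact hu (Finset.eq_univ_iff_forall.2 h)
      obtain ⟨v, hv⟩ := this
      simp only [Finset.mem_union, not_or] at hv
      have := key (fun x => (if x ∈ S then 1 else 0) + (if x ∈ T then 1 else 0)) 2 (by
        intro i j hij
        by_cases he : s(i, j) = s(x0, y0)
        · rcases Sym2.eq_iff.1 he with ⟨rfl, rfl⟩ | ⟨rfl, rfl⟩ <;> simp [*]
        · have h1 := hcS i j hij he
          have h2 := hcT i j hij he
          split_ifs <;> first | omega | tauto)
          (by intro x; split_ifs <;> simp) v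
          (by simp [hv])
      simp only [add_mul, Finset.sum_add_distrib] at this
      rw [ind, ind] at this
      exact_mod_cast this
  -- minimal cover avoiding x0, y0
  have hne : (Finset.univ.filter fun S : Finset (Fin n) => Cov S ∧ x0 ∉ S ∧ y0 ∉ S).Nonempty := by
    refine ⟨Finset.univ \ {x0, y0}, ?_⟩
    simp only [Finset.mem_filter, Finset.mem_univ, true_and]
    refine ⟨?_, by simp, by simp⟩
    intro x y hxy he
    by_contra hcon
    simp only [Finset.mem_sdiff, Finset.mem_univ, true_and, Finset.mem_insert,
      Finset.mem_singleton] at hcon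
    have h1 : x = x0 ∨ x = y0 := by tauto
    have h2 : y = x0 ∨ y = y0 := by tauto
    have hxy' := hxy.ne
    apply he
    rw [Sym2.eq_iff]
    rcases h1 with rfl | rfl <;> rcases h2 with rfl | rfl <;> simp_all
  obtain ⟨S0, hS0, hmin⟩ := Finset.exists_min_image _ (fun S => ∑ x ∈ S, a x) hne
  simp only [Finset.mem_filter, Finset.mem_univ, true_and] at hS0 hmin
  obtain ⟨hc0, hx0, hy0⟩ := hS0
  let j := m - ∑ x ∈ S0, a x
  have insCov : ∀ S, Cov S → (x0 ∈ S ∨ y0 ∈ S) → m ≤ ∑ x ∈ S, a x := by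
    intro S hc hor
    apply hS
    intro x y hxy
    by_cases he : s(x, y) = s(x0, y0)
    · rcases Sym2.eq_iff.1 he with ⟨rfl, rfl⟩ | ⟨rfl, rfl⟩
      · exact hor
      · exact hor.symm
    · exact hc x y hxy he
  have hjx : j ≤ a x0 := by
    have := insCov (insert x0 S0) (fun x y hxy he => by
      rcases hc0 x y hxy he with h | h <;> simp [h]) (by simp)
    rw [Finset.sum_insert hx0] at this
    omega
  have hjy : j ≤ a y0 := by
    have := insCov (insert y0 S0) (fun x y hxy he => by
      rcases hc0 x y hxy he with h | h <;> simp [h]) (by simp)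
    rw [Finset.sum_insert hy0] at this
    omega
  have hne0 : x0 ≠ y0 := h0.ne
  let b : Fin n → ℕ := fun x => a x - ((if x = x0 then j else 0) + (if x = y0 then j else 0))
  have hab : ∀ x, a x = b x + ((if x = x0 then j else 0) + (if x = y0 then j else 0)) := by
    intro x
    dsimp only [b]
    split_ifs with h1 h2 h2
    · exact absurd (h1.symm.trans h2) hne0
    · subst h1; omega
    · subst h2; omega
    · omega
  have hadjH : ∀ x y, (G.deleteEdges {s(x0, y0)}).Adj x y ↔ G.Adj x y ∧ s(x, y) ≠ s(x0, y0) := by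
    intro x y
    rw [SimpleGraph.deleteEdges_adj]; simp
  obtain ⟨z, hz, hzb⟩ := konig (G.deleteEdges {s(x0, y0)}) ψ (fun x y hxy =>
    hψ x y ((hadjH x y).1 hxy).1 ((hadjH x y).1 hxy).2) b (m - j) (by
      intro S hcov
      have hc : Cov S := fun x y hxy he => hcov x y ((hadjH x y).2 ⟨hxy, he⟩)
      have hsum : ∑ x ∈ S, a x = ∑ x ∈ S, b x +
          ((if x0 ∈ S then j else 0) + (if y0 ∈ S then j else 0)) := by
        rw [Finset.sum_congr rfl (fun x _ => hab x), Finset.sum_add_distrib,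
          Finset.sum_add_distrib]
        simp
      by_cases h1 : x0 ∈ S <;> by_cases h2 : y0 ∈ S <;> simp only [h1, h2, if_true, if_false] at hsum
      · have e1 := hSS S0 S hc0 hc hx0 hy0 h1 h2
        have e2 := insCov S hc (Or.inl h1)
        omega
      · have e2 := insCov S hc (Or.inl h1)
        omega
      · have e2 := insCov S hc (Or.inr h2)
        omega
      · have := hmin S ⟨hc, h1, h2⟩
        omega)
  apply hn
  refine ⟨z + j • (Finsupp.single x0 1 + Finsupp.single y0 1), ?_, ?_⟩
  · have := (hz.mono (SimpleGraph.deleteEdges_le _)).add ((ES.single h0).nsmul j)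
    rwa [mul_one, Nat.sub_add_cancel (Nat.sub_le _ _)] at this
  · intro x
    have h1 := hzb x
    have h2 := hab x
    simp only [Finsupp.add_apply, Finsupp.smul_apply, Finsupp.single_apply, smul_eq_mul, mul_add,
      mul_ite, mul_one, mul_zero]
    rw [h2]
    simp only [eq_comm (a := x0), eq_comm (a := y0)]
    omega

/-- Pairing of an integer weight with an exponent vector. -/
def dot {n : ℕ} (φ : Fin n → ℤ) : (Fin n →₀ ℕ) →+ ℤ where
  toFun z := ∑ x, φ x * (z x : ℤ)
  map_zero' := by simp
  map_add' z w := by simp [mul_add, Finset.sum_add_distrib]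

theorem dot_apply {n : ℕ} (φ : Fin n → ℤ) (z : Fin n →₀ ℕ) :
    dot φ z = ∑ x, φ x * (z x : ℤ) := rfl

theorem dot_single {n : ℕ} (φ : Fin n → ℤ) (x : Fin n) : dot φ (Finsupp.single x 1) = φ x := by
  simp [dot_apply, Finsupp.single_apply]

/-- Exponent vector of an edge. -/
noncomputable def evec {n : ℕ} : Sym2 (Fin n) → (Fin n →₀ ℕ) :=
  Sym2.lift ⟨fun i j => Finsupp.single i 1 + Finsupp.single j 1, fun _ _ => add_comm _ _⟩

theorem evec_mk {n : ℕ} (i j : Fin n) :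
    evec s(i, j) = Finsupp.single i 1 + Finsupp.single j 1 := rfl

theorem dot_evec {n : ℕ} (φ : Fin n → ℤ) (i j : Fin n) : dot φ (evec s(i, j)) = φ i + φ j := by
  rw [evec_mk, map_add, dot_single, dot_single]

/-- exponent vector of a list of vertices -/
noncomputable def lvec {n : ℕ} (l : List (Fin n)) : Fin n →₀ ℕ :=
  (l.map fun x => Finsupp.single x 1).sum

theorem walk_sum {n : ℕ} {G : SimpleGraph (Fin n)} (φ : Fin n → ℤ) {x y : Fin n} (p : G.Walk x y) :
    (p.edges.map fun e => dot φ (evec e)).sum = 2 * dot φ (lvec p.support.tail) + φ x - φ y := by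
  induction p with
  | nil => simp [lvec]
  | @cons u w z h p ih =>
    have hs : lvec (SimpleGraph.Walk.cons h p).support.tail
        = Finsupp.single w 1 + lvec p.support.tail := by
      rw [SimpleGraph.Walk.support_cons, List.tail_cons]
      calc lvec p.support = lvec (w :: p.support.tail) := by
            rw [SimpleGraph.Walk.cons_tail_support]
        _ = _ := by simp only [lvec, List.map_cons, List.sum_cons]
    rw [hs, SimpleGraph.Walk.edges_cons, List.map_cons, List.sum_cons, ih, dot_evec, map_add,
      dot_single]
    ring

theorem sum_ite_nodup {α : Type*} [DecidableEq α] (l : List α) (hl : l.Nodup) (e : α) (c : ℤ) :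
    (l.map fun e' => if e' = e then c else 0).sum = if e ∈ l then c else 0 := by
  induction l with
  | nil => simp
  | cons a l ih =>
    rw [List.nodup_cons] at hl
    rw [List.map_cons, List.sum_cons, ih hl.2]
    by_cases h : a = e
    · subst h; simp [hl.1]
    · simp [h, Ne.symm h]

theorem lvec_odd {n : ℕ} (φ : Fin n → ℤ) (hφ : ∀ x, φ x = 1 ∨ φ x = -1) (l : List (Fin n)) :
    (dot φ (lvec l) - l.length) % 2 = 0 := by
  induction l with
  | nil => simp [lvec]
  | cons a l ih =>
    have : lvec (a :: l) = Finsupp.single a 1 + lvec l := by simp [lvec]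
    rw [this, map_add, dot_single, List.length_cons]
    push_cast
    rcases hφ a with h | h <;> rw [h] <;> omega

theorem sign_exists {n : ℕ} (G : SimpleGraph (Fin n)) (v : Fin n) (c : G.Walk v v)
    (huniq : ∀ (w : Fin n) (p : G.Walk w w), p.IsCycle → ∀ e, e ∈ p.edges ↔ e ∈ c.edges)
    (e : Sym2 (Fin n)) (he : e ∈ c.edges) :
    ∃ σ : Fin n → ℤ, (∀ x, σ x = 1 ∨ σ x = -1) ∧
      ∀ x y, G.Adj x y → s(x, y) ≠ e → σ x + σ y = 0 := by
  have hac : (G.deleteEdges {e}).IsAcyclic := by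
    intro w p hp
    have h1 := (huniq w (p.mapLe (SimpleGraph.deleteEdges_le _)) (hp.mapLe _) e).2 he
    rw [SimpleGraph.Walk.edges_mapLe_eq_edges] at h1
    have := p.edges_subset_edgeSet h1
    simp [SimpleGraph.edgeSet_deleteEdges] at this
  obtain ⟨col⟩ := hac.colorable_two
  refine ⟨fun x => if col x = 0 then 1 else -1, fun x => by
    by_cases h : col x = 0 <;> simp [h], ?_⟩
  intro x y hxy hne
  have : (G.deleteEdges {e}).Adj x y := by
    rw [SimpleGraph.deleteEdges_adj]; exact ⟨hxy, by simpa using hne⟩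
  have := col.valid this
  have h2 : ∀ i : Fin 2, i = 0 ∨ i = 1 := by decide
  rcases h2 (col x) with h | h <;> rcases h2 (col y) with h' | h' <;> simp_all

theorem dual_exists {n : ℕ} (G : SimpleGraph (Fin n))
    (k : ℕ) (v : Fin n) (c : G.Walk v v) (hc : c.IsCycle) (hlen : c.length = 2 * k + 1)
    (huniq : ∀ (w : Fin n) (p : G.Walk w w), p.IsCycle → ∀ e, e ∈ p.edges ↔ e ∈ c.edges)
    (e : Sym2 (Fin n)) (he : e ∈ G.edgeSet) :
    ∃ (φ : Fin n → ℤ) (t δ : ℤ), 0 < t ∧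
      (∀ x y, G.Adj x y → φ x + φ y = if s(x, y) = e then t else 0) ∧
      (∀ w, -δ ≤ φ w) ∧ (∃ w, φ w = -δ) ∧
      (e ∈ c.edges → 2 * δ = t) ∧ (e ∉ c.edges → IsLeafEdge G e → δ = 0) ∧
      (e ∉ c.edges → ¬ IsLeafEdge G e → δ = t) := by
  classical
  by_cases hec : e ∈ c.edges
  · obtain ⟨σ, hσ, hσe⟩ := sign_exists G v c huniq e hec
    obtain ⟨x, y⟩ := e
    change s(x, y) ∈ c.edges at hec
    -- both ends have the same sign
    have hsum : 2 * dot σ (lvec c.support.tail) = σ x + σ y := by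
      have h1 := walk_sum σ c
      have h2 : (c.edges.map fun e => dot σ (evec e))
          = c.edges.map fun e' => if e' = s(x, y) then σ x + σ y else 0 := by
        apply List.map_congr_left
        intro e' he'
        split_ifs with h
        · subst h; exact dot_evec _ _ _
        · have := c.edges_subset_edgeSet he'
          obtain ⟨a, b⟩ := e'
          exact (dot_evec _ _ _).trans (hσe a b this h)
      rw [h2, sum_ite_nodup _ hc.isCircuit.isTrail.edges_nodup, if_pos hec] at h1
      linarith
    have hodd := lvec_odd σ hσ c.support.tail
    have hl : c.support.tail.length = 2 * k + 1 := by simp [hlen]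
    rw [hl] at hodd
    push_cast at hodd
    have hxy : σ x = σ y := by
      rcases hσ x with h | h <;> rcases hσ y with h' | h' <;> rw [h, h'] at hsum ⊢ <;> omega
    have hsq : σ x * σ x = 1 := by rcases hσ x with h | h <;> rw [h] <;> norm_num
    have hpm : ∀ w, σ x * σ w = 1 ∨ σ x * σ w = -1 := by
      intro w
      rcases hσ x with h | h <;> rcases hσ w with h' | h' <;> rw [h, h'] <;> norm_num
    refine ⟨fun w => σ x * σ w, 2, 1, by norm_num, ?_, ?_, ?_, ?_⟩
    · intro a b hab
      rw [← mul_add]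
      split_ifs with h
      · rcases Sym2.eq_iff.1 h with ⟨rfl, rfl⟩ | ⟨rfl, rfl⟩
        · rw [← hxy]; linarith
        · rw [← hxy]; linarith
      · rw [hσe a b hab h, mul_zero]
    · intro w
      rcases hpm w with h | h <;> simp [h]
    · -- another cycle edge
      have h3 := hc.three_le_length
      have : ∃ e' ∈ c.edges, e' ≠ s(x, y) := by
        by_contra hcon
        push Not at hcon
        have hle : c.edges.length ≤ 1 := by
          have h5 : c.edges.toFinset ⊆ {s(x, y)} := by
            intro e' he'
            simp only [Finset.mem_singleton]
            exact hcon e' (by simpa using he')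
          have := Finset.card_le_card h5
          rwa [List.toFinset_card_of_nodup hc.isCircuit.isTrail.edges_nodup,
            Finset.card_singleton] at this
        rw [SimpleGraph.Walk.length_edges] at hle
        omega
      obtain ⟨⟨a, b⟩, he', hne⟩ := this
      have h6 := hσe a b (c.edges_subset_edgeSet he') hne
      have h7 : σ x * σ a + σ x * σ b = 0 := by rw [← mul_add, h6, mul_zero]
      rcases hpm a with h | h
      · exact ⟨b, by dsimp only; linarith⟩
      · exact ⟨a, h⟩
    · have : s(x, y) ∈ c.edges := hec
      exact ⟨fun _ => by norm_num, fun h => absurd this h, fun h => absurd this h⟩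
  by_cases hleaf : IsLeafEdge G e
  · have hleaf0 := hleaf
    obtain ⟨x, hx, y, hxy, hy⟩ := hleaf
    obtain ⟨y', rfl⟩ := hx
    have : y' = y := hy y' he
    subst this
    have hne : x ≠ y' := hxy.ne
    refine ⟨fun w => if w = x then 1 else 0, 1, 0, by norm_num, ?_, ?_, ⟨y', by simp [hne.symm]⟩,
      fun h => absurd h hec, fun _ _ => rfl, fun _ h => absurd hleaf0 h⟩
    · intro a b hab
      have hab' := hab.ne
      by_cases ha : a = x
      · subst ha
        have := hy b hab
        subst this
        simp [hne.symm]
      · by_cases hb : b = x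
        · subst hb
          have := hy a hab.symm
          subst this
          simp [ha, Sym2.eq_swap]
        · dsimp only
          rw [if_neg ha, if_neg hb, add_zero, if_neg]
          intro h
          rcases Sym2.eq_iff.1 h with ⟨h, _⟩ | ⟨_, h⟩
          · exact ha h
          · exact hb h
    · intro w; dsimp only; split_ifs <;> simp
  · -- a bridge
    have hbr : G.IsBridge e := by
      rw [SimpleGraph.isBridge_iff_forall_cycle_notMem he]
      intro w p hp hmem
      exact hec ((huniq w p hp e).1 hmem)
    have hex : ∃ t s, e = s(t, s) ∧ ¬ (G.deleteEdges {e}).Reachable t v := by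
      obtain ⟨x, y⟩ := e
      have hb := SimpleGraph.isBridge_iff.1 hbr
      by_cases h : (G.deleteEdges {s(x, y)}).Reachable x v
      · exact ⟨y, x, Sym2.eq_swap, fun h' => hb (h.trans h'.symm)⟩
      · exact ⟨x, y, rfl, h⟩
    obtain ⟨t, s, rfl, htv⟩ := hex
    have hts : G.Adj t s := he
    have hnts : ¬ (G.deleteEdges {s(t, s)}).Reachable t s := SimpleGraph.isBridge_iff.1 hbr
    set H := G.deleteEdges {s(t, s)} with hH
    -- a cycle edge and its colouring
    have hne : c.edges ≠ [] := by
      have h3 := hc.three_le_length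
      intro h
      rw [← SimpleGraph.Walk.length_edges, h] at h3
      simp at h3
    obtain ⟨e0, he0⟩ := List.exists_mem_of_ne_nil _ hne
    obtain ⟨σ, hσ, hσe⟩ := sign_exists G v c huniq e0 he0
    have hreach : ∀ w ∈ c.support, H.Reachable v w := by
      intro w hw
      have hc' : ∀ e' ∈ c.edges, e' ∈ H.edgeSet := by
        intro e' he'
        rw [hH, SimpleGraph.edgeSet_deleteEdges]
        refine ⟨c.edges_subset_edgeSet he', ?_⟩
        rintro rfl
        exact hec he'
      have := (c.transfer H hc')
      exact ⟨(c.transfer H hc').takeUntil w (by simpa using hw)⟩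
    have hsq : σ t * σ t = 1 := by rcases hσ t with h | h <;> rw [h] <;> norm_num
    have hpm : ∀ w, σ t * σ w = 1 ∨ σ t * σ w = -1 := by
      intro w
      rcases hσ t with h | h <;> rcases hσ w with h' | h' <;> rw [h, h'] <;> norm_num
    have hE : ∀ a b, G.Adj a b → s(a, b) ≠ s(t, s) →
        (if H.Reachable t a then σ t * σ a else 0) + (if H.Reachable t b then σ t * σ b else 0)
          = 0 := by
      intro a b hab hn
      have hab' : H.Adj a b := by
        rw [hH, SimpleGraph.deleteEdges_adj]; exact ⟨hab, by simpa using hn⟩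
      by_cases ha : H.Reachable t a
      · have hb : H.Reachable t b := ha.trans hab'.reachable
        rw [if_pos ha, if_pos hb, ← mul_add, hσe a b hab, mul_zero]
        rintro rfl
        exact htv (ha.trans (hreach a (c.fst_mem_support_of_mem_edges he0)).symm)
      · have hb : ¬ H.Reachable t b := fun hb => ha (hb.trans hab'.symm.reachable)
        rw [if_neg ha, if_neg hb, add_zero]
    refine ⟨fun w => if H.Reachable t w then σ t * σ w else 0, 1, 1, by norm_num, ?_, ?_, ?_,
      fun h => absurd h hec, fun _ h => absurd h hleaf, fun _ _ => rfl⟩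
    · intro a b hab
      by_cases h : s(a, b) = s(t, s)
      · rw [if_pos h]
        rcases Sym2.eq_iff.1 h with ⟨rfl, rfl⟩ | ⟨rfl, rfl⟩
        · simp [hnts, hsq]
        · simp [hnts, hsq]
      · rw [if_neg h]
        exact hE a b hab h
    · intro w
      dsimp only
      split_ifs
      · rcases hpm w with h | h <;> rw [h]; norm_num
      · norm_num
    · have : ∃ w, G.Adj t w ∧ w ≠ s := by
        by_contra hcon
        push Not at hcon
        exact hleaf ⟨t, by simp, s, hts, hcon⟩
      obtain ⟨w, htw, hws⟩ := this
      refine ⟨w, ?_⟩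
      have := hE t w htw (by
        intro h
        rcases Sym2.eq_iff.1 h with ⟨_, h⟩ | ⟨h, _⟩
        · exact hws h
        · exact hts.ne h)
      rw [if_pos (SimpleGraph.Reachable.refl t), hsq] at this
      dsimp only
      linarith

/-- Integer edge vector. -/
noncomputable def bv {n : ℕ} (e : Sym2 (Fin n)) : Fin n → ℤ := fun x => (evec e x : ℤ)

theorem bv_mk {n : ℕ} (i j : Fin n) : bv s(i, j) = Pi.single i 1 + Pi.single j 1 := by
  ext x
  simp [bv, evec_mk, Finsupp.single_apply, Pi.single_apply, eq_comm]

theorem lattice {n : ℕ} (G : SimpleGraph (Fin n)) (hconn : G.Connected) (v : Fin n)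
    (c : G.Walk v v) (k : ℕ) (hlen : c.length = 2 * k + 1) (z : Fin n → ℤ)
    (hz : Even (∑ x, z x)) :
    z ∈ Submodule.span ℤ (Set.range fun e : G.edgeSet => bv e.1) := by
  classical
  set L := Submodule.span ℤ (Set.range fun e : G.edgeSet => bv e.1)
  have hadj : ∀ x y, G.Adj x y → (Pi.single x 1 + Pi.single y 1 : Fin n → ℤ) ∈ L := by
    intro x y hxy
    rw [← bv_mk]
    exact Submodule.subset_span ⟨⟨s(x, y), hxy⟩, rfl⟩
  have hwalk : ∀ {x y : Fin n} (p : G.Walk x y),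
      (Pi.single x 1 - (-1 : ℤ) ^ p.length • Pi.single y 1 : Fin n → ℤ) ∈ L := by
    intro x y p
    induction p with
    | nil => simp
    | @cons a b d h p ih =>
      have := L.sub_mem (hadj a b h) ih
      convert this using 1
      rw [SimpleGraph.Walk.length_cons, pow_succ]
      module
  have h2v : (2 : ℤ) • (Pi.single v 1 : Fin n → ℤ) ∈ L := by
    have := hwalk c
    rw [hlen, Odd.neg_one_pow ⟨k, rfl⟩] at this
    convert this using 1
    module
  have hx : ∀ x, (Pi.single x 1 - Pi.single v 1 : Fin n → ℤ) ∈ L := by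
    intro x
    obtain ⟨p⟩ := hconn.preconnected x v
    have := hwalk p
    rcases neg_one_pow_eq_or ℤ p.length with h | h
    · rw [h, one_smul] at this; exact this
    · rw [h] at this
      have := L.sub_mem this h2v
      convert this using 1
      module
  have hdec : z = ∑ x, z x • (Pi.single x 1 - Pi.single v 1 : Fin n → ℤ)
      + (∑ x, z x) • (Pi.single v 1 : Fin n → ℤ) := by
    rw [Finset.sum_smul, ← Finset.sum_add_distrib]
    ext y
    simp [Finset.sum_apply, Pi.single_apply, mul_sub]
  rw [hdec]
  refine L.add_mem (L.sum_mem fun x _ => L.smul_mem _ (hx x)) ?_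
  obtain ⟨r, hr⟩ := hz
  rw [hr, ← two_mul, mul_comm, mul_smul]
  exact L.smul_mem _ h2v

theorem ES_of_dual {n : ℕ} (G : SimpleGraph (Fin n)) (hconn : G.Connected) (v : Fin n)
    (c : G.Walk v v) (k : ℕ) (hlen : c.length = 2 * k + 1) (z : Fin n → ℤ)
    (hz : Even (∑ x, z x))
    (hd : ∀ e ∈ G.edgeSet, ∃ (φ : Fin n → ℤ) (t : ℤ), 0 < t ∧
      (∀ x y, G.Adj x y → φ x + φ y = if s(x, y) = e then t else 0) ∧ 0 ≤ ∑ x, φ x * z x) :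
    ∃ N w, ES G N w ∧ ∀ x, (w x : ℤ) = z x := by
  classical
  have hL := lattice G hconn v c k hlen z hz
  rw [Submodule.mem_span_range_iff_exists_fun] at hL
  obtain ⟨f, hf⟩ := hL
  have hf0 : ∀ e, 0 ≤ f e := by
    intro e
    obtain ⟨φ, t, ht, hφ, h0⟩ := hd e.1 e.2
    have h1 : ∑ x, φ x * z x = ∑ e' : G.edgeSet, f e' * dot φ (evec e'.1) := by
      rw [← hf]
      simp only [Finset.sum_apply, Pi.smul_apply, smul_eq_mul, Finset.mul_sum, dot_apply, bv]
      rw [Finset.sum_comm]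
      refine Finset.sum_congr rfl fun _ _ => Finset.sum_congr rfl fun _ _ => by ring
    have h2 : ∀ e' : G.edgeSet, dot φ (evec e'.1) = if e' = e then t else 0 := by
      rintro ⟨⟨a, b⟩, hab⟩
      refine (dot_evec φ a b).trans ((hφ a b hab).trans ?_)
      congr 1
      simp only [Subtype.ext_iff]
    simp only [h2, mul_ite, mul_zero, Finset.sum_ite_eq', Finset.mem_univ, if_true] at h1
    rw [h1] at h0
    exact nonneg_of_mul_nonneg_left h0 ht
  refine ⟨∑ e : G.edgeSet, (f e).toNat * 1, ∑ e : G.edgeSet, (f e).toNat • evec e.1, ?_, ?_⟩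
  · apply ES.sum
    rintro ⟨⟨a, b⟩, hab⟩ -
    exact (ES.single hab).nsmul _
  · intro x
    rw [← hf, Finsupp.finsetSum_apply, Finset.sum_apply]
    push_cast
    refine Finset.sum_congr rfl fun e _ => ?_
    simp [bv, max_eq_left (hf0 e)]

theorem dot_u {n : ℕ} (G : SimpleGraph (Fin n))
    (v : Fin n) (c : G.Walk v v) (hc : c.IsCycle)
    (F : Finset (Sym2 (Fin n)))
    (hF : ∀ e, e ∈ F ↔ e ∈ G.edgeSet ∧ e ∉ c.edges ∧ ¬ IsLeafEdge G e)
    (e : Sym2 (Fin n)) (he : e ∈ G.edgeSet) (φ : Fin n → ℤ) (t δ : ℤ)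
    (hφ : ∀ x y, G.Adj x y → φ x + φ y = if s(x, y) = e then t else 0)
    (h1 : e ∈ c.edges → 2 * δ = t) (h2 : e ∉ c.edges → IsLeafEdge G e → δ = 0)
    (h3 : e ∉ c.edges → ¬ IsLeafEdge G e → δ = t) :
    dot φ (lvec c.support.tail + ∑ e ∈ F, evec e) = δ := by
  have hev : ∀ e' ∈ G.edgeSet, dot φ (evec e') = if e' = e then t else 0 := by
    rintro ⟨a, b⟩ hab
    exact (dot_evec φ a b).trans (hφ a b hab)
  have hw := walk_sum φ c
  have hm : (c.edges.map fun e => dot φ (evec e))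
      = c.edges.map fun e' => if e' = e then t else 0 :=
    List.map_congr_left fun e' he' => hev e' (c.edges_subset_edgeSet he')
  rw [hm, sum_ite_nodup _ hc.isCircuit.isTrail.edges_nodup] at hw
  have hs : ∑ e' ∈ F, dot φ (evec e') = if e ∈ F then t else 0 := by
    rw [Finset.sum_congr rfl fun e' he' => hev e' ((hF e').1 he').1]
    simp
  rw [map_add, map_sum, hs]
  by_cases hec : e ∈ c.edges
  · have : e ∉ F := fun h => ((hF e).1 h).2.1 hec
    rw [if_neg this]
    rw [if_pos hec] at hw
    have := h1 hec
    linarith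
  · rw [if_neg hec] at hw
    by_cases hl : IsLeafEdge G e
    · have : e ∉ F := fun h => ((hF e).1 h).2.2 hl
      rw [if_neg this]
      have := h2 hec hl
      linarith
    · rw [if_pos ((hF e).2 ⟨he, hec, hl⟩)]
      have := h3 hec hl
      linarith

theorem deg_evec {n : ℕ} (e : Sym2 (Fin n)) : dot (fun _ => 1) (evec e) = 2 := by
  obtain ⟨a, b⟩ := e
  exact dot_evec _ a b

theorem deg_lvec {n : ℕ} (l : List (Fin n)) : dot (fun _ => 1) (lvec l) = l.length := by
  induction l with
  | nil => simp [lvec]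
  | cons a l ih =>
    have : lvec (a :: l) = Finsupp.single a 1 + lvec l := by simp [lvec]
    rw [this, map_add, dot_single, List.length_cons, ih]
    push_cast
    ring

theorem ES_degZ {n : ℕ} {G : SimpleGraph (Fin n)} {N : ℕ} {z : Fin n →₀ ℕ}
    (hz : ES G N z) : dot (fun _ => 1) z = 2 * N := by
  have := hz.degree
  rw [dot_apply]
  simp only [one_mul]
  exact_mod_cast this

theorem comb {n : ℕ} (G : SimpleGraph (Fin n)) (hconn : G.Connected)
    (k : ℕ) (v : Fin n) (c : G.Walk v v) (hc : c.IsCycle) (hlen : c.length = 2 * k + 1)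
    (huniq : ∀ (w : Fin n) (p : G.Walk w w), p.IsCycle → ∀ e, e ∈ p.edges ↔ e ∈ c.edges)
    (F : Finset (Sym2 (Fin n)))
    (hF : ∀ e, e ∈ F ↔ e ∈ G.edgeSet ∧ e ∉ c.edges ∧ ¬ IsLeafEdge G e)
    (u : Fin n →₀ ℕ) (hu : u = lvec c.support.tail + ∑ e ∈ F, evec e)
    (d : ℕ) (hd : d = F.card + k + 1) (m : ℕ) (a : Fin n →₀ ℕ) :
    (∀ w, ∃ z, ES G m z ∧ z ≤ a + Finsupp.single w 1) ↔
      (∃ z, ES G m z ∧ z ≤ a) ∨ (d ≤ m ∧ ∃ z, ES G (m - d) z ∧ u + z ≤ a) := by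
  have hdegu : dot (fun _ => 1) u = 2 * d - 1 := by
    rw [hu, map_add, map_sum, deg_lvec, Finset.sum_congr rfl fun e _ => deg_evec e]
    simp [hlen, hd]
    ring
  -- every `u + e_w` is a sum of `d` edges
  have hrev : ∀ w, ES G d (u + Finsupp.single w 1) := by
    intro w
    have hdeg : dot (fun _ => 1) (u + Finsupp.single w 1) = 2 * d := by
      rw [map_add, dot_single, hdegu]; ring
    obtain ⟨N, z, hz, hzz⟩ := ES_of_dual G hconn v c k hlen
      (fun x => (((u + Finsupp.single w 1 : Fin n →₀ ℕ) x : ℕ) : ℤ)) (by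
        rw [dot_apply] at hdeg
        simp only [one_mul] at hdeg
        exact ⟨d, by rw [hdeg]; ring⟩) (by
        intro e he
        obtain ⟨φ, t, δ, ht, hφ, hlow, -, h1, h2, h3⟩ := dual_exists G k v c hc hlen huniq e he
        refine ⟨φ, t, ht, hφ, ?_⟩
        have h4 := dot_u G v c hc F hF e he φ t δ hφ h1 h2 h3
        rw [← hu] at h4
        change 0 ≤ dot φ (u + Finsupp.single w 1)
        rw [map_add, h4, dot_single]
        linarith [hlow w])
    have hzu : z = u + Finsupp.single w 1 := by
      ext x
      exact_mod_cast hzz x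
    subst hzu
    have := ES_degZ hz
    rw [hdeg] at this
    have : d = N := by omega
    rw [this]
    exact hz
  constructor
  · intro hcrit
    by_cases hn : ∃ z, ES G m z ∧ z ≤ a
    · exact Or.inl hn
    right
    have hne : c.edges ≠ [] := by
      have h3 := hc.three_le_length
      intro h
      rw [← SimpleGraph.Walk.length_edges, h] at h3
      simp at h3
    obtain ⟨⟨x0, y0⟩, he0⟩ := List.exists_mem_of_ne_nil _ hne
    obtain ⟨σ, hσ, hσe⟩ := sign_exists G v c huniq s(x0, y0) he0
    have hcard := critical_card G x0 y0 (c.edges_subset_edgeSet he0) (fun x => σ x = 1) (by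
      intro x y hxy hxy0
      have := hσe x y hxy hxy0
      rcases hσ x with h | h <;> rcases hσ y with h' | h' <;> omega) a m
      hcrit hn
    -- exactness
    have hex : ∀ w, ES G m (a + Finsupp.single w 1) := by
      intro w
      obtain ⟨z, hz, hle⟩ := hcrit w
      have hzd := hz.degree
      have hsum : ∑ x, (a + Finsupp.single w 1 : Fin n →₀ ℕ) x = ∑ x, a x + 1 := by
        simp [Finset.sum_add_distrib, Finsupp.single_apply]
      have heq : z = a + Finsupp.single w 1 := by
        by_contra hne
        have : ∃ x, z x ≠ (a + Finsupp.single w 1 : Fin n →₀ ℕ) x := by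
          by_contra hcon
          push Not at hcon
          exact hne (Finsupp.ext hcon)
        obtain ⟨x, hx⟩ := this
        have hlt : ∑ x, z x < ∑ x, (a + Finsupp.single w 1 : Fin n →₀ ℕ) x :=
          Finset.sum_lt_sum (fun i _ => hle i) ⟨x, Finset.mem_univ _, lt_of_le_of_ne (hle x) hx⟩
        omega
      rw [← heq]
      exact hz
    have hdega : dot (fun _ => 1) a = 2 * m - 1 := by
      have := ES_degZ (hex v)
      rw [map_add, dot_single] at this
      linarith
    have hdot : ∀ φ : Fin n → ℤ, ∑ x, φ x * ((a x : ℤ) - u x) = dot φ a - dot φ u := by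
      intro φ
      simp only [dot_apply, mul_sub, Finset.sum_sub_distrib]
    have hsum1 : ∑ x, ((a x : ℤ) - u x) = 2 * m - 2 * d := by
      have := hdot (fun _ => 1)
      simp only [one_mul] at this
      rw [this, hdega, hdegu]; ring
    obtain ⟨N, z, hz, hzz⟩ := ES_of_dual G hconn v c k hlen
      (fun x => (a x : ℤ) - u x) (by
        rw [hsum1]
        exact ⟨m - d, by ring⟩) (by
        intro e he
        obtain ⟨φ, t, δ, ht, hφ, -, ⟨w, hw⟩, h1, h2, h3⟩ := dual_exists G k v c hc hlen huniq e he
        refine ⟨φ, t, ht, hφ, ?_⟩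
        have h4 := dot_u G v c hc F hF e he φ t δ hφ h1 h2 h3
        rw [← hu] at h4
        have h5 := (hex w).weight φ 0 (by
          intro i j hij
          rw [hφ i j hij]
          split_ifs <;> omega)
        rw [← dot_apply, map_add, dot_single, hw] at h5
        rw [hdot, h4]
        linarith)
    have hau : a = u + z := by
      ext x
      have := hzz x
      rw [Finsupp.add_apply]
      omega
    have hN := ES_degZ hz
    rw [hau, map_add, hdegu, hN] at hdega
    have h6 : m = d + N := by omega
    refine ⟨by omega, z, ?_, le_of_eq hau.symm⟩
    have : m - d = N := by omega
    rw [this]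
    exact hz
  · rintro (⟨z, hz, hle⟩ | ⟨hdm, z, hz, hle⟩) w
    · exact ⟨z, hz, hle.trans le_self_add⟩
    · refine ⟨u + Finsupp.single w 1 + z, ?_, ?_⟩
      · have := (hrev w).add hz
        rwa [Nat.add_sub_cancel' hdm] at this
      · rw [add_right_comm]
        exact add_le_add_left hle _

theorem pow_eq {n : ℕ} (K : Type*) [Field K] (G : SimpleGraph (Fin n))
    (I : Ideal (MvPolynomial (Fin n) K))
    (hI : I = Ideal.span {f | ∃ i j, G.Adj i j ∧ f = X i * X j}) (m : ℕ) :
    I ^ m = Ideal.span ((fun s => monomial s (1 : K)) '' {z | ES G m z}) := by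
  induction m with
  | zero =>
    rw [pow_zero, Ideal.one_eq_top, eq_comm, Ideal.eq_top_iff_one]
    exact Ideal.subset_span ⟨0, ES.zero, rfl⟩
  | succ m ih =>
    rw [pow_succ, ih, hI, Ideal.span_mul_span']
    congr 1
    ext f
    constructor
    · rintro ⟨_, ⟨z, hz, rfl⟩, _, ⟨i, j, hij, rfl⟩, rfl⟩
      refine ⟨_, ES.step hz hij, ?_⟩
      simp [X, monomial_mul]
    · rintro ⟨z, hz, rfl⟩
      change ES G (m + 1) z at hz
      cases hz with
      | @step _ w x y h hxy =>
        refine ⟨monomial w 1, ⟨w, h, rfl⟩, X x * X y, ⟨x, y, hxy, rfl⟩, ?_⟩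
        simp [X, monomial_mul]

theorem list_mon {n : ℕ} (K : Type*) [Field K] (l : List (Fin n)) :
    (l.map X).prod = monomial (lvec l) (1 : K) := by
  induction l with
  | nil => simp [lvec]
  | cons a l ih =>
    have : lvec (a :: l) = Finsupp.single a 1 + lvec l := by simp [lvec]
    rw [List.map_cons, List.prod_cons, ih, this, X, monomial_mul, one_mul]

theorem edge_mon {n : ℕ} (K : Type*) [Field K] (e : Sym2 (Fin n)) :
    edgeMon K e = monomial (evec e) (1 : K) := by
  obtain ⟨a, b⟩ := e
  change X a * X b = monomial (Finsupp.single a 1 + Finsupp.single b 1) (1 : K)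
  rw [X, X, monomial_mul, one_mul]

theorem prod_mon {n : ℕ} (K : Type*) [Field K] (F : Finset (Sym2 (Fin n))) :
    ∏ e ∈ F, edgeMon K e = monomial (∑ e ∈ F, evec e) (1 : K) := by
  classical
  induction F using Finset.induction_on with
  | empty => simp
  | insert a F ha ih =>
    rw [Finset.prod_insert ha, Finset.sum_insert ha, ih, edge_mon, monomial_mul, one_mul]

theorem mem_colon_iff {n : ℕ} (K : Type*) [Field K] (s : Set (Fin n →₀ ℕ))
    (f : MvPolynomial (Fin n) K) :
    f ∈ (Ideal.span ((fun s => monomial s (1 : K)) '' s)).colon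
        (Ideal.span (Set.range X : Set (MvPolynomial (Fin n) K))) ↔
      ∀ a ∈ f.support, ∀ w, ∃ z ∈ s, z ≤ a + Finsupp.single w 1 := by
  rw [Ideal.colon_span, Submodule.mem_colon]
  simp only [Set.forall_mem_range, smul_eq_mul, mem_ideal_span_monomial_image, support_mul_X,
    Finset.mem_map, addRightEmbedding_apply]
  constructor
  · intro h a ha w
    exact h w _ ⟨a, ha, rfl⟩
  · rintro h w _ ⟨a, ha, rfl⟩
    exact h a ha w

/-- For a connected unicyclic nonbipartite graph `G` with unique odd cycle of
length `2k+1`, the socle module of the edge ideal `I = I(G)` is free of rank one over the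
fiber cone, generated by `u_G` in degree `d_G - 1`; ideal-theoretically:
`(Iᵐ : 𝔪) = Iᵐ` for `m < d_G` and `(Iᵐ : 𝔪) = Iᵐ + u_G·I^{m-d_G}` for `m ≥ d_G`. -/
theorem socle_of_unicyclic_nonbipartite
    {K : Type*} [Field K] {n : ℕ} (G : SimpleGraph (Fin n))
    (hconn : G.Connected)
    (k : ℕ) (v : Fin n) (c : G.Walk v v) (hc : c.IsCycle) (hlen : c.length = 2 * k + 1)
    -- `c` is the unique cycle of `G`
    (huniq : ∀ (w : Fin n) (p : G.Walk w w), p.IsCycle → ∀ e, e ∈ p.edges ↔ e ∈ c.edges)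
    (I : Ideal (MvPolynomial (Fin n) K))
    (hI : I = Ideal.span {f | ∃ i j, G.Adj i j ∧ f = X i * X j})
    (mI : Ideal (MvPolynomial (Fin n) K)) (hmI : mI = Ideal.span (Set.range X))
    -- `E*(G)`: edges not on the cycle and not leaves
    (Estar : Set (Sym2 (Fin n)))
    (hEstar : Estar = {e | e ∈ G.edgeSet ∧ e ∉ c.edges ∧ ¬ IsLeafEdge G e})
    (dG : ℕ) (hdG : dG = Estar.ncard + k + 1)
    (uG : MvPolynomial (Fin n) K)
    (huG : uG = (c.support.tail.map X).prod * ∏ᶠ e ∈ Estar, edgeMon K e) :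
    ∀ m : ℕ, 1 ≤ m →
      (m < dG → (I ^ m).colon mI = I ^ m) ∧
      (dG ≤ m → (I ^ m).colon mI = I ^ m ⊔ Ideal.span {uG} * I ^ (m - dG)) := by
  classical
  have hfin : Estar.Finite := Set.toFinite _
  have hF : ∀ e, e ∈ hfin.toFinset ↔ e ∈ G.edgeSet ∧ e ∉ c.edges ∧ ¬ IsLeafEdge G e := by
    intro e
    rw [Set.Finite.mem_toFinset, hEstar]
    rfl
  rw [Set.ncard_eq_toFinset_card Estar hfin] at hdG
  rw [finprod_mem_eq_finite_toFinset_prod _ hfin, list_mon, prod_mon, monomial_mul, one_mul] at huG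
  intro m _
  have hcomb := comb G hconn k v c hc hlen huniq hfin.toFinset hF _ rfl dG hdG m
  set u := lvec c.support.tail + ∑ e ∈ hfin.toFinset, evec e with hu
  constructor
  · intro hm
    ext f
    rw [hmI, pow_eq K G I hI m, mem_colon_iff, mem_ideal_span_monomial_image]
    refine forall₂_congr fun a _ => (hcomb a).trans ?_
    constructor
    · rintro (h | ⟨h, -⟩)
      · exact h
      · omega
    · exact Or.inl
  · intro hm
    have hmul : Ideal.span {uG} * I ^ (m - dG)
        = Ideal.span ((fun s => monomial s (1 : K)) '' {a | ∃ z, ES G (m - dG) z ∧ u + z = a}) := by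
      rw [pow_eq K G I hI, Ideal.span_mul_span']
      congr 1
      ext f
      constructor
      · rintro ⟨_, rfl, _, ⟨z, hz, rfl⟩, rfl⟩
        exact ⟨u + z, ⟨z, hz, rfl⟩, by simp [huG, monomial_mul]⟩
      · rintro ⟨_, ⟨z, hz, rfl⟩, rfl⟩
        exact ⟨uG, rfl, monomial z 1, ⟨z, hz, rfl⟩, by simp [huG, monomial_mul]⟩
    rw [hmul, hmI, pow_eq K G I hI m, ← Ideal.span_union, ← Set.image_union]
    ext f
    rw [mem_colon_iff, mem_ideal_span_monomial_image]
    refine forall₂_congr fun a _ => (hcomb a).trans ?_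
    constructor
    · rintro (⟨z, hz, hle⟩ | ⟨-, z, hz, hle⟩)
      · exact ⟨z, Or.inl hz, hle⟩
      · exact ⟨u + z, Or.inr ⟨z, hz, rfl⟩, hle⟩
    · rintro ⟨z, hz | ⟨z, hz, rfl⟩, hle⟩
      · exact Or.inl ⟨z, hz, hle⟩
      · exact Or.inr ⟨hm, z, hz, hle⟩
end

section
/- Let G be a simple connected graph such that dist(V(C₁), V(C₂)) ≤ 1 for any two odd cycles C₁, C₂ of G, and let I = I(G). Then for every integer m ≥ 1 and every monomial u with u ∈ (Iᵐ : 𝔪) \ Iᵐ, one has deg(u) = 2m − 1, and u can be written as u = x₁x₂⋯x_{2k+1}·e₁⋯e_{m−k−1}, where x₁ − x₂ − ⋯ − x_{2k+1} − x₁ is an odd cycle of G and each e_i is an edge of G (identified with its degree-2 monomial). -/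
open MvPolynomial

namespace SocleAux

/-- The multiset of end points of a multiset of edges. -/
def vs {V : Type*} (E : Multiset (Sym2 V)) : Multiset V := (E.map Sym2.toMultiset).sum

section
variable {V : Type*}

@[simp] lemma toM (a b : V) : (s(a, b)).toMultiset = a ::ₘ {b} := rfl
@[simp] lemma vs_zero : vs (0 : Multiset (Sym2 V)) = 0 := rfl
@[simp] lemma vs_cons (e : Sym2 V) (E : Multiset (Sym2 V)) :
    vs (e ::ₘ E) = e.toMultiset + vs E := by simp [vs]
@[simp] lemma vs_add (E F : Multiset (Sym2 V)) : vs (E + F) = vs E + vs F := by simp [vs]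
@[simp] lemma vs_singleton (e : Sym2 V) : vs {e} = e.toMultiset := by simp [vs]
@[simp] lemma card_vs (E : Multiset (Sym2 V)) : (vs E).card = 2 * E.card := by
  induction E using Multiset.induction_on with
  | empty => simp
  | cons e E ih => simp [ih, Sym2.card_toMultiset]; ring

lemma mem_vs {E : Multiset (Sym2 V)} {a : V} (h : a ∈ vs E) : ∃ b, s(a, b) ∈ E := by
  induction E using Multiset.induction_on with
  | empty => simp at h
  | cons e E ih =>
    rw [vs_cons, Multiset.mem_add] at h
    rcases h with h | h
    · rw [Sym2.mem_toMultiset] at h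
      obtain ⟨b, rfl⟩ := h
      exact ⟨b, by simp⟩
    · obtain ⟨b, hb⟩ := ih h
      exact ⟨b, Multiset.mem_cons_of_mem hb⟩

variable (G : SimpleGraph V)

/-- All members are edges of the graph. -/
def AllE (E : Multiset (Sym2 V)) : Prop := ∀ e ∈ E, e ∈ G.edgeSet

/-- `s` is divisible by a product of `m` edges. -/
def InPow (m : ℕ) (s : Multiset V) : Prop := ∃ E, AllE G E ∧ E.card = m ∧ vs E ≤ s

/-- alternating chains -/
def Chain : V → List (V × V) → V → Prop
  | p, [], q => G.Adj p q
  | p, (ab :: N), q => G.Adj p ab.1 ∧ Chain ab.2 N q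

/-- the edges of a list of pairs -/
def ed (N : List (V × V)) : Multiset (Sym2 V) := (N.map (fun ab => s(ab.1, ab.2)) : List _)

@[simp] lemma ed_nil : ed ([] : List (V × V)) = 0 := rfl
@[simp] lemma ed_cons (ab : V × V) (N : List (V × V)) : ed (ab :: N) = s(ab.1, ab.2) ::ₘ ed N := rfl
@[simp] lemma ed_append (A B : List (V × V)) : ed (A ++ B) = ed A + ed B := by simp [ed]

/-- reversal -/
def rv (N : List (V × V)) : List (V × V) := (N.map Prod.swap).reverse

@[simp] lemma ed_rv (N : List (V × V)) : ed (rv N) = ed N := by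
  induction N with
  | nil => rfl
  | cons ab N ih =>
    have : rv (ab :: N) = rv N ++ [ab.swap] := by simp [rv]
    rw [this, ed_append, ih, add_comm, ed_cons]
    simp [Sym2.eq_swap]

variable {G}

lemma AllE.add {E F : Multiset (Sym2 V)} (h : AllE G E) (h' : AllE G F) : AllE G (E + F) := by
  intro e he
  rcases Multiset.mem_add.1 he with he | he
  exacts [h e he, h' e he]

lemma AllE.cons {E : Multiset (Sym2 V)} {a b : V} (hab : G.Adj a b) (h : AllE G E) :
    AllE G (s(a, b) ::ₘ E) := by
  intro e he
  rcases Multiset.mem_cons.1 he with rfl | he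
  exacts [hab, h e he]

lemma AllE.mono {E F : Multiset (Sym2 V)} (h : AllE G E) (h' : F ≤ E) : AllE G F :=
  fun e he => h e (Multiset.mem_of_le h' he)

lemma AllE.zero : AllE G 0 := by intro e he; simp at he

lemma chain_split {p q : V} {A B : List (V × V)} {ab : V × V} :
    Chain G p (A ++ ab :: B) q ↔ Chain G p A ab.1 ∧ Chain G ab.2 B q := by
  induction A generalizing p with
  | nil => simp [Chain]
  | cons cd A ih => simp [Chain, ih, and_assoc]

lemma chain_rv {p q : V} {N : List (V × V)} (h : Chain G p N q) : Chain G q (rv N) p := by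
  induction N generalizing p with
  | nil => exact SimpleGraph.Adj.symm h
  | cons ab N ih =>
    have : rv (ab :: N) = rv N ++ ab.swap :: [] := by simp [rv]
    rw [this, chain_split]
    exact ⟨ih h.2, SimpleGraph.Adj.symm h.1⟩

lemma chain_aug {p q : V} {N : List (V × V)} (h : Chain G p N q) :
    ∃ E, AllE G E ∧ E.card = (ed N).card + 1 ∧ vs E = p ::ₘ q ::ₘ vs (ed N) := by
  induction N generalizing p with
  | nil => exact ⟨{s(p, q)}, by simpa [AllE] using (show G.Adj p q from h), by simp, by simp⟩
  | cons ab N ih =>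
    obtain ⟨E, h1, h2, h3⟩ := ih h.2
    refine ⟨s(p, ab.1) ::ₘ E, AllE.cons h.1 h1, by simp [h2], ?_⟩
    simp only [vs_cons, h3, toM, ed_cons]
    simp only [← Multiset.singleton_add]
    abel

lemma chain_walk {p q : V} {N : List (V × V)} (h : Chain G p N q) (hN : AllE G (ed N)) :
    ∃ w : G.Walk p q, w.length = 2 * N.length + 1 ∧
      (w.support.tail : Multiset V) = q ::ₘ vs (ed N) := by
  induction N generalizing p with
  | nil => exact ⟨.cons (show G.Adj p q from h) .nil, rfl, rfl⟩
  | cons ab N ih =>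
    obtain ⟨w, h1, h2⟩ := ih h.2 (hN.mono (Multiset.le_cons_self _ _))
    have hab : G.Adj ab.1 ab.2 := hN s(ab.1, ab.2) (by simp)
    refine ⟨.cons h.1 (.cons hab w), by simp [h1]; ring, ?_⟩
    have : ((SimpleGraph.Walk.cons h.1 (.cons hab w)).support.tail : Multiset V)
        = ab.1 ::ₘ ab.2 ::ₘ (w.support.tail : Multiset V) := by
      rw [SimpleGraph.Walk.support_cons, List.tail_cons, SimpleGraph.Walk.support_cons,
        ← SimpleGraph.Walk.cons_tail_support w]
      rfl
    rw [this, h2]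
    simp only [vs_cons, toM, ed_cons]
    simp only [← Multiset.singleton_add]
    abel

lemma chain_switch {y z : V} {N : List (V × V)} (h : Chain G y N y) {c d : V}
    (hz : G.Adj z c) (hm : s(c, d) ∈ ed N) : ∃ B, Chain G z B y ∧ ed B ≤ ed N := by
  obtain ⟨ab, hab, he⟩ : ∃ ab ∈ N, s(ab.1, ab.2) = s(c, d) := by simpa [ed] using hm
  obtain ⟨A, B, rfl⟩ := List.append_of_mem hab
  rw [chain_split] at h
  obtain ⟨a, b⟩ := ab
  rw [Sym2.eq_iff] at he
  rcases he with ⟨rfl, rfl⟩ | ⟨rfl, rfl⟩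
  · exact ⟨(a, b) :: B, ⟨hz, h.2⟩, by simp⟩
  · refine ⟨(b, a) :: rv A, ⟨hz, chain_rv h.1⟩, ?_⟩
    simp only [ed_cons, ed_rv, ed_append, Sym2.eq_swap (a := b)]
    rw [Multiset.add_cons]
    exact Multiset.cons_le_cons _ (by simp)

lemma splice {x y z : V} {N N' : List (V × V)} (h : Chain G y N y) (h' : Chain G z N' x)
    (hnd : ¬ Disjoint (ed N') (ed N)) :
    ∃ A B, Chain G z (A ++ B) y ∧ ed A ≤ ed N' ∧ ed B ≤ ed N ∧ Disjoint (ed A) (ed N) := by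
  induction N' generalizing z with
  | nil => simp at hnd
  | cons cd N' ih =>
    by_cases hm : s(cd.1, cd.2) ∈ ed N
    · obtain ⟨B, hB, hB'⟩ := chain_switch h h'.1 hm
      exact ⟨[], B, hB, by simp, hB', by simp⟩
    · obtain ⟨A, B, h1, h2, h3, h4⟩ := ih h'.2 (by
        intro hd; apply hnd
        simp [Multiset.disjoint_cons_left, hm, hd])
      refine ⟨cd :: A, B, ⟨h'.1, h1⟩, ?_, h3, ?_⟩
      · simpa using h2
      · simp [Multiset.disjoint_cons_left, hm, h4]

lemma add_le_of_disj {α : Type*} {A B M : Multiset α} (hA : A ≤ M) (hB : B ≤ M)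
    (hd : Disjoint A B) : A + B ≤ M := by
  classical
  rw [Multiset.add_eq_union_iff_disjoint.2 hd]
  exact Multiset.union_le hA hB

lemma even_conn {M M' : Multiset (Sym2 V)} {w w' : Multiset V} (hM' : AllE G M')
    (hc : M'.card = M.card + 1) (he : vs M + w = vs M' + w') :
    ∃ p q N, p ::ₘ {q} ≤ w ∧ Chain G p N q ∧ ed N ≤ M := by
  classical
  induction hk : M.card using Nat.strong_induction_on generalizing M M' w with
  | _ k ih =>
  have hex : ∃ p ∈ vs M', p ∈ w := by
    by_contra! hcon
    have : vs M' ≤ vs M := by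
      rw [Multiset.le_iff_count]
      intro v
      by_cases hv : v ∈ vs M'
      · have h1 := congrArg (Multiset.count v) he
        have h2 := Multiset.count_eq_zero.2 (hcon v hv)
        simp only [Multiset.count_add] at h1
        omega
      · rw [Multiset.count_eq_zero.2 hv]; simp
    have := Multiset.card_le_card this
    simp at this; omega
  obtain ⟨p, hp, hpw⟩ := hex
  obtain ⟨a, hpa⟩ := mem_vs hp
  have hadj : G.Adj p a := hM' _ hpa
  obtain ⟨M'', rfl⟩ := Multiset.exists_cons_of_mem hpa
  obtain ⟨w₁, rfl⟩ := Multiset.exists_cons_of_mem hpw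
  have he2 : vs M + w₁ = a ::ₘ (vs M'' + w') := by
    apply (Multiset.cons_inj_right p).1
    rw [← Multiset.add_cons, he]
    simp only [vs_cons, toM]
    simp only [← Multiset.singleton_add]
    abel
  have ha : a ∈ vs M + w₁ := by rw [he2]; simp
  rcases Multiset.mem_add.1 ha with ha | ha
  swap
  · exact ⟨p, a, [], by simpa using ha, hadj, by simp⟩
  obtain ⟨b, hb⟩ := mem_vs ha
  obtain ⟨M₁, rfl⟩ := Multiset.exists_cons_of_mem hb
  obtain ⟨p', q', N, h1, h2, h3⟩ := ih M₁.card (by simp [← hk]) (M := M₁) (M' := M'') (w := b ::ₘ w₁)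
    (hM'.mono (Multiset.le_cons_self _ _)) (by simpa using hc) (by
      apply (Multiset.cons_inj_right a).1
      rw [← he2]
      simp only [vs_cons, toM]
      simp only [← Multiset.singleton_add]
      abel) rfl
  have h3' : ed N ≤ s(a, b) ::ₘ M₁ := h3.trans (Multiset.le_cons_self _ _)
  by_cases hpb : p' = b
  · subst hpb
    refine ⟨p, q', (a, p') :: N, ?_, ⟨hadj, h2⟩, by simpa using h3⟩
    have : q' ∈ w₁ := by simpa using h1
    simpa using this
  by_cases hqb : q' = b
  · subst hqb
    refine ⟨p, p', (a, q') :: rv N, ?_, ⟨hadj, chain_rv h2⟩, by simpa using h3⟩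
    have h1' : q' ::ₘ {p'} ≤ q' ::ₘ w₁ := by
      refine le_trans (le_of_eq ?_) h1
      simp only [← Multiset.singleton_add]; abel
    have : p' ∈ w₁ := by simpa using h1'
    simpa using this
  · refine ⟨p', q', N, ?_, h2, h3'⟩
    have : p' ::ₘ {q'} ≤ w₁ := by
      rwa [Multiset.le_cons_of_notMem] at h1
      simp [Ne.symm hpb, Ne.symm hqb]
    exact this.trans (Multiset.le_cons_self _ _)

open SimpleGraph

/-- tail of the support of a walk, as a multiset -/
def tl {u v : V} (p : G.Walk u v) : Multiset V := (p.support.tail : Multiset V)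

@[simp] lemma tl_nil {u : V} : tl (Walk.nil : G.Walk u u) = 0 := rfl
@[simp] lemma tl_cons {u v w : V} (h : G.Adj u v) (p : G.Walk v w) :
    tl (Walk.cons h p) = v ::ₘ tl p := by
  unfold tl
  rw [Walk.support_cons, List.tail_cons, ← Walk.cons_tail_support p]
  rfl
@[simp] lemma tl_append {u v w : V} (p : G.Walk u v) (q : G.Walk v w) :
    tl (p.append q) = tl p + tl q := by
  simp [tl, Walk.tail_support_append]
@[simp] lemma card_tl {u v : V} (p : G.Walk u v) : (tl p).card = p.length := by
  induction p with
  | nil => simp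
  | cons h p ih => simp [ih]

lemma tl_parity {u v : V} (p : G.Walk u v) :
    (Even p.length → ∃ E, AllE G E ∧ tl p = vs E) ∧
    (Odd p.length → ∃ E, AllE G E ∧ tl p = v ::ₘ vs E) := by
  induction hk : p.length using Nat.strong_induction_on generalizing u with
  | _ k ih =>
  match p, hk with
  | .nil, hk => exact ⟨fun _ => ⟨0, AllE.zero, by simp⟩, fun h => by simp [← hk] at h⟩
  | .cons h .nil, hk =>
    exact ⟨fun h => by simp [← hk] at h, fun _ => ⟨0, AllE.zero, by simp⟩⟩
  | .cons (v := a) h (.cons (v := b) h' q), hk =>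
    have hk' : q.length + 2 = k := by simpa using hk
    obtain ⟨i1, i2⟩ := ih q.length (by omega) q rfl
    constructor
    · intro he
      obtain ⟨E, hE, hE'⟩ := i1 (by rw [← hk'] at he; simpa [parity_simps] using he)
      exact ⟨_, AllE.cons h' hE, by simp [hE']⟩
    · intro he
      obtain ⟨E, hE, hE'⟩ := i2 (by rw [← hk'] at he; simpa [parity_simps] using he)
      refine ⟨_, AllE.cons h' hE, ?_⟩
      simp only [tl_cons, hE', vs_cons, toM]
      simp only [← Multiset.singleton_add]
      abel

lemma path_edge {u v : V} (q : G.Walk v u) (hq : q.IsPath) (h : s(u, v) ∈ q.edges) :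
    q.length = 1 := by
  cases q with
  | nil => simp at h
  | cons h' q =>
    rw [Walk.cons_isPath_iff] at hq
    rw [Walk.edges_cons, List.mem_cons] at h
    rcases h with h | h
    · rw [Sym2.eq_iff] at h
      rcases h with ⟨rfl, rfl⟩ | ⟨rfl, _⟩
      · exact absurd h' (G.loopless.irrefl _)
      · have := Walk.length_eq_zero_iff.2 (Walk.isPath_iff_nil.1 hq.1)
        simp [this]
    · exact absurd (Walk.snd_mem_support_of_mem_edges q h) hq.2

lemma decomp {u v : V} (p : G.Walk u v) :
    (∃ q : G.Walk u v, q.IsPath ∧ ∃ E, AllE G E ∧ tl p = tl q + vs E) ∨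
    (∃ (x : V) (c : G.Walk x x), c.IsCycle ∧ Odd c.length ∧ ∃ r : G.Walk u v,
      ∃ E, AllE G E ∧ tl p = tl c + tl r + vs E) := by
  classical
  induction p with
  | nil => exact Or.inl ⟨.nil, by simp, 0, AllE.zero, by simp⟩
  | @cons u v w h p ih =>
    rcases ih with ⟨q, hq, E, hE, he⟩ | ⟨x, c, hc, ho, r, E, hE, he⟩
    swap
    · refine Or.inr ⟨x, c, hc, ho, .cons h r, E, hE, ?_⟩
      simp [he]
    by_cases hu : u ∈ q.support
    swap
    · exact Or.inl ⟨.cons h q, by simp [Walk.cons_isPath_iff, hq, hu], E, hE, by simp [he]⟩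
    have hq1 := hq.takeUntil hu
    have hq2 := hq.dropUntil hu
    have hs : tl q = tl (q.takeUntil u hu) + tl (q.dropUntil u hu) := by
      rw [← tl_append, Walk.take_spec]
    have ht : tl (Walk.cons h p) = tl (Walk.cons h (q.takeUntil u hu)) +
        tl (q.dropUntil u hu) + vs E := by
      simp [he, hs]
    rcases Nat.even_or_odd (Walk.cons h (q.takeUntil u hu)).length with hev | hod
    · obtain ⟨E', hE', he'⟩ := (tl_parity _).1 hev
      refine Or.inl ⟨_, hq2, E' + E, hE'.add hE, ?_⟩
      rw [ht, he', vs_add]; abel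
    · refine Or.inr ⟨u, _, ?_, hod, _, E, hE, ht⟩
      rw [Walk.cons_isCycle_iff]
      refine ⟨hq1, fun hmem => ?_⟩
      have := path_edge _ hq1 hmem
      rw [Walk.length_cons, this] at hod
      exact absurd hod (by decide)

lemma decomp_closed {u : V} (p : G.Walk u u) (hp : Odd p.length) :
    ∃ (x : V) (c : G.Walk x x), c.IsCycle ∧ Odd c.length ∧ ∃ E, AllE G E ∧ tl p = tl c + vs E := by
  rcases decomp p with ⟨q, hq, E, hE, he⟩ | ⟨x, c, hc, ho, r, E, hE, he⟩
  · have hl := Walk.length_eq_zero_iff.2 (Walk.isPath_iff_nil.1 hq)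
    have := congrArg Multiset.card he
    simp [hl] at this
    rw [this] at hp
    exact absurd hp (by simp)
  · have := congrArg Multiset.card he
    simp at this
    have her : Even r.length := by
      rw [this] at hp
      simp only [Nat.odd_add, ho, true_iff, even_two, Even.mul_right, iff_true] at hp
      exact hp
    obtain ⟨E', hE', he'⟩ := (tl_parity r).1 her
    refine ⟨x, c, hc, ho, E' + E, hE'.add hE, ?_⟩
    rw [he, he', vs_add]; abel

lemma cycle_at {x y : V} (c : G.Walk x x) (ho : Odd c.length) (hy : y ∈ c.support) :
    ∃ E, AllE G E ∧ tl c = y ::ₘ vs E := by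
  classical
  obtain ⟨E, hE, he⟩ := (tl_parity (c.rotate y hy)).2 (by simpa using ho)
  refine ⟨E, hE, ?_⟩
  rw [← he]
  exact (Multiset.coe_eq_coe.2 (Walk.support_rotate c y hy).perm).symm

lemma cycle_nbr {x y : V} (c : G.Walk x x) (ho : Odd c.length) (hy : y ∈ c.support) :
    ∃ z ∈ c.support, G.Adj y z := by
  classical
  have hn : ¬ (c.rotate y hy).Nil := by
    rw [Walk.nil_rotate]
    intro h
    rw [← Walk.length_eq_zero_iff] at h
    simp [h] at ho
  refine ⟨(c.rotate y hy).snd, ?_, Walk.adj_snd hn⟩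
  rw [← Walk.mem_support_rotate_iff c y hy]
  exact Walk.getVert_mem_support _ _

lemma two_cycles (hconn : G.Connected)
    (hdist : ∀ (v₁ v₂ : V) (c₁ : G.Walk v₁ v₁) (c₂ : G.Walk v₂ v₂),
      c₁.IsCycle → c₂.IsCycle → Odd c₁.length → Odd c₂.length →
      ∃ x ∈ c₁.support, ∃ y ∈ c₂.support, G.dist x y ≤ 1)
    {u v : V} (p : G.Walk u u) (q : G.Walk v v) (hp : Odd p.length) (hq : Odd q.length) :
    ∃ E, AllE G E ∧ tl p + tl q = vs E := by
  obtain ⟨x, c, hc, hco, E, hE, he⟩ := decomp_closed p hp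
  obtain ⟨x', c', hc', hco', E', hE', he'⟩ := decomp_closed q hq
  obtain ⟨a, ha, b, hb, hab⟩ := hdist _ _ c c' hc hc' hco hco'
  obtain ⟨a, ha, b, hb, hab⟩ : ∃ a ∈ c.support, ∃ b ∈ c'.support, G.Adj a b := by
    rcases Nat.le_one_iff_eq_zero_or_eq_one.1 hab with h | h
    · rw [(hconn.preconnected a b).dist_eq_zero_iff] at h
      subst h
      obtain ⟨z, hz, haz⟩ := cycle_nbr c' hco' hb
      exact ⟨a, ha, z, hz, haz⟩
    · exact ⟨a, ha, b, hb, SimpleGraph.dist_eq_one_iff_adj.1 h⟩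
  obtain ⟨F, hF, hf⟩ := cycle_at c hco ha
  obtain ⟨F', hF', hf'⟩ := cycle_at c' hco' hb
  refine ⟨s(a, b) ::ₘ (F + F' + E + E'), AllE.cons hab (((hF.add hF').add hE).add hE'), ?_⟩
  rw [he, he', hf, hf']
  simp only [vs_cons, toM, vs_add]
  simp only [← Multiset.singleton_add]
  abel

lemma main_comb (hconn : G.Connected)
    (hdist : ∀ (v₁ v₂ : V) (c₁ : G.Walk v₁ v₁) (c₂ : G.Walk v₂ v₂),
      c₁.IsCycle → c₂.IsCycle → Odd c₁.length → Odd c₂.length →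
      ∃ x ∈ c₁.support, ∃ y ∈ c₂.support, G.dist x y ≤ 1)
    (m : ℕ) (hm : 1 ≤ m) (s : Multiset V) (h1 : ∀ x, InPow G m (x ::ₘ s)) (h2 : ¬ InPow G m s) :
    s.card = 2 * m - 1 ∧ ∃ (x : V) (c : G.Walk x x), c.IsCycle ∧ Odd c.length ∧
      ∃ E, AllE G E ∧ s = tl c + vs E := by
  classical
  -- a maximal matching
  obtain ⟨M, hM, hMc, hMs⟩ : InPow G (m - 1) s := by
    obtain ⟨x⟩ := hconn.nonempty
    obtain ⟨E, hE, hc, hle⟩ := h1 x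
    by_cases hx : x ∈ vs E
    · obtain ⟨b, hb⟩ := mem_vs hx
      obtain ⟨E', rfl⟩ := Multiset.exists_cons_of_mem hb
      refine ⟨E', hE.mono (Multiset.le_cons_self _ _), by simp at hc; omega, ?_⟩
      simp only [vs_cons, toM, Multiset.cons_add, Multiset.cons_le_cons_iff] at hle
      exact le_trans (Multiset.le_add_left _ _) hle
    · exact absurd ⟨E, hE, hc, (Multiset.le_cons_of_notMem hx).1 hle⟩ h2
  obtain ⟨w, rfl⟩ := Multiset.le_iff_exists_add.1 hMs
  have hwc : 1 ≤ w.card := by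
    obtain ⟨x⟩ := hconn.nonempty
    obtain ⟨E, hE, hc, hle⟩ := h1 x
    have := Multiset.card_le_card hle
    simp at this; omega
  -- no augmenting chain
  have haug : ∀ p q N, p ::ₘ {q} ≤ w → Chain G p N q → ed N ≤ M → False := by
    intro p q N hpq hch hN
    obtain ⟨E, hE, hEc, hEv⟩ := chain_aug hch
    obtain ⟨M₁, rfl⟩ := Multiset.le_iff_exists_add.1 hN
    apply h2
    refine ⟨E + M₁, hE.add (hM.mono (by simp)), ?_, ?_⟩
    · simp at hMc ⊢; omega
    · obtain ⟨w₁, rfl⟩ := Multiset.le_iff_exists_add.1 hpq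
      rw [vs_add, hEv, vs_add]
      rw [Multiset.le_iff_exists_add]
      refine ⟨w₁, ?_⟩
      simp only [← Multiset.singleton_add]
      abel
  -- each exposed vertex lies on an odd closed chain
  have hfl : ∀ y ∈ w, ∃ N, Chain G y N y ∧ ed N ≤ M := by
    intro y hy
    obtain ⟨E, hE, hc, hle⟩ := h1 y
    obtain ⟨w', hw'⟩ := Multiset.le_iff_exists_add.1 hle
    obtain ⟨p, q, N, hpq, hch, hN⟩ := even_conn (M := M) (w := y ::ₘ w) hE (by omega)
      (by rw [Multiset.add_cons]; exact hw')
    by_cases hpy : p = y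
    · subst hpy
      have hq : q ∈ w := by simpa using hpq
      by_cases hqp : q = p
      · subst hqp; exact ⟨N, hch, hN⟩
      · refine (haug p q N ?_ hch hN).elim
        rw [Multiset.cons_le_of_notMem (by simpa using Ne.symm hqp)]
        exact ⟨hy, by simpa using hq⟩
    by_cases hqy : q = y
    · subst hqy
      have hpq' : q ::ₘ {p} ≤ q ::ₘ w := by
        refine le_trans (le_of_eq ?_) hpq
        simp only [← Multiset.singleton_add]; abel
      have hp : p ∈ w := by simpa using hpq'
      refine (haug p q N ?_ hch hN).elim
      rw [Multiset.cons_le_of_notMem (by simpa using hpy)]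
      exact ⟨hp, by simpa using hy⟩
    · refine (haug p q N ?_ hch hN).elim
      rwa [Multiset.le_cons_of_notMem] at hpq
      simp [Ne.symm hpy, Ne.symm hqy]
  obtain ⟨y, hy⟩ := Multiset.card_pos_iff_exists_mem.1 (show 0 < w.card from hwc)
  obtain ⟨w₁, rfl⟩ := Multiset.exists_cons_of_mem hy
  obtain ⟨N, hN, hNM⟩ := hfl y hy
  obtain ⟨W, hWl, hWs⟩ := chain_walk hN (hM.mono hNM)
  change tl W = _ at hWs
  have hWo : Odd W.length := ⟨_, hWl⟩
  -- only one exposed vertex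
  have hw₁ : w₁ = 0 := by
    by_contra hne
    obtain ⟨z, hz⟩ := Multiset.exists_mem_of_ne_zero hne
    obtain ⟨w₂, rfl⟩ := Multiset.exists_cons_of_mem hz
    obtain ⟨N', hN', hNM'⟩ := hfl z (by simp)
    by_cases hd : Disjoint (ed N') (ed N)
    · obtain ⟨M₁, rfl⟩ := Multiset.le_iff_exists_add.1 (add_le_of_disj hNM' hNM hd)
      obtain ⟨W', hWl', hWs'⟩ := chain_walk hN' (hM.mono hNM')
      change tl W' = _ at hWs'
      obtain ⟨E, hE, he⟩ := two_cycles hconn hdist W W' hWo ⟨_, hWl'⟩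
      apply h2
      refine ⟨E + M₁, hE.add (hM.mono (by simp)), ?_, ?_⟩
      · have := congrArg Multiset.card he
        rw [hWs, hWs'] at this
        simp at this hMc ⊢; omega
      · rw [vs_add, ← he, hWs, hWs', Multiset.le_iff_exists_add]
        refine ⟨w₂, ?_⟩
        simp only [vs_add]
        simp only [← Multiset.singleton_add]
        abel
    · obtain ⟨A, B, k1, k2, k3, k4⟩ := splice hN hN' hd
      refine haug z y (A ++ B) ?_ k1 ?_
      · rw [Multiset.cons_swap]
        simp
      · rw [ed_append]
        exact (add_le_add_right k3 _).trans (add_le_of_disj (k2.trans hNM') hNM k4)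
  subst hw₁
  refine ⟨by simp; omega, ?_⟩
  obtain ⟨x, c, hc, hco, E, hE, he⟩ := decomp_closed W hWo
  obtain ⟨M₁, rfl⟩ := Multiset.le_iff_exists_add.1 hNM
  refine ⟨x, c, hc, hco, E + M₁, hE.add (hM.mono (by simp)), ?_⟩
  rw [vs_add E, ← add_assoc, ← he, hWs, vs_add]
  simp only [← Multiset.singleton_add]
  abel

end

/-! ### Ideals -/

section
variable {K : Type*} [Field K] {n : ℕ} {G : SimpleGraph (Fin n)}

lemma prod_X (s : Multiset (Fin n)) :
    (s.map (X : Fin n → MvPolynomial (Fin n) K)).prod = monomial (Multiset.toFinsupp s) 1 := by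
  induction s using Multiset.induction_on with
  | empty => simp
  | cons a s ih =>
    rw [Multiset.map_cons, Multiset.prod_cons, ih, ← Multiset.singleton_add, map_add,
      Multiset.toFinsupp_singleton, X, monomial_mul, one_mul]

lemma edgeMon_eq (e : Sym2 (Fin n)) :
    edgeMon K e = (e.toMultiset.map (X : Fin n → MvPolynomial (Fin n) K)).prod := by
  induction e with
  | _ a b => simp [edgeMon]

lemma prod_edgeMon (E : Multiset (Sym2 (Fin n))) :
    (E.map (edgeMon K)).prod = ((vs E).map (X : Fin n → MvPolynomial (Fin n) K)).prod := by
  induction E using Multiset.induction_on with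
  | empty => simp
  | cons e E ih => rw [vs_cons, Multiset.map_cons, Multiset.prod_cons, ih, Multiset.map_add,
      Multiset.prod_add, edgeMon_eq]

lemma pow_le (m : ℕ) :
    (Ideal.span {f : MvPolynomial (Fin n) K | ∃ i j, G.Adj i j ∧ f = X i * X j}) ^ m ≤
      Ideal.span (Set.image (fun d => monomial d (1 : K))
        {d | ∃ E, AllE G E ∧ E.card = m ∧ d = Multiset.toFinsupp (vs E)}) := by
  induction m with
  | zero =>
    rw [pow_zero, Ideal.one_eq_top, top_le_iff, Ideal.eq_top_iff_one]
    exact Ideal.subset_span ⟨0, ⟨0, AllE.zero, rfl, by simp⟩, rfl⟩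
  | succ m ih =>
    rw [pow_succ]
    refine (Ideal.mul_mono_left ih).trans ?_
    rw [Ideal.span_mul_span']
    refine Ideal.span_mono ?_
    rintro _ ⟨_, ⟨_, ⟨E, hE, hc, rfl⟩, rfl⟩, _, ⟨i, j, hij, rfl⟩, rfl⟩
    refine ⟨_, ⟨s(i, j) ::ₘ E, AllE.cons hij hE, by simp [hc], rfl⟩, ?_⟩
    simp only
    rw [← prod_X, ← prod_X]
    simp
    ring

lemma inPow_of_mem (m : ℕ) (d : Fin n →₀ ℕ)
    (h : monomial d (1 : K) ∈
      (Ideal.span {f : MvPolynomial (Fin n) K | ∃ i j, G.Adj i j ∧ f = X i * X j}) ^ m) :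
    InPow G m (Finsupp.toMultiset d) := by
  have h' := mem_ideal_span_monomial_image.1 (pow_le m h) d (by simp)
  obtain ⟨_, ⟨E, hE, hc, rfl⟩, hle⟩ := h'
  refine ⟨E, hE, hc, ?_⟩
  have := Finsupp.toMultiset_strictMono.monotone hle
  simpa using this

lemma mem_of_inPow (m : ℕ) (d : Fin n →₀ ℕ) (h : InPow G m (Finsupp.toMultiset d)) :
    monomial d (1 : K) ∈
      (Ideal.span {f : MvPolynomial (Fin n) K | ∃ i j, G.Adj i j ∧ f = X i * X j}) ^ m := by
  obtain ⟨E, hE, hc, hle⟩ := h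
  obtain ⟨t, ht⟩ := Multiset.le_iff_exists_add.1 hle
  have hd : d = Multiset.toFinsupp (vs E + t) := by rw [← ht]; simp
  rw [hd, ← prod_X, Multiset.map_add, Multiset.prod_add]
  refine Ideal.mul_mem_right _ _ ?_
  rw [← prod_edgeMon]
  clear hle ht hd
  induction E using Multiset.induction_on generalizing m with
  | empty => simp at hc; subst hc; simp
  | cons e E ih =>
    rw [Multiset.card_cons] at hc
    subst hc
    rw [Multiset.map_cons, Multiset.prod_cons, pow_succ']
    refine Ideal.mul_mem_mul ?_ (ih _ (hE.mono (Multiset.le_cons_self _ _)) rfl)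
    have he := hE e (by simp)
    induction e with
    | _ a b => exact Ideal.subset_span ⟨a, b, he, rfl⟩

end
end SocleAux

/-- If `G` is a connected graph in which any two odd cycles have distance at
most one, then every monomial `u ∈ (Iᵐ : 𝔪) \ Iᵐ` (where `I = I(G)`) has degree `2m - 1`
and can be written as `u = x₁⋯x_{2k+1}·e₁⋯e_{m-k-1}` for an odd cycle
`x₁ - ⋯ - x_{2k+1} - x₁` of `G` and edges `e₁,…,e_{m-k-1}` of `G`. -/
theorem socle_element_of_close_odd_cycles
    {K : Type*} [Field K] {n : ℕ} (G : SimpleGraph (Fin n))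
    (hconn : G.Connected)
    (hdist : ∀ (v₁ v₂ : Fin n) (c₁ : G.Walk v₁ v₁) (c₂ : G.Walk v₂ v₂),
      c₁.IsCycle → c₂.IsCycle → Odd c₁.length → Odd c₂.length →
      ∃ x ∈ c₁.support, ∃ y ∈ c₂.support, G.dist x y ≤ 1)
    (I : Ideal (MvPolynomial (Fin n) K))
    (hI : I = Ideal.span {f | ∃ i j, G.Adj i j ∧ f = X i * X j})
    (mI : Ideal (MvPolynomial (Fin n) K)) (hmI : mI = Ideal.span (Set.range X))
    (m : ℕ) (hm : 1 ≤ m) (du : Fin n →₀ ℕ)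
    (hu₁ : monomial du (1 : K) ∈ (I ^ m).colon mI)
    (hu₂ : monomial du (1 : K) ∉ I ^ m) :
    (monomial du (1 : K)).totalDegree = 2 * m - 1 ∧
    ∃ (k : ℕ) (v : Fin n) (c : G.Walk v v), c.IsCycle ∧ c.length = 2 * k + 1 ∧ k + 1 ≤ m ∧
      ∃ e : Fin (m - k - 1) → Sym2 (Fin n), (∀ i, e i ∈ G.edgeSet) ∧
        monomial du (1 : K) = (c.support.tail.map X).prod * ∏ i, edgeMon K (e i) := by
  classical
  subst hI hmI
  obtain ⟨hc, x, c, hcy, ⟨k, hk⟩, E, hE, hs⟩ := SocleAux.main_comb hconn hdist m hm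
    (Finsupp.toMultiset du) (by
      intro x
      have h := Submodule.mem_colon.1 hu₁ (X x) (Ideal.subset_span ⟨x, rfl⟩)
      rw [smul_eq_mul, X, monomial_mul, one_mul] at h
      have h' := SocleAux.inPow_of_mem m _ h
      rw [map_add, Finsupp.toMultiset_single, one_smul, add_comm] at h'
      exact h') (fun h => hu₂ (SocleAux.mem_of_inPow m du h))
  have hcard := congrArg Multiset.card hs
  rw [hc] at hcard
  simp only [Multiset.card_add, SocleAux.card_tl, SocleAux.card_vs, hk] at hcard
  refine ⟨?_, k, x, c, hcy, hk, by omega, ?_⟩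
  · rw [totalDegree_monomial _ one_ne_zero, ← hc, Finsupp.card_toMultiset]
    rfl
  have hEl : E.toList.length = m - k - 1 := by
    rw [Multiset.length_toList]; omega
  refine ⟨fun i => E.toList.get (i.cast hEl.symm), fun i => hE _ ?_, ?_⟩
  · rw [← Multiset.mem_toList]
    exact List.get_mem _ _
  have hdu : du = Multiset.toFinsupp (SocleAux.tl c + SocleAux.vs E) := by rw [← hs]; simp
  have hprod : ∏ i : Fin (m - k - 1), edgeMon K (E.toList.get (i.cast hEl.symm))
      = (E.map (edgeMon K)).prod := by
    rw [← Equiv.prod_comp (finCongr hEl) ]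
    simp only [finCongr_apply, Fin.cast_cast, Fin.cast_eq_self]
    conv_rhs => rw [← Multiset.coe_toList E, Multiset.map_coe, Multiset.prod_coe]
    rw [← List.prod_ofFn]
    congr 1
    exact (List.ofFn_comp' _ _).trans (by rw [List.ofFn_get])
  rw [hprod, SocleAux.prod_edgeMon, hdu, ← SocleAux.prod_X, Multiset.map_add, Multiset.prod_add]
  congr 1
end

section
/- Let G be a connected unicyclic graph whose unique cycle is an odd cycle C of length 2k+1 with vertex set {x₁,…,x_{2k+1}}, let I = I(G), let u ∈ S be a monomial and m ≥ 1 an integer. Then u ∈ (Iᵐ : 𝔪) \ Iᵐ if and only if u = (x₁x₂⋯x_{2k+1})·∏_{e∈E₁} e^{m_e} for some subset E₁ ⊆ E(G) and positive integers m_e (e ∈ E₁) such that E*(G) ⊆ E₁ and Σ_{e∈E₁} m_e = m − k − 1, where each edge e is identified with its degree-2 monomial. -/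
open MvPolynomial

set_option linter.unusedSectionVars false
noncomputable section Aux
open Classical

namespace Soc

variable {V : Type} [Fintype V] {G : SimpleGraph V}

/-- vertex-degree map -/
def D (G : SimpleGraph V) (R : Type) [CommRing R] : (G.edgeSet → R) →ₗ[R] (V → R) where
  toFun f v := ∑ e : G.edgeSet, if v ∈ e.1 then f e else 0
  map_add' f g := by
    funext v; simp only [Pi.add_apply, ← Finset.sum_add_distrib]
    refine Finset.sum_congr rfl fun e _ => ?_
    split_ifs <;> simp
  map_smul' r f := by
    funext v; simp only [Pi.smul_apply, smul_eq_mul, Finset.mul_sum, RingHom.id_apply]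
    refine Finset.sum_congr rfl fun e _ => ?_
    split_ifs <;> simp

/-- vertex indicator -/
abbrev δ {R : Type} [CommRing R] (v : V) : V → R := Pi.single v 1
/-- edge indicator -/
abbrev ε {R : Type} [CommRing R] (e : G.edgeSet) : G.edgeSet → R := Pi.single e 1

/-- sum of indicators of a list -/
def sv {R : Type} [CommRing R] (l : List V) : V → R := (l.map δ).sum

lemma D_apply {R : Type} [CommRing R] (f : G.edgeSet → R) (v : V) :
    D G R f v = ∑ e : G.edgeSet, if v ∈ e.1 then f e else 0 := rfl

lemma D_eps {R : Type} [CommRing R] {a b : V} (h : G.Adj a b) :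
    D G R (ε ⟨s(a,b), h⟩) = δ a + δ b := by
  funext v
  rw [D_apply, Finset.sum_eq_single ⟨s(a,b), h⟩]
  · have := h.ne
    by_cases h1 : v = a
    · subst h1; simp [this]
    · by_cases h2 : v = b
      · subst h2; simp [h1]
      · simp [h1, h2]
  · intro e _ he
    simp [he]
  · simp

lemma sum_delta (v : V) : ∑ w, (δ v : V → ℤ) w = 1 := by
  simp [δ]

lemma sum_D (f : G.edgeSet → ℤ) : ∑ v, D G ℤ f v = 2 * ∑ e, f e := by
  have : f = ∑ e, f e • ε e := by
    funext e; simp [Finset.sum_apply, Pi.single_apply]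
  conv_lhs => rw [this]
  simp only [map_sum, map_smul, Finset.sum_apply, Pi.smul_apply]
  rw [Finset.sum_comm, Finset.mul_sum]
  refine Finset.sum_congr rfl fun e _ => ?_
  obtain ⟨e, he⟩ := e
  induction e using Sym2.ind with
  | _ a b =>
    rw [D_eps he]
    simp only [Pi.add_apply, smul_eq_mul, ← Finset.mul_sum, Finset.sum_add_distrib, sum_delta]
    ring

lemma sum_sv (l : List V) : ∑ v, (sv l : V → ℤ) v = l.length := by
  induction l with
  | nil => simp [sv]
  | cons a l ih =>
    have : (sv (a :: l) : V → ℤ) = δ a + sv l := by simp [sv]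
    simp only [this, Pi.add_apply, Finset.sum_add_distrib, sum_delta, ih]
    simp; ring

lemma sv_cons (a : V) (l : List V) : (sv (a :: l) : V → ℤ) = δ a + sv l := by simp [sv]

lemma sv_perm {l l' : List V} (h : l.Perm l') : (sv l : V → ℤ) = sv l' := by
  unfold sv; exact (h.map _).sum_eq

lemma alt_aux (N : ℕ) : ∀ {a b : V} (p : G.Walk a b), p.length ≤ N →
    ∃ y : G.edgeSet → ℤ, 0 ≤ y ∧ (∀ e, y e ≠ 0 → e.1 ∈ p.edges) ∧
      D G ℤ y = if Even p.length then sv p.support - δ b else sv p.support := by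
  induction N with
  | zero =>
    intro a b p hp
    cases p with
    | nil => exact ⟨0, le_refl _, by simp, by simp [sv]⟩
    | cons h q => simp at hp
  | succ N ih =>
    intro a b p hp
    cases p with
    | nil => exact ⟨0, le_refl _, by simp, by simp [sv]⟩
    | @cons _ w _ h q =>
      cases q with
      | nil =>
        refine ⟨ε ⟨s(a,b), h⟩, ?_, ?_, ?_⟩
        · intro e; simp only [ε, Pi.single_apply]; split_ifs <;> simp
        · intro e he
          simp only [ε, Pi.single_apply] at he
          split_ifs at he with h1
          · simp [h1]
          · simp at he
        · rw [D_eps]; simp [sv]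
      | @cons _ x _ h2 r =>
        obtain ⟨y, hy0, hys, hyD⟩ := ih r (by simp at hp; omega)
        refine ⟨ε ⟨s(a,w), h⟩ + y, ?_, ?_, ?_⟩
        · refine add_nonneg ?_ hy0
          intro e; simp only [ε, Pi.single_apply]; split_ifs <;> simp
        · intro e he
          simp only [ε, Pi.single_apply, Pi.add_apply] at he
          split_ifs at he with h1
          · simp [h1]
          · have := hys e (by simpa using he)
            simp [this]
        · rw [map_add, D_eps, hyD]
          simp only [SimpleGraph.Walk.length_cons, Nat.even_add_one, not_not,
            SimpleGraph.Walk.support_cons, sv_cons]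
          split_ifs <;> abel

/-- Both signs: solution for `1_C ± δ w` with `w` on the cycle. -/
lemma cyc_aux {v : V} (c : G.Walk v v) (k : ℕ) (hlen : c.length = 2 * k + 1) (w : V)
    (hw : w ∈ c.support) :
    (∃ y : G.edgeSet → ℤ, 0 ≤ y ∧ (∀ e, y e ≠ 0 → e.1 ∈ c.edges) ∧
      D G ℤ y = sv c.support.tail + δ w) ∧
    (∃ y : G.edgeSet → ℤ, 0 ≤ y ∧ (∀ e, y e ≠ 0 → e.1 ∈ c.edges) ∧
      D G ℤ y = sv c.support.tail - δ w) := by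
  have hs := (c.support_rotate w hw).perm
  have he := (c.rotate_edges w hw).perm
  have hl : (c.rotate w hw).length = 2 * k + 1 := by
    rw [← SimpleGraph.Walk.length_edges, he.length_eq, SimpleGraph.Walk.length_edges, hlen]
  rw [← sv_perm hs]
  simp only [← he.mem_iff]
  generalize c.rotate w hw = d at *
  have hne : ¬ Even d.length := by rw [hl]; simp
  constructor
  · obtain ⟨y, h0, h1, h2⟩ := alt_aux _ d le_rfl
    refine ⟨y, h0, h1, ?_⟩
    rw [h2, if_neg hne]
    rw [← d.cons_tail_support, sv_cons, List.tail_cons, add_comm]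
  · cases d with
    | nil => simp at hne
    | cons h q =>
      obtain ⟨y, h0, h1, h2⟩ := alt_aux _ q le_rfl
      have hev : Even q.length := by simpa [Nat.even_add_one] using hne
      refine ⟨y, h0, fun e he => by simp [h1 e he], ?_⟩
      rw [h2, if_pos hev]; simp

/-- Solutions along a walk from `i` to the cycle. -/
lemma walk_aux {v : V} (c : G.Walk v v) (k : ℕ) (hlen : c.length = 2 * k + 1) {i w : V}
    (p : G.Walk i w) (hw : w ∈ c.support) (hp : p.edges.Nodup) :
    (∃ y : G.edgeSet → ℤ, (∀ e, (if e.1 ∈ p.edges.tail then -1 else 0) ≤ y e) ∧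
      (∀ e, y e ≠ 0 → e.1 ∈ p.edges ∨ e.1 ∈ c.edges) ∧
      D G ℤ y = sv c.support.tail + δ i) ∧
    (∃ y : G.edgeSet → ℤ, (∀ e, (if e.1 ∈ p.edges then -1 else 0) ≤ y e) ∧
      (∀ e, y e ≠ 0 → e.1 ∈ p.edges ∨ e.1 ∈ c.edges) ∧
      D G ℤ y = sv c.support.tail - δ i) := by
  induction p with
  | nil =>
    obtain ⟨⟨y, h0, h1, h2⟩, ⟨z, h0', h1', h2'⟩⟩ := cyc_aux c k hlen _ hw
    exact ⟨⟨y, fun e => by simpa using h0 e, fun e he => Or.inr (h1 e he), h2⟩,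
      ⟨z, fun e => by simpa using h0' e, fun e he => Or.inr (h1' e he), h2'⟩⟩
  | @cons a b _ h q ih =>
    simp only [SimpleGraph.Walk.edges_cons, List.nodup_cons] at hp
    obtain ⟨⟨y, h0, h1, h2⟩, ⟨z, h0', h1', h2'⟩⟩ := ih hw hp.2
    constructor
    · refine ⟨ε ⟨s(a,b), h⟩ + z, ?_, ?_, ?_⟩
      · intro e
        have := h0' e
        simp only [SimpleGraph.Walk.edges_cons, List.tail_cons, ε, Pi.single_apply, Pi.add_apply]
        refine this.trans ?_
        split_ifs <;> linarith
      · intro e he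
        simp only [ε, Pi.single_apply, Pi.add_apply] at he
        split_ifs at he with h3
        · simp [h3]
        · rcases h1' e (by simpa using he) with h | h <;> simp [h]
      · rw [map_add, D_eps, h2']; abel
    · refine ⟨y - ε ⟨s(a,b), h⟩, ?_, ?_, ?_⟩
      · intro e
        have := h0 e
        have ht : e.1 ∈ q.edges.tail → e.1 ∈ q.edges := List.mem_of_mem_tail
        simp only [ε, Pi.single_apply, Pi.sub_apply, SimpleGraph.Walk.edges_cons, List.mem_cons]
        by_cases hee : e = ⟨s(a,b), h⟩
        · subst hee
          have h5 : s(a,b) ∉ q.edges.tail := fun h => hp.1 (ht h)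
          rw [if_neg h5] at this
          rw [if_pos (Or.inl rfl), if_pos rfl]
          linarith
        · have : e.1 ≠ s(a,b) := fun h => hee (Subtype.ext h)
          simp only [hee, this, if_false, false_or]
          split_ifs at * <;> first | linarith | tauto
      · intro e he
        simp only [ε, Pi.single_apply, Pi.sub_apply] at he
        split_ifs at he with h3
        · simp [h3]
        · rcases h1 e (by simpa using he) with h | h <;> simp [h]
      · rw [map_sub, D_eps, h2]; abel


lemma D_map (f : G.edgeSet → ℤ) (v : V) :
    D G ℚ (fun e => (f e : ℚ)) v = ((D G ℤ f v : ℤ) : ℚ) := by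
  rw [D_apply, D_apply]; push_cast; rfl

lemma card_edges {v : V} (c : G.Walk v v) (hconn : G.Connected) (hc : c.IsCycle)
    (huniq : ∀ (w : V) (p : G.Walk w w), p.IsCycle → ∀ e, e ∈ p.edges ↔ e ∈ c.edges) :
    Fintype.card G.edgeSet = Fintype.card V := by
  cases c with
  | nil => simp at hc
  | @cons _ w _ h q =>
    set c := SimpleGraph.Walk.cons h q
    have he : s(v, w) ∈ c.edges := by simp [c]
    have hT : (G.deleteEdges {s(v, w)}).IsTree := by
      refine ⟨hconn.connected_delete_edge_of_not_isBridge
        (fun hb => hb.notMem_edges_of_isCycle hc he), ?_⟩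
      intro x p hp
      have hle : G.deleteEdges {s(v, w)} ≤ G := SimpleGraph.deleteEdges_le _
      have h1 := (huniq x (p.mapLe hle) (hp.mapLe hle) s(v,w)).2 he
      have h2 : s(v,w) ∈ p.edges := by simpa using h1
      have := p.edges_subset_edgeSet h2
      simp at this
    have h1 := hT.card_edgeFinset
    have h2 : (G.deleteEdges {s(v, w)}).edgeFinset = G.edgeFinset.erase s(v,w) := by
      ext e; simp [and_comm]
    rw [h2, Finset.card_erase_of_mem (by simpa using h)] at h1
    have h3 : 0 < G.edgeFinset.card := Finset.card_pos.2 ⟨s(v,w), by simpa using h⟩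
    rw [← h1, ← SimpleGraph.edgeFinset_card]; omega

lemma exists_sol {v : V} (c : G.Walk v v) (hconn : G.Connected)
    (k : ℕ) (hlen : c.length = 2 * k + 1) (i : V) :
    (∃ y : G.edgeSet → ℤ, D G ℤ y = sv c.support.tail + δ i) ∧
    (∃ y : G.edgeSet → ℤ, D G ℤ y = sv c.support.tail - δ i) := by
  obtain ⟨p, hp⟩ := hconn.exists_isPath i v
  obtain ⟨⟨y, _, _, h⟩, ⟨z, _, _, h'⟩⟩ := walk_aux c k hlen p (by simp) hp.isTrail.edges_nodup
  exact ⟨⟨y, h⟩, ⟨z, h'⟩⟩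

lemma D_inj {v : V} (c : G.Walk v v) (hconn : G.Connected) (hc : c.IsCycle)
    (k : ℕ) (hlen : c.length = 2 * k + 1)
    (huniq : ∀ (w : V) (p : G.Walk w w), p.IsCycle → ∀ e, e ∈ p.edges ↔ e ∈ c.edges) :
    Function.Injective (D G ℤ) := by
  have hQ : Function.Injective (D G ℚ) := by
    rw [LinearMap.injective_iff_surjective_of_finrank_eq_finrank
      (by simp [card_edges c hconn hc huniq])]
    rw [← LinearMap.range_eq_top, eq_top_iff, ← (Pi.basisFun ℚ V).span_eq, Submodule.span_le]
    rintro _ ⟨i, rfl⟩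
    obtain ⟨⟨y, h⟩, ⟨z, h'⟩⟩ := exists_sol c hconn k hlen i
    refine ⟨(1/2 : ℚ) • ((fun e => (((y - z) e : ℤ) : ℚ))), ?_⟩
    rw [map_smul]
    funext w
    rw [Pi.smul_apply, D_map, map_sub, h, h']
    simp only [Pi.sub_apply, Pi.add_apply, Pi.basisFun_apply, Pi.single_apply]
    split_ifs <;> simp
  intro f g hfg
  have : (fun e => (f e : ℚ)) = fun e => (g e : ℚ) := by
    apply hQ
    funext w
    rw [D_map, D_map, hfg]
  funext e
  exact_mod_cast congrFun this e

lemma D_mono {f g : G.edgeSet → ℤ} (h : f ≤ g) : D G ℤ f ≤ D G ℤ g := by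
  intro v
  rw [D_apply, D_apply]
  refine Finset.sum_le_sum fun e _ => ?_
  split_ifs
  · exact h e
  · rfl

/-- `PM b t`: there is a `b`-matching with `t` edges -/
def PM (G : SimpleGraph V) (b : V → ℤ) (t : ℤ) : Prop :=
  ∃ f : G.edgeSet → ℤ, 0 ≤ f ∧ D G ℤ f ≤ b ∧ ∑ e, f e = t

lemma delta_nonneg (v : V) : (0 : V → ℤ) ≤ δ v := by
  intro w; simp only [Pi.single_apply]; split_ifs <;> simp

lemma eps_nonneg (e : G.edgeSet) : (0 : G.edgeSet → ℤ) ≤ ε e := by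
  intro w; simp only [Pi.single_apply]; split_ifs <;> simp

lemma sum_eps (e : G.edgeSet) : ∑ x, (ε e : G.edgeSet → ℤ) x = 1 := by simp [ε]

lemma eps_le {f : G.edgeSet → ℤ} (hf : 0 ≤ f) {e : G.edgeSet} (he : 0 < f e) : 
    0 ≤ f - ε e := by
  intro w; have := hf w
  simp only [ε, Pi.sub_apply, Pi.single_apply, Pi.zero_apply] at *
  split_ifs with h
  · subst h; omega
  · omega

lemma exists_edge {a : V} {f g : G.edgeSet → ℤ} (h : D G ℤ f a < D G ℤ g a) :
    ∃ (b : V) (hab : G.Adj a b), f ⟨s(a,b), hab⟩ < g ⟨s(a,b), hab⟩ := by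
  rw [D_apply, D_apply] at h
  obtain ⟨e, _, he⟩ := Finset.exists_lt_of_sum_lt h
  split_ifs at he with hae
  · obtain ⟨e, hE⟩ := e
    obtain ⟨b, rfl⟩ := Sym2.mem_iff_exists.1 hae
    exact ⟨b, hE, he⟩
  · simp at he

/-- remove an edge at `w` -/
lemma PM_sub {b : V → ℤ} {t : ℤ} {w : V} (hb : 0 ≤ b w) (ht : 0 ≤ t)
    (h : PM G (b + δ w) (t + 1)) : PM G b t := by
  obtain ⟨f, h0, h1, h2⟩ := h
  by_cases hw : D G ℤ f w ≤ b w
  · have : ∃ e, 0 < f e := by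
      by_contra! hcon
      have : ∑ e, f e ≤ 0 := Finset.sum_nonpos fun e _ => hcon e
      omega
    obtain ⟨e, he⟩ := this
    refine ⟨f - ε e, eps_le h0 he, ?_, ?_⟩
    · have h3 : D G ℤ (f - ε e) ≤ D G ℤ f := D_mono (sub_le_self _ (eps_nonneg e))
      intro x
      by_cases hx : x = w
      · subst hx; exact (h3 x).trans hw
      · refine (h3 x).trans ((h1 x).trans ?_)
        simp [hx]
    · simp only [Pi.sub_apply, Finset.sum_sub_distrib, sum_eps]; omega
  · push Not at hw
    obtain ⟨a, ha, hlt⟩ := exists_edge (f := 0) (g := f) (a := w) (by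
      rw [map_zero]; exact lt_of_le_of_lt hb hw)
    refine ⟨f - ε _, eps_le h0 hlt, ?_, ?_⟩
    · rw [map_sub, D_eps]
      intro x
      have := h1 x
      have := delta_nonneg a x
      simp only [Pi.sub_apply, Pi.add_apply, Pi.zero_apply] at *
      linarith
    · simp only [Pi.sub_apply, Finset.sum_sub_distrib, sum_eps]; omega

lemma exchange {b : V → ℤ} (hb : 0 ≤ b) {m : ℤ} (hm : 0 ≤ m) (hν : ¬ PM G b m)
    (N : G.edgeSet → ℤ) (hN0 : 0 ≤ N) (hN : D G ℤ N ≤ b) (w : V) (t : ℕ) :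
    ∀ M : G.edgeSet → ℤ, 0 ≤ M → D G ℤ M ≤ b + δ w → ∑ e, M e = m →
      ∑ e, (N e - M e).toNat = t →
      ∃ M' : G.edgeSet → ℤ, 0 ≤ M' ∧ D G ℤ M' ≤ b + δ w ∧ ∑ e, M' e = m ∧ D G ℤ N ≤ D G ℤ M' := by
  induction t using Nat.strong_induction_on with
  | _ t ih =>
  intro M h0 hM hs ht
  by_cases hle : D G ℤ N ≤ D G ℤ M
  · exact ⟨M, h0, hM, hs, hle⟩
  · obtain ⟨x, hx⟩ : ∃ x, D G ℤ M x < D G ℤ N x := by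
      by_contra! h; exact hle h
    obtain ⟨y, hxy, hlt⟩ := exists_edge hx
    have hysat : D G ℤ M y = b y + (δ w : V → ℤ) y := by
      refine le_antisymm (hM y) ?_
      by_contra! hcon
      apply hν
      refine PM_sub (hb w) hm ⟨M + ε ⟨s(x,y), hxy⟩, add_nonneg h0 (eps_nonneg _), ?_, ?_⟩
      · rw [map_add, D_eps]
        intro z
        have h1 := hM z
        have h2 := hN x
        have h3 := delta_nonneg w x
        have h4 := hxy.ne
        simp only [Pi.add_apply, Pi.zero_apply] at *
        by_cases hzx : z = x
        · subst hzx
          simp only [Pi.single_eq_same, Pi.single_eq_of_ne h4]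
          linarith
        · by_cases hzy : z = y
          · subst hzy
            simp only [Pi.single_eq_same, Pi.single_eq_of_ne hzx]
            linarith
          · simp only [Pi.single_eq_of_ne hzx, Pi.single_eq_of_ne hzy]
            linarith
      · simp only [Pi.add_apply, Finset.sum_add_distrib, sum_eps, hs]
    obtain ⟨z, hyz, hlt2⟩ : ∃ (z : V) (hab : G.Adj y z), N ⟨s(y,z), hab⟩ < M ⟨s(y,z), hab⟩ := by
      by_contra! hcon
      have : D G ℤ M y < D G ℤ N y := by
        rw [D_apply, D_apply]
        refine Finset.sum_lt_sum ?_ ⟨⟨s(x,y), hxy⟩, Finset.mem_univ _, by simpa using hlt⟩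
        rintro ⟨e, he⟩ _
        by_cases hye : y ∈ e
        · obtain ⟨z, rfl⟩ := Sym2.mem_iff_exists.1 hye
          simpa using hcon z he
        · simp [hye]
      have h2 := hN y
      have h3 := delta_nonneg w y
      simp only [Pi.add_apply, Pi.zero_apply] at *
      linarith
    set e1 : G.edgeSet := ⟨s(x,y), hxy⟩
    set e2 : G.edgeSet := ⟨s(y,z), hyz⟩
    have hne : e1 ≠ e2 := by intro h; rw [h] at hlt; omega
    have hDM : D G ℤ (M - ε e2 + ε e1) = D G ℤ M + δ x - δ z := by
      rw [map_add, map_sub, D_eps, D_eps]; abel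
    have hNn : 0 < M e2 := lt_of_le_of_lt (hN0 e2) hlt2
    · refine ih (∑ e, (N e - (M - ε e2 + ε e1 : G.edgeSet → ℤ) e).toNat) ?_ (M - ε e2 + ε e1)
        (add_nonneg (eps_le h0 hNn) (eps_nonneg _)) ?_ ?_ rfl
      · rw [← ht]
        refine Finset.sum_lt_sum ?_ ⟨e1, Finset.mem_univ _, ?_⟩
        · intro e _
          simp only [Pi.add_apply, Pi.sub_apply, ε, Pi.single_apply]
          split_ifs with h1 h2 <;> first | omega | (subst h1; omega)
        · simp only [Pi.add_apply, Pi.sub_apply, ε, Pi.single_eq_same, Pi.single_eq_of_ne hne]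
          omega
      · rw [hDM]
        intro u
        have h1 := hM u
        have h2 := hN x
        have h3 := delta_nonneg w x
        have h5 := delta_nonneg z u
        simp only [Pi.add_apply, Pi.sub_apply, Pi.zero_apply] at *
        by_cases hzx : u = x
        · subst hzx
          simp only [Pi.single_eq_same]
          linarith
        · simp only [Pi.single_eq_of_ne hzx]
          linarith
      · simp only [Pi.add_apply, Pi.sub_apply, Finset.sum_add_distrib, Finset.sum_sub_distrib,
          sum_eps, hs]; ring

/-- perfectness -/
lemma perfect {v : V} (hinj : Function.Injective (D G ℤ))
    (hsol : ∀ u w : V, ∃ y : G.edgeSet → ℤ, D G ℤ y = δ u + δ w)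
    {b : V → ℤ} (hb : 0 ≤ b) {m : ℤ} (hm : 1 ≤ m) (hν : ¬ PM G b m)
    (hν' : ∀ i, PM G (b + δ i) m) : ∑ x, b x = 2 * m - 1 := by
  have hlow : 2 * m ≤ ∑ x, b x + 1 := by
    obtain ⟨f, h0, h1, h2⟩ := hν' v
    have h3 := Finset.sum_le_sum (fun x (_ : x ∈ Finset.univ) => h1 x)
    rw [sum_D, h2] at h3
    simpa only [Pi.add_apply, Finset.sum_add_distrib, sum_delta] using h3
  obtain ⟨N, hN0, hN1, hN2⟩ : PM G b (m - 1) := PM_sub (w := v) (hb v) (by omega) (by simpa using hν' v)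
  by_contra hne
  -- slack
  have hslack : ∀ u, D G ℤ N u < b u → ∃ M : G.edgeSet → ℤ, 0 ≤ M ∧
      D G ℤ M = D G ℤ N + δ u + δ u ∧ b u = D G ℤ N u + 1 := by
    intro u hu
    obtain ⟨M, h0, h1, h2⟩ := hν' u
    obtain ⟨M, h0, h1, h2, h3⟩ := exchange hb (by omega) hν N hN0 hN1 u _ M h0 h1 h2 rfl
    have h4 : b u + 1 ≤ D G ℤ M u := by
      by_contra! hcon
      refine hν ⟨M, h0, ?_, h2⟩
      intro x
      by_cases hx : x = u
      · subst hx; exact Int.lt_add_one_iff.1 hcon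
      · simpa [hx] using h1 x
    have hd0 : ∀ x, 0 ≤ D G ℤ M x - D G ℤ N x := fun x => sub_nonneg.2 (h3 x)
    have hd : ∑ x, (D G ℤ M x - D G ℤ N x) = 2 := by
      rw [Finset.sum_sub_distrib, sum_D, sum_D, h2, hN2]; ring
    have hbig : D G ℤ M u - D G ℤ N u ≤ 2 := by
      rw [← hd]; exact Finset.single_le_sum (f := fun x => D G ℤ M x - D G ℤ N x) (fun x _ => hd0 x) (Finset.mem_univ u)
    refine ⟨M, h0, ?_, by omega⟩
    funext x
    by_cases hx : x = u
    · subst hx; simp; omega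
    · have : D G ℤ M u - D G ℤ N u + (D G ℤ M x - D G ℤ N x) ≤ 2 := by
        rw [← hd, ← Finset.add_sum_erase _ _ (Finset.mem_univ u)]
        gcongr
        exact Finset.single_le_sum (f := fun x => D G ℤ M x - D G ℤ N x) (fun x _ => hd0 x) (by simp [hx])
      have := hd0 x
      simp [hx]; omega
  have hs0 : ∀ x, 0 ≤ b x - D G ℤ N x := fun x => sub_nonneg.2 (hN1 x)
  have hs : 2 ≤ ∑ x, (b x - D G ℤ N x) := by
    rw [Finset.sum_sub_distrib, sum_D, hN2]; omega
  obtain ⟨u, hu⟩ : ∃ u, D G ℤ N u < b u := by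
    by_contra! hcon
    have : ∑ x, (b x - D G ℤ N x) ≤ 0 := Finset.sum_nonpos fun x _ => by linarith [hcon x]
    omega
  obtain ⟨M, hM0, hM, hbu⟩ := hslack u hu
  obtain ⟨w, hwu, hw⟩ : ∃ w, w ≠ u ∧ D G ℤ N w < b w := by
    by_contra! hcon
    rw [← Finset.add_sum_erase _ _ (Finset.mem_univ u)] at hs
    have : ∑ x ∈ Finset.univ.erase u, (b x - D G ℤ N x) ≤ 0 :=
      Finset.sum_nonpos fun x hx => by linarith [hcon x (by simpa using hx)]
    omega
  obtain ⟨M', hM0', hM', hbw⟩ := hslack w hw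
  obtain ⟨y, hy⟩ := hsol u w
  have hEq : M + M' = (y + N) + (y + N) := by
    apply hinj
    simp only [map_add, hM, hM', hy]; abel
  have hD : D G ℤ (y + N) = D G ℤ N + δ u + δ w := by rw [map_add, hy]; abel
  refine hν ⟨y + N, ?_, ?_, ?_⟩
  · intro e
    have h1 := congrFun hEq e
    have h2 := hM0 e
    have h3 := hM0' e
    simp only [Pi.add_apply, Pi.zero_apply] at *
    omega
  · rw [hD]
    intro x
    have := hN1 x
    by_cases hxu : x = u
    · subst hxu; simp [hwu.symm]; omega
    · by_cases hxw : x = w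
      · subst hxw; simp [hwu]; omega
      · simpa [hxu, hxw] using this
  · have := sum_D (y + N)
    rw [hD] at this
    simp only [Pi.add_apply, Finset.sum_add_distrib, sum_delta, sum_D, hN2] at this ⊢
    omega

lemma sv_count (l : List V) (x : V) : (sv l : V → ℤ) x = l.count x := by
  induction l with
  | nil => simp [sv]
  | cons a l ih =>
    rw [sv_cons, Pi.add_apply, ih, List.count_cons]
    by_cases h : x = a
    · subst h; simp; ring
    · simp [h, Ne.symm h]

lemma two_nbrs {v : V} {c : G.Walk v v} (hc : c.IsCycle) {b : V} (hb : b ∈ c.support) (a : V) :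
    ∃ i, i ≠ a ∧ G.Adj b i := by
  have hd := hc.rotate hb
  generalize c.rotate b hb = d at hd
  have h1 := d.adj_snd hd.not_nil
  have h2 := (d.adj_penultimate hd.not_nil).symm
  by_cases h : d.snd = a
  · exact ⟨_, fun h3 => hd.snd_ne_penultimate (h.trans h3.symm), h2⟩
  · exact ⟨_, h, h1⟩

/-- path to the cycle touching it only at its end -/
lemma exists_path {v : V} (c : G.Walk v v) {i w : V} (q : G.Walk i w) (hw : w ∈ c.support) :
    ∃ (x : V) (p : G.Walk i x), x ∈ c.support ∧ p.IsPath ∧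
      ∀ y ∈ p.support, y ∈ c.support → y = x := by
  induction q with
  | nil => exact ⟨_, .nil, hw, by simp, by simp⟩
  | @cons a b _ h q ih =>
    by_cases ha : a ∈ c.support
    · exact ⟨a, .nil, ha, by simp, by simp⟩
    · obtain ⟨x, p, hx, hp, hpc⟩ := ih hw
      by_cases hap : a ∈ p.support
      · exact ⟨x, p.dropUntil a hap, hx, hp.dropUntil hap,
          fun y hy => hpc y (p.support_dropUntil_subset_support hap hy)⟩
      · refine ⟨x, .cons h p, hx, hp.cons hap, ?_⟩
        intro y hy hyc
        simp only [SimpleGraph.Walk.support_cons, List.mem_cons] at hy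
        rcases hy with rfl | hy
        · exact absurd hyc ha
        · exact hpc y hy hyc

lemma tail_star {v : V} {c : G.Walk v v} (hc : c.IsCycle) {j x : V} (p : G.Walk j x) :
    x ∈ c.support → p.IsPath → (∀ y ∈ p.support, y ∈ c.support → y = x) →
    ∀ i, G.Adj i j → i ∉ p.support → ∀ e ∈ p.edges, e ∉ c.edges ∧
      ¬ ∃ x, x ∈ e ∧ ∃! y, G.Adj x y := by
  induction p with
  | nil => simp
  | @cons j j2 x h q ih =>
    intro hx hp hpc i hij hi e he
    rw [SimpleGraph.Walk.cons_isPath_iff] at hp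
    simp only [SimpleGraph.Walk.edges_cons, List.mem_cons] at he
    simp only [SimpleGraph.Walk.support_cons, List.mem_cons, not_or] at hi
    rcases he with rfl | he
    · have hj : j ∉ c.support := by
        intro hj
        have := hpc j (by simp) hj
        subst this
        exact hp.2 q.end_mem_support
      refine ⟨fun h => hj (c.fst_mem_support_of_mem_edges h), ?_⟩
      rintro ⟨y, hy, z, hz, hz'⟩
      simp only [Sym2.mem_iff] at hy
      rcases hy with rfl | rfl
      · have h1 := hz' _ hij.symm
        have h2 := hz' _ h
        apply hi.2
        rw [h1, ← h2]; exact q.start_mem_support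
      · have h1 := hz' _ h.symm
        subst h1
        cases q with
        | nil =>
          obtain ⟨i, hi, hadj⟩ := two_nbrs hc hx j
          exact hi (hz' _ hadj)
        | cons h3 r =>
          have h2 := hz' _ h3
          subst h2
          apply hp.2; simp
    · exact ih hx hp.1 (fun y hy => hpc y (by simp [hy])) j h hp.2 e he

theorem core (hconn : G.Connected) (k : ℕ) {v : V} (c : G.Walk v v) (hc : c.IsCycle)
    (hlen : c.length = 2 * k + 1)
    (huniq : ∀ (w : V) (p : G.Walk w w), p.IsCycle → ∀ e, e ∈ p.edges ↔ e ∈ c.edges)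
    {b : V → ℤ} (hb : 0 ≤ b) {m : ℤ} (hm : 1 ≤ m) :
    (¬ PM G b m ∧ ∀ i, PM G (b + δ i) m) ↔ ∃ f : G.edgeSet → ℤ, 0 ≤ f ∧
      (∀ e, e.1 ∉ c.edges → (¬ ∃ x, x ∈ e.1 ∧ ∃! y, G.Adj x y) → 1 ≤ f e) ∧
      ∑ e, f e = m - k - 1 ∧ b = sv c.support.tail + D G ℤ f := by
  have hsumC : ∑ x, (sv c.support.tail : V → ℤ) x = 2 * k + 1 := by
    rw [sum_sv]; simp [hlen]
  constructor
  · rintro ⟨hν, hν'⟩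
    have hinj := D_inj c hconn hc k hlen huniq
    have hsol : ∀ u w : V, ∃ y : G.edgeSet → ℤ, D G ℤ y = δ u + δ w := by
      intro u w
      obtain ⟨⟨y, hy⟩, -⟩ := exists_sol c hconn k hlen u
      obtain ⟨-, ⟨z, hz⟩⟩ := exists_sol c hconn k hlen w
      exact ⟨y - z, by rw [map_sub, hy, hz]; abel⟩
    have hsum := perfect (v := v) hinj hsol hb hm hν hν'
    have hperf : ∀ i, ∃ M : G.edgeSet → ℤ, 0 ≤ M ∧ D G ℤ M = b + δ i := by
      intro i
      obtain ⟨M, h0, h1, h2⟩ := hν' i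
      refine ⟨M, h0, ?_⟩
      funext x
      refine (Finset.sum_eq_sum_iff_of_le (fun x _ => h1 x)).1 ?_ x (Finset.mem_univ x)
      rw [sum_D, h2]
      simp only [Pi.add_apply, Finset.sum_add_distrib, sum_delta, hsum]; ring
    obtain ⟨f, hf⟩ : ∃ f : G.edgeSet → ℤ, D G ℤ f = b - sv c.support.tail := by
      obtain ⟨M, _, hM⟩ := hperf v
      obtain ⟨⟨y, hy⟩, -⟩ := exists_sol c hconn k hlen v
      exact ⟨M - y, by rw [map_sub, hM, hy]; abel⟩
    have key : ∀ (i : V) (y : G.edgeSet → ℤ) (e : G.edgeSet),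
        D G ℤ y = sv c.support.tail + δ i → - y e ≤ f e := by
      intro i y e hy
      obtain ⟨M, h0, hM⟩ := hperf i
      have : M = f + y := by apply hinj; rw [map_add, hM, hf, hy]; abel
      have h1 := congrFun this e
      have h2 := h0 e
      simp only [Pi.add_apply, Pi.zero_apply] at *
      omega
    refine ⟨f, ?_, ?_, ?_, by rw [hf]; abel⟩
    · rintro ⟨e, he⟩
      by_cases hec : e ∈ c.edges
      · induction e using Sym2.ind with
        | _ a x =>
        have hx := c.snd_mem_support_of_mem_edges hec
        obtain ⟨-, ⟨y, h0, -, hy⟩⟩ := cyc_aux c k hlen x hx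
        obtain ⟨i, hia, hxi⟩ := two_nbrs hc hx a
        have hz := key i (y + ε ⟨s(x,i), hxi⟩) ⟨s(a,x), he⟩ (by
          rw [map_add, hy, D_eps]; abel)
        have hcount : (sv c.support.tail : V → ℤ) x = 1 := by
          rw [sv_count, List.count_eq_one_of_mem hc.support_nodup]
          · rfl
          · rcases c.mem_support_iff.1 hx with rfl | h
            · exact c.end_mem_tail_support hc.not_nil
            · exact h
        have hDx : D G ℤ y x = 0 := by
          rw [hy]; simp [hcount]
        have hye : y ⟨s(a,x), he⟩ = 0 := by
          rw [D_apply, Finset.sum_eq_zero_iff_of_nonneg] at hDx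
          · simpa using hDx ⟨s(a,x), he⟩ (Finset.mem_univ _)
          · intro e _; split_ifs
            · exact h0 e
            · rfl
        have hne : (⟨s(a,x), he⟩ : G.edgeSet) ≠ ⟨s(x,i), hxi⟩ := by
          intro h
          have h := congrArg Subtype.val h
          simp only [Sym2.eq_iff] at h
          rcases h with ⟨h1, h2⟩ | ⟨h1, h2⟩
          · exact hxi.ne h2
          · exact hia h1.symm
        simpa [hye, hne] using hz
      · obtain ⟨⟨y, h0, h1, hy⟩, -⟩ := cyc_aux c k hlen v (by simp)
        have h2 : y ⟨e, he⟩ = 0 := by by_contra h; exact hec (h1 _ h)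
        simpa [h2] using key v y ⟨e, he⟩ hy
    · have main : ∀ (p j : V) (hpj : G.Adj p j) (W : G.Walk p v), s(p,j) ∉ W.edges →
          s(p,j) ∉ c.edges → (¬ ∃ x, x ∈ s(p,j) ∧ ∃! y, G.Adj x y) →
          1 ≤ f ⟨s(p,j), hpj⟩ := by
        intro p j hpj W hW hcE hleaf
        obtain ⟨j', hj', hne⟩ : ∃ j', G.Adj j j' ∧ j' ≠ p := by
          by_contra! hcon
          exact hleaf ⟨j, by simp, p, hpj.symm, hcon⟩
        obtain ⟨⟨y, -, h1, hy⟩, -⟩ := walk_aux c k hlen W.toPath.1 (by simp)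
          W.toPath.2.isTrail.edges_nodup
        have h2 : y ⟨s(p,j), hpj⟩ = 0 := by
          by_contra h
          rcases h1 _ h with h | h
          · exact hW (W.edges_toPath_subset_edges h)
          · exact hcE h
        have hz := key j' (y + ε ⟨s(j,j'), hj'⟩ - ε ⟨s(p,j), hpj⟩) ⟨s(p,j), hpj⟩ (by
          rw [map_sub, map_add, hy, D_eps, D_eps]; abel)
        have hne : (⟨s(p,j), hpj⟩ : G.edgeSet) ≠ ⟨s(j,j'), hj'⟩ := by
          intro h
          have h := congrArg Subtype.val h
          simp only [Sym2.eq_iff] at h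
          rcases h with ⟨h1, h2⟩ | ⟨h1, h2⟩
          · exact hj'.ne h2
          · exact hne h1.symm
        simpa [h2, hne] using hz
      rintro ⟨e, he⟩ hec hleaf
      induction e using Sym2.ind with
      | _ p j =>
      have hpj : G.Adj p j := he
      obtain ⟨W, hW⟩ := hconn.exists_isPath p v
      by_cases hWe : s(p,j) ∈ W.edges
      · cases W with
        | nil => simp at hWe
        | @cons _ q _ h W =>
          rw [SimpleGraph.Walk.cons_isPath_iff] at hW
          simp only [SimpleGraph.Walk.edges_cons, List.mem_cons] at hWe
          have h1 : s(p,j) ∉ W.edges := fun h => hW.2 (W.fst_mem_support_of_mem_edges h)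
          have h2 : j = q := by
            have := hWe.resolve_right h1
            simp only [Sym2.eq_iff] at this
            rcases this with h | h
            · exact h.2
            · exact absurd h.2 hpj.ne'
          subst h2
          have := main j p hpj.symm W (by rwa [Sym2.eq_swap]) (by rw [Sym2.eq_swap]; exact hec)
            (by rw [Sym2.eq_swap]; exact hleaf)
          simpa only [Sym2.eq_swap] using this
      · exact main p j hpj W hWe hec hleaf
    · have := sum_D f
      rw [hf] at this
      simp only [Pi.sub_apply, Finset.sum_sub_distrib, hsum, hsumC] at this
      omega
  · rintro ⟨f, hf0, hf1, hfs, rfl⟩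
    have hsum : ∑ x, (sv c.support.tail + D G ℤ f : V → ℤ) x = 2 * m - 1 := by
      simp only [Pi.add_apply, Finset.sum_add_distrib, hsumC, sum_D, hfs]; ring
    constructor
    · rintro ⟨M, h0, h1, h2⟩
      have h3 := Finset.sum_le_sum (fun x (_ : x ∈ Finset.univ) => h1 x)
      rw [sum_D, h2, hsum] at h3
      omega
    · intro i
      obtain ⟨q⟩ := hconn.preconnected i v
      obtain ⟨x, p, hx, hp, hpc⟩ := exists_path c q (by simp)
      obtain ⟨⟨y, h0, h1, hy⟩, -⟩ := walk_aux c k hlen p hx hp.isTrail.edges_nodup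
      have hD : D G ℤ (f + y) = sv c.support.tail + D G ℤ f + δ i := by
        rw [map_add, hy]; abel
      refine ⟨f + y, ?_, hD.le, ?_⟩
      · intro e
        have h2 := h0 e
        have h3 := hf0 e
        simp only [Pi.add_apply, Pi.zero_apply] at *
        split_ifs at h2 with h4
        · have : 1 ≤ f e := by
            cases p with
            | nil => simp at h4
            | @cons _ j _ h r =>
              simp only [SimpleGraph.Walk.edges_cons, List.tail_cons] at h4
              rw [SimpleGraph.Walk.cons_isPath_iff] at hp
              obtain ⟨h5, h6⟩ := tail_star hc r hx hp.1 (fun y hy => hpc y (by simp [hy])) i h hp.2 _ h4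
              exact hf1 e h5 h6
          linarith
        · linarith
      · have h2 := sum_D (f + y)
        rw [hD] at h2
        have h3 : ∑ x, (sv c.support.tail + D G ℤ f + δ i : V → ℤ) x = 2 * m := by
          have : ∀ x, (sv c.support.tail + D G ℤ f + δ i : V → ℤ) x = (sv c.support.tail + D G ℤ f : V → ℤ) x + (δ i : V → ℤ) x := fun x => rfl
          simp only [this, Finset.sum_add_distrib, sum_delta]
          rw [hsum]; ring
        rw [h3] at h2
        omega

/-- Exponent vectors of products of `m` edges. -/
def T (G : SimpleGraph V) (m : ℕ) : Set (V →₀ ℕ) :=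
  {d | ∃ f : G.edgeSet → ℤ, 0 ≤ f ∧ ∑ e, f e = m ∧ ∀ x, (d x : ℤ) = D G ℤ f x}

lemma T_add {m : ℕ} {a b : V} (h : G.Adj a b) {d : V →₀ ℕ} (hd : d ∈ T G m) :
    d + (Finsupp.single a 1 + Finsupp.single b 1) ∈ T G (m + 1) := by
  obtain ⟨f, h0, h1, h2⟩ := hd
  refine ⟨f + ε ⟨s(a,b), h⟩, add_nonneg h0 (eps_nonneg _), ?_, ?_⟩
  · simp only [Pi.add_apply, Finset.sum_add_distrib, h1, sum_eps]; push_cast; rfl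
  · intro x
    rw [map_add, D_eps]
    simp only [Finsupp.add_apply, Pi.add_apply, ← h2]
    push_cast
    simp only [Finsupp.single_apply, Pi.single_apply, eq_comm]
    push_cast
    rfl

lemma T_sub {m : ℕ} {d : V →₀ ℕ} (hd : d ∈ T G (m + 1)) :
    ∃ a b, G.Adj a b ∧ ∃ d' ∈ T G m, d = d' + (Finsupp.single a 1 + Finsupp.single b 1) := by
  obtain ⟨f, h0, h1, h2⟩ := hd
  have : ∃ e, 0 < f e := by
    by_contra! hcon
    have : ∑ e, f e ≤ 0 := Finset.sum_nonpos fun e _ => hcon e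
    omega
  obtain ⟨⟨e, hE⟩, he⟩ := this
  induction e using Sym2.ind with
  | _ a b =>
  have h3 := eps_le h0 he
  have h4 : ∀ x, 0 ≤ D G ℤ (f - ε ⟨s(a,b), hE⟩) x := by
    have := D_mono h3
    rw [map_zero] at this
    exact this
  refine ⟨a, b, hE, Finsupp.equivFunOnFinite.symm
    (fun x => (D G ℤ (f - ε ⟨s(a,b), hE⟩) x).toNat), ⟨f - ε ⟨s(a,b), hE⟩, h3, ?_, ?_⟩, ?_⟩
  · simp only [Pi.sub_apply, Finset.sum_sub_distrib, h1, sum_eps]; push_cast; ring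
  · intro x
    simpa using h4 x
  · ext x
    zify
    rw [h2]
    simp only [Pi.add_apply]
    push_cast
    simp only [Finsupp.equivFunOnFinite_symm_apply_apply, Int.toNat_of_nonneg (h4 x)]
    have hDe : D G ℤ (ε ⟨s(a,b), hE⟩) = δ a + δ b := D_eps hE
    rw [map_sub, hDe]
    simp only [Finsupp.add_apply, Pi.add_apply, Pi.sub_apply]
    push_cast
    simp only [Finsupp.single_apply, Pi.single_apply, eq_comm]
    push_cast
    ring

lemma pow_eq {K : Type*} [Field K] (m : ℕ) :
    (Ideal.span {f : MvPolynomial V K | ∃ i j, G.Adj i j ∧ f = X i * X j}) ^ m =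
      Ideal.span ((fun s => monomial s (1 : K)) '' T G m) := by
  induction m with
  | zero =>
    rw [pow_zero, Ideal.one_eq_top, eq_comm, Ideal.eq_top_iff_one]
    refine Ideal.subset_span ⟨0, ⟨0, le_rfl, by simp, by simp⟩, rfl⟩
  | succ m ih =>
    rw [pow_succ, ih, Ideal.span_mul_span']
    congr 1
    ext g
    rw [Set.mem_mul]
    constructor
    · rintro ⟨_, ⟨d, hd, rfl⟩, _, ⟨i, j, hij, rfl⟩, rfl⟩
      refine ⟨_, T_add hij hd, ?_⟩
      simp [X, monomial_mul]
    · rintro ⟨d, hd, rfl⟩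
      obtain ⟨a, b, hab, d', hd', rfl⟩ := T_sub hd
      exact ⟨_, ⟨d', hd', rfl⟩, _, ⟨a, b, hab, rfl⟩, by simp [X, monomial_mul]⟩

lemma mem_pow {K : Type*} [Field K] (m : ℕ) (d : V →₀ ℕ) :
    monomial d (1 : K) ∈
      (Ideal.span {f : MvPolynomial V K | ∃ i j, G.Adj i j ∧ f = X i * X j}) ^ m ↔
      PM G (fun x => (d x : ℤ)) m := by
  rw [pow_eq, mem_ideal_span_monomial_image]
  simp only [support_monomial, one_ne_zero, if_false, Finset.mem_singleton, forall_eq]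
  constructor
  · rintro ⟨s, ⟨f, h0, h1, h2⟩, hs⟩
    refine ⟨f, h0, fun x => ?_, h1⟩
    rw [← h2]; show (s x : ℤ) ≤ (d x : ℤ); exact_mod_cast hs x
  · rintro ⟨f, h0, h1, h2⟩
    have h4 : ∀ x, 0 ≤ D G ℤ f x := by
      have := D_mono h0
      rw [map_zero] at this
      exact this
    refine ⟨Finsupp.equivFunOnFinite.symm (fun x => (D G ℤ f x).toNat), ⟨f, h0, h2, ?_⟩, ?_⟩
    · intro x; simpa using h4 x
    · intro x; simpa using h1 x

end Soc

lemma edgeMon_eq {n : ℕ} (K : Type*) [Field K] {a b : Fin n} :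
    edgeMon K s(a,b) = monomial (Finsupp.single a 1 + Finsupp.single b 1) 1 := by
  simp [edgeMon, X, monomial_mul]

/-- exponent of an edge monomial -/
def edgeExp {n : ℕ} (e : Sym2 (Fin n)) : Fin n →₀ ℕ :=
  Sym2.lift ⟨fun i j => Finsupp.single i 1 + Finsupp.single j 1, fun _ _ => add_comm _ _⟩ e

lemma edgeMon_eq' {n : ℕ} (K : Type*) [Field K] (e : Sym2 (Fin n)) :
    edgeMon K e = monomial (edgeExp e) 1 := by
  induction e using Sym2.ind with
  | _ a b => rw [edgeMon_eq]; rfl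

lemma list_prod_X {n : ℕ} (K : Type*) [Field K] (l : List (Fin n)) :
    (l.map (X : Fin n → MvPolynomial (Fin n) K)).prod =
      monomial (l.map (fun i => Finsupp.single i 1)).sum 1 := by
  induction l with
  | nil => simp
  | cons a l ih => simp [ih, X, monomial_mul]

lemma prod_edgeMon {n : ℕ} (K : Type*) [Field K] (E : Finset (Sym2 (Fin n)))
    (me : Sym2 (Fin n) → ℕ) :
    ∏ e ∈ E, edgeMon K e ^ me e = monomial (∑ e ∈ E, me e • edgeExp e) 1 := by
  rw [monomial_sum_one]
  refine Finset.prod_congr rfl fun e _ => ?_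
  rw [edgeMon_eq', monomial_pow, one_pow]

lemma edgeExp_apply {n : ℕ} {G : SimpleGraph (Fin n)} (e : Sym2 (Fin n)) (he : e ∈ G.edgeSet)
    (x : Fin n) :
    edgeExp e x = if x ∈ e then 1 else 0 := by
  induction e using Sym2.ind with
  | _ a b =>
    have : a ≠ b := SimpleGraph.Adj.ne he
    change (Finsupp.single a 1 + Finsupp.single b 1 : Fin n →₀ ℕ) x = _
    simp only [Finsupp.add_apply, Finsupp.single_apply, Sym2.mem_iff]
    by_cases h1 : x = a
    · subst h1; simp [this.symm]
    · by_cases h2 : x = b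
      · subst h2; simp [Ne.symm h1]
      · simp [h1, h2, Ne.symm h1, Ne.symm h2]

lemma listSum_apply {n : ℕ} (l : List (Fin n)) (x : Fin n) :
    (((l.map (fun i => Finsupp.single i 1)).sum : Fin n →₀ ℕ) x : ℤ) = (Soc.sv l : Fin n → ℤ) x := by
  rw [Soc.sv_count]
  induction l with
  | nil => simp
  | cons a l ih =>
    simp only [List.map_cons, List.sum_cons, Finsupp.add_apply, Nat.cast_add, ih, List.count_cons,
      Finsupp.single_apply]
    by_cases h : a = x
    · subst h; simp; ring
    · simp [h]

end Aux

/-- For a connected unicyclic graph `G` with unique odd cycle of length `2k+1`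
and vertex set `{x₁,…,x_{2k+1}}` and `I = I(G)`, a monomial `u` lies in `(Iᵐ : 𝔪) \ Iᵐ`
if and only if `u = x₁⋯x_{2k+1}·∏_{e ∈ E₁} e^{m_e}` for some `E₁ ⊆ E(G)` containing `E*(G)`
and positive integers `m_e` with `Σ m_e = m - k - 1`. -/
theorem socle_monomials_of_unicyclic
    {K : Type*} [Field K] {n : ℕ} (G : SimpleGraph (Fin n))
    (hconn : G.Connected)
    (k : ℕ) (v : Fin n) (c : G.Walk v v) (hc : c.IsCycle) (hlen : c.length = 2 * k + 1)
    -- `c` is the unique cycle of `G`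
    (huniq : ∀ (w : Fin n) (p : G.Walk w w), p.IsCycle → ∀ e, e ∈ p.edges ↔ e ∈ c.edges)
    (I : Ideal (MvPolynomial (Fin n) K))
    (hI : I = Ideal.span {f | ∃ i j, G.Adj i j ∧ f = X i * X j})
    (mI : Ideal (MvPolynomial (Fin n) K)) (hmI : mI = Ideal.span (Set.range X))
    -- `E*(G)`: edges not on the cycle and not leaves
    (Estar : Set (Sym2 (Fin n)))
    (hEstar : Estar = {e | e ∈ G.edgeSet ∧ e ∉ c.edges ∧ ¬ IsLeafEdge G e})
    (m : ℕ) (hm : 1 ≤ m) (du : Fin n →₀ ℕ) :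
    (monomial du (1 : K) ∈ (I ^ m).colon mI ∧ monomial du (1 : K) ∉ I ^ m) ↔
      ∃ (E₁ : Finset (Sym2 (Fin n))) (me : Sym2 (Fin n) → ℕ),
        ↑E₁ ⊆ G.edgeSet ∧ Estar ⊆ ↑E₁ ∧ (∀ e ∈ E₁, 1 ≤ me e) ∧
        k + 1 ≤ m ∧ (∑ e ∈ E₁, me e) = m - (k + 1) ∧
        monomial du (1 : K) =
          (c.support.tail.map X).prod * ∏ e ∈ E₁, edgeMon K e ^ me e := by
  classical
  have hL : (monomial du (1 : K) ∈ (I ^ m).colon mI ∧ monomial du (1 : K) ∉ I ^ m) ↔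
      (¬ Soc.PM G (fun x => (du x : ℤ)) m ∧
        ∀ i, Soc.PM G ((fun x => (du x : ℤ)) + Soc.δ i) m) := by
    rw [hmI, Ideal.colon_span, Submodule.mem_colon, hI, Soc.mem_pow, and_comm]
    refine and_congr Iff.rfl ?_
    rw [Set.forall_mem_range]
    refine forall_congr' fun i => ?_
    have h1 : monomial du (1 : K) • (X i : MvPolynomial (Fin n) K) =
        monomial (du + Finsupp.single i 1) 1 := by
      simp [X, monomial_mul]
    have h2 : (fun x => (((du + Finsupp.single i 1 : Fin n →₀ ℕ) x : ℕ) : ℤ)) =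
        (fun x => (du x : ℤ)) + Soc.δ i := by
      funext x
      simp only [Finsupp.add_apply, Pi.add_apply, Finsupp.single_apply, Pi.single_apply, eq_comm]
      push_cast
      rfl
    rw [h1, Soc.mem_pow, h2]
  rw [hL, Soc.core hconn k c hc hlen huniq (fun x => Int.natCast_nonneg _) (by exact_mod_cast hm)]
  have hmon : ∀ (E₁ : Finset (Sym2 (Fin n))) (me : Sym2 (Fin n) → ℕ), ↑E₁ ⊆ G.edgeSet →
      (monomial du (1 : K) = (c.support.tail.map X).prod * ∏ e ∈ E₁, edgeMon K e ^ me e ↔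
      (fun x => (du x : ℤ)) = Soc.sv c.support.tail +
        Soc.D G ℤ (fun e => if e.1 ∈ E₁ then (me e.1 : ℤ) else 0)) := by
    intro E₁ me hE
    rw [list_prod_X, prod_edgeMon, monomial_mul, one_mul, monomial_left_inj one_ne_zero,
      DFunLike.ext_iff, funext_iff]
    refine forall_congr' fun x => ?_
    have h3 : ((∑ e ∈ E₁, me e • edgeExp e : Fin n →₀ ℕ) x : ℤ) =
        Soc.D G ℤ (fun e => if e.1 ∈ E₁ then (me e.1 : ℤ) else 0) x := by
      rw [Soc.D_apply, Finsupp.finsetSum_apply, Nat.cast_sum]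
      rw [← Finset.sum_subtype_of_mem (p := fun e => e ∈ G.edgeSet)
        (fun e => (((me e • edgeExp e) x : ℕ) : ℤ)) (fun e he => hE he)]
      have h5 : Finset.subtype (fun e => e ∈ G.edgeSet) E₁ =
          Finset.univ.filter (fun e : G.edgeSet => e.1 ∈ E₁) := by
        ext e; simp
      rw [h5, Finset.sum_filter]
      refine Finset.sum_congr rfl fun e _ => ?_
      rw [Finsupp.smul_apply, edgeExp_apply e.1 e.2]
      by_cases h6 : e.1 ∈ E₁ <;> by_cases h7 : x ∈ e.1 <;> simp [h6, h7]
    rw [Pi.add_apply, ← h3, ← listSum_apply, Finsupp.add_apply]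
    norm_cast
  have hsumE : ∀ (E₁ : Finset (Sym2 (Fin n))) (me : Sym2 (Fin n) → ℕ), ↑E₁ ⊆ G.edgeSet →
      ∑ e : G.edgeSet, (if e.1 ∈ E₁ then (me e.1 : ℤ) else 0) = ((∑ e ∈ E₁, me e : ℕ) : ℤ) := by
    intro E₁ me hE
    push_cast
    rw [← Finset.sum_subtype_of_mem (p := fun e => e ∈ G.edgeSet)
        (fun e => (me e : ℤ)) (fun e he => hE he)]
    have h5 : Finset.subtype (fun e => e ∈ G.edgeSet) E₁ =
        Finset.univ.filter (fun e : G.edgeSet => e.1 ∈ E₁) := by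
      ext e; simp
    rw [h5, Finset.sum_filter]
  constructor
  · rintro ⟨f, h0, h1, h2, h3⟩
    let me : Sym2 (Fin n) → ℕ := fun e => if he : e ∈ G.edgeSet then (f ⟨e, he⟩).toNat else 0
    let E₁ : Finset (Sym2 (Fin n)) := Finset.univ.filter (fun e => 1 ≤ me e)
    have hE : (↑E₁ : Set (Sym2 (Fin n))) ⊆ G.edgeSet := by
      intro e he
      by_contra hcon
      simp [E₁, me, hcon] at he
    have hfe : (fun e : G.edgeSet => if e.1 ∈ E₁ then (me e.1 : ℤ) else 0) = f := by
      funext e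
      have h5 : (me e.1 : ℤ) = f e := by
        have := h0 e
        simp only [me, e.2, dif_pos]
        simpa using this
      by_cases h6 : e.1 ∈ E₁
      · rw [if_pos h6, h5]
      · rw [if_neg h6]
        simp only [E₁, Finset.mem_filter, Finset.mem_univ, true_and] at h6
        omega
    have hs := hsumE E₁ me hE
    have hs' : ∑ e : G.edgeSet, (if e.1 ∈ E₁ then (me e.1 : ℤ) else 0) = ∑ e, f e :=
      Finset.sum_congr rfl fun e _ => congrFun hfe e
    rw [hs', h2] at hs
    refine ⟨E₁, me, hE, ?_, ?_, by omega, by omega, ?_⟩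
    · rw [hEstar]
      rintro e ⟨he, hec, hl⟩
      have := h1 ⟨e, he⟩ hec hl
      simp only [E₁, Finset.coe_filter, Finset.mem_univ, true_and, Set.mem_ofPred_eq, me, he, dif_pos]
      omega
    · intro e he
      simpa [E₁] using he
    · rw [hmon E₁ me hE, hfe]; exact h3
  · rintro ⟨E₁, me, hE, hst, hpos, hk, hsum, heq⟩
    refine ⟨fun e => if e.1 ∈ E₁ then (me e.1 : ℤ) else 0, ?_, ?_, ?_, (hmon E₁ me hE).1 heq⟩
    · intro e
      show (0 : ℤ) ≤ if e.1 ∈ E₁ then (me e.1 : ℤ) else 0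
      split_ifs
      · exact Int.natCast_nonneg _
      · rfl
    · intro e hec hl
      have hmem : e.1 ∈ E₁ := by
        have : e.1 ∈ Estar := by rw [hEstar]; exact ⟨e.2, hec, hl⟩
        exact hst this
      show (1 : ℤ) ≤ if e.1 ∈ E₁ then (me e.1 : ℤ) else 0
      rw [if_pos hmem]
      exact_mod_cast hpos _ hmem
    · rw [hsumE E₁ me hE, hsum]
      omega
end

section
/- Let I be the basic PLP-polymatroidal ideal of type (0, b | α, β) in S = K[x₁,…,x_n]. Then there exists an integer m ≥ 1 with (Iᵐ : 𝔪) ≠ Iᵐ (equivalently, Soc*(I) ≠ 0, equivalently the analytic spread of I equals n) if and only if all of the following inequalities hold: b_i ≥ 1 for i = 1,…,n; α_i ≤ β_i − 1 for i = 2,…,n−1; and β_i + b_{i+1} + ⋯ + b_j > α_j for all 1 ≤ i < j ≤ n. -/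
open MvPolynomial

lemma PLP_Cmono (C : ℕ → ℕ) (N : ℕ) (hC : ∀ k, k < N → C k ≤ C (k+1)) :
    ∀ k l, k ≤ l → l ≤ N → C k ≤ C l := by
  intro k l hkl
  induction l, hkl using Nat.le_induction with
  | base => intro _; exact le_rfl
  | succ l _ ih => intro hl; exact (ih (by omega)).trans (hC l (by omega))

lemma PLP_prefix (a B C : ℕ → ℕ) (N : ℕ) (ha : ∀ k, k < N → a k ≤ a (k+1))
    (ha0 : a 0 = 0) (hB0 : B 0 = 0) (hC : ∀ k, k < N → C k ≤ C (k+1))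
    (h : ∀ k l, k ≤ l → l ≤ N → a l + C k ≤ B k + C l) :
    ∀ j, j ≤ N → ∀ x, a j ≤ x → (∀ k, k ≤ j → x + C k ≤ B k + C j) →
      ∃ s : ℕ → ℕ, s j = x ∧ (∀ k, k ≤ j → a k ≤ s k ∧ s k ≤ B k) ∧
        (∀ k, k < j → s k ≤ s (k+1) ∧ s (k+1) + C k ≤ s k + C (k+1)) := by
  intro j
  induction j with
  | zero =>
    intro _ x hx hk
    have := hk 0 le_rfl
    refine ⟨fun _ => x, rfl, ?_, by omega⟩
    intro k hk
    obtain rfl : k = 0 := by omega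
    refine ⟨hx, ?_⟩
    show x ≤ B 0
    omega
  | succ j ih =>
    intro hj x hx hk
    have h1 := ha j (by omega)
    have h2 := hC j (by omega)
    obtain ⟨s, hs, hs1, hs2⟩ := ih (by omega) (max (a j) (x + C j - C (j+1))) (by omega) (by
      intro k hkj
      have := hk k (by omega)
      have := h k j hkj (by omega)
      have := PLP_Cmono C N hC k j hkj (by omega)
      omega)
    refine ⟨fun k => if k ≤ j then s k else x, by simp, ?_, ?_⟩
    · intro k hkj
      by_cases hkk : k ≤ j
      · simpa [hkk] using hs1 k hkk
      · obtain rfl : k = j + 1 := by omega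
        have := hk (j+1) le_rfl
        simp only [hkk, if_false]
        omega
    · intro k hkj
      by_cases hkk : k < j
      · simpa [hkk.le, Nat.succ_le_of_lt hkk] using hs2 k hkk
      · obtain rfl : k = j := by omega
        simp only [le_refl, if_true, Nat.not_succ_le_self, if_false, hs]
        omega

lemma PLP_suffix (a B C : ℕ → ℕ) (N : ℕ) (hB : ∀ k, k < N → B k ≤ B (k+1))
    (hC : ∀ k, k < N → C k ≤ C (k+1))
    (h : ∀ k l, k ≤ l → l ≤ N → a l + C k ≤ B k + C l) :
    ∀ t j, j + t = N → ∀ x, x ≤ B j → (∀ l, j ≤ l → l ≤ N → a l + C j ≤ x + C l) →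
      ∃ s : ℕ → ℕ, s j = x ∧ (∀ k, j ≤ k → k ≤ N → a k ≤ s k ∧ s k ≤ B k) ∧
        (∀ k, j ≤ k → k < N → s k ≤ s (k+1) ∧ s (k+1) + C k ≤ s k + C (k+1)) := by
  intro t
  induction t with
  | zero =>
    intro j hj x hx hl
    refine ⟨fun _ => x, rfl, ?_, by omega⟩
    intro k hk hk'
    obtain rfl : k = j := by omega
    have := hl k le_rfl hk'
    refine ⟨?_, hx⟩
    show a k ≤ x
    omega
  | succ t ih =>
    intro j hj x hx hl
    have h1 := hB j (by omega)
    have h2 := hC j (by omega)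
    obtain ⟨s, hs, hs1, hs2⟩ := ih (j+1) (by omega) (min (B (j+1)) (x + C (j+1) - C j)) (by omega) (by
      intro l hl1 hl2
      have := hl l (by omega) hl2
      have := h (j+1) l hl1 hl2
      omega)
    refine ⟨fun k => if j + 1 ≤ k then s k else x, by simp, ?_, ?_⟩
    · intro k hkj hkN
      by_cases hkk : j + 1 ≤ k
      · simpa [hkk] using hs1 k hkk hkN
      · obtain rfl : k = j := by omega
        have := hl k le_rfl hkN
        simp only [hkk, if_false]
        omega
    · intro k hkj hkN
      by_cases hkk : j + 1 ≤ k
      · simpa [hkk, Nat.le_succ_of_le hkk, (by omega : j ≤ k)] using hs2 k hkk hkN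
      · obtain rfl : k = j := by omega
        simp only [hkk, le_refl, if_true, if_false, hs]
        omega

lemma PLP_path (a B C : ℕ → ℕ) (N : ℕ) (ha : ∀ k, k < N → a k ≤ a (k+1))
    (hB : ∀ k, k < N → B k ≤ B (k+1))
    (ha0 : a 0 = 0) (hB0 : B 0 = 0) (hC : ∀ k, k < N → C k < C (k+1))
    (h1 : ∀ k, k ≤ N → a k ≤ B k)
    (h2 : ∀ k, 1 ≤ k → k < N → a k < B k)
    (h3 : ∀ k l, k < l → l ≤ N → a l + C k < B k + C l) (i : ℕ) (hi : i + 1 < N) :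
    ∃ s : ℕ → ℕ, s 0 = 0 ∧ (∀ k, k ≤ N → a k ≤ s k ∧ s k ≤ B k) ∧
        (∀ k, k < N → s k ≤ s (k+1) ∧ s (k+1) + C k ≤ s k + C (k+1)) ∧
        s (i+1) < B (i+1) ∧ s (i+1) + C i < s i + C (i+1) ∧ s (i+1) < s (i+2) := by
  have h : ∀ k l, k ≤ l → l ≤ N → a l + C k ≤ B k + C l := by
    intro k l hkl hl
    rcases hkl.eq_or_lt with rfl | hlt
    · have := h1 k hl
      omega
    · exact (h3 k l hlt hl).le
  have hC' : ∀ k, k < N → C k ≤ C (k+1) := fun k hk => (hC k hk).le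
  have hst : ∀ k l, k ≤ i + 1 → i + 1 ≤ l → l ≤ N → a l + C k < B k + C l := by
    intro k l hk hl hlN
    by_cases hkl : k < l
    · exact h3 k l hkl hlN
    · obtain rfl : k = l := by omega
      have := h2 k (by omega) (by omega)
      omega
  have hex : ∃ x, ∀ l, i + 1 ≤ l → l ≤ N → a l + C (i+1) ≤ x + C l :=
    ⟨B (i+1), fun l hl hlN => h _ _ hl hlN⟩
  classical
  obtain ⟨x, hx1, hx2⟩ : ∃ x, (∀ l, i + 1 ≤ l → l ≤ N → a l + C (i+1) ≤ x + C l) ∧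
      ∀ k, k ≤ i + 1 → x + C k < B k + C (i+1) := by
    refine ⟨Nat.find hex, Nat.find_spec hex, ?_⟩
    intro k hk
    rcases Nat.eq_zero_or_pos (Nat.find hex) with h0 | hpos
    · rw [h0]
      have := hst k (i+1) hk le_rfl (by omega)
      omega
    · have := Nat.find_min hex (m := Nat.find hex - 1) (by omega)
      push Not at this
      obtain ⟨l, hl1, hl2, hl3⟩ := this
      have := hst k l hk hl1 hl2
      omega
  have e1 := hx1 (i+1) le_rfl (by omega)
  have e2 := hx2 (i+1) le_rfl
  have c1 := hC i (by omega)
  have c2 := hC (i+1) (by omega)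
  have a1 := ha i (by omega)
  have b1 := hB (i+1) (by omega)
  obtain ⟨s, hs, hs1, hs2⟩ := PLP_prefix a B C N ha ha0 hB0 hC' h i (by omega)
    (max (a i) (x + 1 + C i - C (i+1))) (by omega) (by
      intro k hk
      have := h k i hk (by omega)
      have := hx2 k (by omega)
      have := PLP_Cmono C N hC' k i hk (by omega)
      omega)
  obtain ⟨t, ht, ht1, ht2⟩ := PLP_suffix a B C N hB hC' h (N - (i+2)) (i+2) (by omega)
    (min (B (i+2)) (x + C (i+2) - C (i+1))) (by omega) (by
      intro l hl hlN
      have := h (i+2) l hl hlN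
      have := hx1 l (by omega) hlN
      have : C (i+1+1) = C (i+2) := rfl
      omega)
  have r2 : C (i+1+1) = C (i+2) := rfl
  have r3 : B (i+1+1) = B (i+2) := rfl
  refine ⟨fun k => if k ≤ i then s k else if k = i + 1 then x else t k, ?_, ?_, ?_, ?_⟩
  · have := hs1 0 (by omega)
    simp
    omega
  · intro k hk
    by_cases q1 : k ≤ i
    · simpa [q1] using hs1 k q1
    · by_cases q2 : k = i + 1
      · subst q2
        simp only [q1, if_false, if_true]
        omega
      · simpa [q1, q2] using ht1 k (by omega) hk
  · intro k hk
    by_cases q1 : k < i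
    · simpa [q1.le, Nat.succ_le_of_lt q1] using hs2 k q1
    · by_cases q2 : k = i
      · subst q2
        simp [hs]
        omega
      · by_cases q3 : k = i + 1
        · subst q3
          simp [ht]
          omega
        · have := ht2 k (by omega) hk
          simp only [if_neg (by omega : ¬ k ≤ i), if_neg (by omega : ¬ k + 1 ≤ i), if_neg q3,
            if_neg (by omega : ¬ k + 1 = i + 1)]
          exact this
  · simp [hs, ht]
    omega


/-- `m`-fold sums of elements of `P`. -/
def PLPQ {n : ℕ} (P : Set (Fin n →₀ ℕ)) : ℕ → Set (Fin n →₀ ℕ)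
  | 0 => {0}
  | m + 1 => {w | ∃ q ∈ PLPQ P m, ∃ u ∈ P, w = q + u}

lemma PLP_pow {K : Type*} [Field K] {n : ℕ} (P : Set (Fin n →₀ ℕ)) (m : ℕ) :
    (Ideal.span ((fun s => monomial s (1 : K)) '' P)) ^ m =
      Ideal.span ((fun s => monomial s (1 : K)) '' PLPQ P m) := by
  induction m with
  | zero => simp [PLPQ, Ideal.one_eq_top]
  | succ m ih =>
    rw [pow_succ, ih, Ideal.span_mul_span']
    congr 1
    ext f
    simp only [PLPQ, Set.mem_mul, Set.mem_image]
    constructor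
    · rintro ⟨_, ⟨q, hq, rfl⟩, _, ⟨u, hu, rfl⟩, rfl⟩
      exact ⟨q + u, ⟨q, hq, u, hu, rfl⟩, by simp [monomial_mul]⟩
    · rintro ⟨_, ⟨q, hq, u, hu, rfl⟩, rfl⟩
      exact ⟨_, ⟨q, hq, rfl⟩, _, ⟨u, hu, rfl⟩, by simp [monomial_mul]⟩

lemma PLP_socle {K : Type*} [Field K] {n : ℕ} (Q : Set (Fin n →₀ ℕ)) :
    (Ideal.span ((fun s => monomial s (1 : K)) '' Q)).colon
        (Ideal.span (Set.range (X : Fin n → MvPolynomial (Fin n) K)) : Set _) ≠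
      Ideal.span ((fun s => monomial s (1 : K)) '' Q) ↔
    ∃ v : Fin n →₀ ℕ, (¬ ∃ w ∈ Q, w ≤ v) ∧ ∀ i, ∃ w ∈ Q, w ≤ v + Finsupp.single i 1 := by
  set J := Ideal.span ((fun s => monomial s (1 : K)) '' Q) with hJ
  have hmem : ∀ f : MvPolynomial (Fin n) K,
      f ∈ J.colon (Ideal.span (Set.range (X : Fin n → MvPolynomial (Fin n) K)) : Set _) ↔
        ∀ i, f * X i ∈ J := by
    intro f
    rw [Submodule.mem_colon]
    constructor
    · intro h i
      exact h _ (Ideal.subset_span ⟨i, rfl⟩)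
    · intro h g hg
      have hg' : g ∈ Ideal.span (Set.range (X : Fin n → MvPolynomial (Fin n) K)) := hg
      clear hg
      induction hg' using Submodule.span_induction with
      | mem x hx => obtain ⟨i, rfl⟩ := hx; exact h i
      | zero => simp
      | add x y _ _ hx hy => rw [smul_add]; exact J.add_mem hx hy
      | smul c x _ hx =>
        rw [smul_comm]
        exact J.smul_mem c hx
  constructor
  · intro hne
    by_contra hcon
    push Not at hcon
    apply hne
    refine le_antisymm ?_ ?_
    · intro f hf
      rw [hmem] at hf
      rw [hJ, mem_ideal_span_monomial_image]
      intro v hv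
      by_contra hv'
      obtain ⟨i, hi⟩ := hcon v (by push Not at hv'; exact hv')
      have := hf i
      rw [hJ, mem_ideal_span_monomial_image] at this
      obtain ⟨w, hw, hwv⟩ := this (v + Finsupp.single i 1) (by
        rw [mem_support_iff, coeff_mul_X]
        exact mem_support_iff.mp hv)
      exact hi w hw hwv
    · intro f hf
      rw [hmem]
      intro i
      exact J.mul_mem_right _ hf
  · rintro ⟨v, hv, hv'⟩ heq
    apply hv
    have h1 : monomial v (1 : K) ∈ J := by
      rw [← heq, hmem]
      intro i
      rw [hJ, X, monomial_mul, mem_ideal_span_monomial_image]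
      intro x hx
      have := support_monomial_subset hx
      rw [Finset.mem_singleton] at this
      rw [this]
      exact hv' i
    rw [hJ, mem_ideal_span_monomial_image] at h1
    exact h1 v (by simp [mem_support_iff])

lemma PLP_sum_mem {n : ℕ} (P : Set (Fin n →₀ ℕ)) (f : ℕ → (Fin n →₀ ℕ)) (m : ℕ)
    (h : ∀ k < m, f k ∈ P) : ∑ k ∈ Finset.range m, f k ∈ PLPQ P m := by
  induction m with
  | zero => simp [PLPQ]
  | succ m ih =>
    rw [Finset.sum_range_succ]
    exact ⟨_, ih (fun k hk => h k (by omega)), _, h m (by omega), rfl⟩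

lemma PLP_Q_deg {n : ℕ} (P : Set (Fin n →₀ ℕ)) (d m : ℕ) (h : ∀ u ∈ P, ∑ i, u i = d) :
    ∀ w ∈ PLPQ P m, ∑ i, w i = m * d := by
  induction m with
  | zero => intro w hw; obtain rfl : w = 0 := hw; simp
  | succ m ih =>
    rintro w ⟨q, hq, u, hu, rfl⟩
    simp only [Finsupp.add_apply, Finset.sum_add_distrib, ih q hq, h u hu]
    ring

/-- The chain argument: adjacent exchanges give a socle element. -/
lemma PLP_chain {N : ℕ} (P : Set (Fin (N+1) →₀ ℕ)) (d : ℕ) (hN : 1 ≤ N)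
    (hdeg : ∀ u ∈ P, ∑ i, u i = d)
    (hex : ∀ i : ℕ, ∀ hi : i < N, ∃ p ∈ P, ∃ q ∈ P,
      p + Finsupp.single (⟨i+1, by omega⟩ : Fin (N+1)) 1 =
        q + Finsupp.single (⟨i, by omega⟩ : Fin (N+1)) 1) :
    ∃ v : Fin (N+1) →₀ ℕ, (¬ ∃ w ∈ PLPQ P N, w ≤ v) ∧
      ∀ i, ∃ w ∈ PLPQ P N, w ≤ v + Finsupp.single i 1 := by
  choose! p hp q hq hpq using hex
  set W : ℕ → (Fin (N+1) →₀ ℕ) := fun j =>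
    ∑ i ∈ Finset.range N, if i < j then q i else p i with hW
  have hWm : ∀ j, W j ∈ PLPQ P N := by
    intro j
    apply PLP_sum_mem
    intro k hk
    split_ifs
    · exact hq k hk
    · exact hp k hk
  have hstep : ∀ j, j < N → W (j+1) + p j = W j + q j := by
    intro j hj
    have hj' : j ∈ Finset.range N := Finset.mem_range.mpr hj
    simp only [hW]
    rw [← Finset.add_sum_erase _ _ hj', ← Finset.add_sum_erase (Finset.range N) _ hj']
    have : ∑ i ∈ (Finset.range N).erase j, (if i < j + 1 then q i else p i) =
        ∑ i ∈ (Finset.range N).erase j, (if i < j then q i else p i) := by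
      apply Finset.sum_congr rfl
      intro i hi
      have : i ≠ j := (Finset.mem_erase.mp hi).1
      have : i < j + 1 ↔ i < j := by omega
      simp only [this]
    rw [this]
    simp only [lt_add_one, if_true, lt_irrefl, if_false]
    abel
  have h0 : Finsupp.single (0 : Fin (N+1)) 1 ≤ W 0 := by
    rw [Finsupp.single_le_iff]
    have h1 : p 0 ≤ W 0 := by
      simp only [hW, not_lt_zero, if_false]
      exact Finset.single_le_sum (f := p) (fun i _ => bot_le) (Finset.mem_range.mpr hN)
    have h2 := DFunLike.congr_fun (hpq 0 hN) (0 : Fin (N+1))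
    have h3 : ((⟨0 + 1, by omega⟩ : Fin (N+1)) = 0) = False := by
      simp [Fin.ext_iff]
    have h4 : (⟨0, by omega⟩ : Fin (N+1)) = 0 := rfl
    simp only [Finsupp.add_apply, Finsupp.single_apply, h3, h4, if_true, if_false] at h2
    have := h1 0
    omega
  obtain ⟨v, hv⟩ := exists_add_of_le h0
  have hWv : ∀ j, ∀ hj : j ≤ N, W j = v + Finsupp.single (⟨j, by omega⟩ : Fin (N+1)) 1 := by
    intro j
    induction j with
    | zero => intro _; exact hv.trans (add_comm _ _)
    | succ j ih =>
      intro hj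
      have e1 := ih (by omega)
      have e2 := hstep j (by omega)
      have e3 := hpq j (by omega)
      rw [e1] at e2
      ext k
      have f2 := DFunLike.congr_fun e2 k
      have f3 := DFunLike.congr_fun e3 k
      simp only [Finsupp.add_apply] at f2 f3 ⊢
      omega
  refine ⟨v, ?_, ?_⟩
  · rintro ⟨w, hw, hwv⟩
    have d1 := PLP_Q_deg P d N hdeg w hw
    have d2 := PLP_Q_deg P d N hdeg _ (hWm 0)
    rw [hv] at d2
    simp only [Finsupp.add_apply, Finset.sum_add_distrib] at d2
    have d3 : ∑ i, w i ≤ ∑ i, v i := Finset.sum_le_sum (fun i _ => hwv i)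
    have d4 : ∑ i, (Finsupp.single (0 : Fin (N+1)) 1) i = 1 := by
      simp [Finsupp.single_apply]
    omega
  · intro i
    exact ⟨W i, hWm i, (hWv i (by omega)).le⟩

/-- extension of a function by a constant -/
def PLPext {n : ℕ} (f : Fin n → ℕ) (c : ℕ) (k : ℕ) : ℕ := if h : k < n then f ⟨k, h⟩ else c

lemma PLP_sum_Iic {n : ℕ} (f : Fin n → ℕ) (i : Fin n) :
    ∑ j ∈ Finset.Iic i, f j = ∑ k ∈ Finset.range (i+1), PLPext f 0 k := by
  refine Finset.sum_bij (fun x _ => x.val) ?_ ?_ ?_ ?_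
  · intro a ha
    have := Finset.mem_Iic.mp ha
    rw [Finset.mem_range]
    omega
  · intro a _ b _ h
    exact Fin.ext h
  · intro k hk
    rw [Finset.mem_range] at hk
    exact ⟨⟨k, by omega⟩, by rw [Finset.mem_Iic, Fin.le_def]; simp; omega, rfl⟩
  · intro a _
    simp [PLPext]

lemma PLP_sum_Ioc {n : ℕ} (f : Fin n → ℕ) (i j : Fin n) (h : i ≤ j) :
    ∑ l ∈ Finset.Iic j, f l = ∑ l ∈ Finset.Iic i, f l + ∑ l ∈ Finset.Ioc i j, f l := by
  rw [← Finset.sum_union]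
  · congr 1
    ext x
    simp only [Finset.mem_union, Finset.mem_Iic, Finset.mem_Ioc]
    omega
  · rw [Finset.disjoint_left]
    intro x hx hx'
    simp only [Finset.mem_Iic, Finset.mem_Ioc] at hx hx'
    omega

/-- The exponent set. -/
def PLPset {n : ℕ} (b α β : Fin n → ℕ) : Set (Fin n →₀ ℕ) :=
  {u | (∀ i, u i ≤ b i) ∧
    ∀ i, α i ≤ ∑ j ∈ Finset.Iic i, u j ∧ ∑ j ∈ Finset.Iic i, u j ≤ β i}

lemma PLP_of_path {n : ℕ} (b α β : Fin n → ℕ) (s : ℕ → ℕ) (h0 : s 0 = 0)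
    (h1 : ∀ k : Fin n, α k ≤ s (k+1) ∧ s (k+1) ≤ β k)
    (h2 : ∀ k : Fin n, s k ≤ s (k+1) ∧ s (k+1) ≤ s k + b k) :
    Finsupp.equivFunOnFinite.symm (fun k : Fin n => s (k+1) - s k) ∈ PLPset b α β := by
  have hs : ∀ i : Fin n, ∑ j ∈ Finset.Iic i, (s (j+1) - s j) = s (i+1) := by
    intro i
    rw [PLP_sum_Iic (fun j : Fin n => s (j+1) - s j)]
    have : ∀ k, k ≤ n → ∑ l ∈ Finset.range k,
        PLPext (fun j : Fin n => s (j+1) - s j) 0 l = s k := by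
      intro k
      induction k with
      | zero => intro _; simp [h0]
      | succ k ih =>
        intro hk
        have := (h2 ⟨k, by omega⟩).1
        rw [Finset.sum_range_succ, ih (by omega), PLPext, dif_pos (by omega)]
        simp only at this ⊢
        omega
    exact this _ (by omega)
  refine ⟨?_, ?_⟩
  · intro i
    have := h2 i
    simp
    omega
  · intro i
    simp only [Finsupp.equivFunOnFinite_symm_apply_apply, hs]
    exact h1 i

lemma PLP_mpr {N : ℕ} (hN : 1 ≤ N) (d : ℕ) (b α β : Fin (N+1) → ℕ)
    (hαmono : Monotone α) (hβmono : Monotone β)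
    (hαlast : α (Fin.last N) = d) (hβlast : β (Fin.last N) = d)
    (hαβ : ∀ i, α i ≤ β i) (hα1 : α 0 = 0) (hβ1 : β 0 = b 0)
    (c1 : ∀ i, 1 ≤ b i)
    (c2 : ∀ i : Fin (N+1), 1 ≤ (i : ℕ) → (i : ℕ) + 1 < N + 1 → α i + 1 ≤ β i)
    (c3 : ∀ i j : Fin (N+1), i < j → α j < β i + ∑ l ∈ Finset.Ioc i j, b l) :
    ∃ v : Fin (N+1) →₀ ℕ, (¬ ∃ w ∈ PLPQ (PLPset b α β) N, w ≤ v) ∧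
      ∀ i, ∃ w ∈ PLPQ (PLPset b α β) N, w ≤ v + Finsupp.single i 1 := by
  apply PLP_chain _ d hN
  · intro u hu
    have := hu.2 (Fin.last N)
    have h : (Finset.Iic (Fin.last N)) = Finset.univ := by
      ext x; simp [Fin.le_last]
    rw [h] at this
    omega
  intro i hi
  set A : ℕ → ℕ := fun k => if k = 0 then 0 else PLPext α 0 (k-1) with hA
  set B : ℕ → ℕ := fun k => if k = 0 then 0 else PLPext β 0 (k-1) with hB
  set C : ℕ → ℕ := fun k => ∑ l ∈ Finset.range k, PLPext b 0 l with hC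
  have A0 : A 0 = 0 := rfl
  have B0 : B 0 = 0 := rfl
  have C0 : C 0 = 0 := rfl
  have AS : ∀ k (hk : k < N + 1), A (k+1) = α ⟨k, hk⟩ := by
    intro k hk; simp [hA, PLPext, Nat.lt_succ_iff.mp hk]
  have BS : ∀ k (hk : k < N + 1), B (k+1) = β ⟨k, hk⟩ := by
    intro k hk; simp [hB, PLPext, Nat.lt_succ_iff.mp hk]
  have CS : ∀ k (hk : k < N + 1), C (k+1) = C k + b ⟨k, hk⟩ := by
    intro k hk
    simp [hC, Finset.sum_range_succ, PLPext, Nat.lt_succ_iff.mp hk]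
  have CI : ∀ k l (hk : k < N + 1) (hl : l < N + 1), k ≤ l →
      C (l+1) = C (k+1) + ∑ x ∈ Finset.Ioc (⟨k, hk⟩ : Fin (N+1)) ⟨l, hl⟩, b x := by
    intro k l hk hl hkl
    have := PLP_sum_Ioc b ⟨k, hk⟩ ⟨l, hl⟩ hkl
    rw [PLP_sum_Iic, PLP_sum_Iic] at this
    exact this
  have C1 : C 1 = b 0 := by
    have := CS 0 (by omega)
    rw [C0] at this
    exact this.trans (zero_add _)
  obtain ⟨s, s0, s1, s2, s3, s4, s5⟩ := PLP_path A B C (N+1)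
    (by
      intro k hk
      rcases k with _ | k
      · rw [A0]; exact Nat.zero_le _
      · rw [AS k (by omega), AS (k+1) (by omega)]
        exact hαmono (by simp [Fin.le_def]))
    (by
      intro k hk
      rcases k with _ | k
      · rw [B0]; exact Nat.zero_le _
      · rw [BS k (by omega), BS (k+1) (by omega)]
        exact hβmono (by simp [Fin.le_def]))
    A0 B0
    (by
      intro k hk
      have := c1 ⟨k, hk⟩
      rw [CS k hk]; omega)
    (by
      intro k hk
      rcases k with _ | k
      · rw [A0]; exact Nat.zero_le _
      · rw [AS k (by omega), BS k (by omega)]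
        exact hαβ _)
    (by
      intro k hk hk'
      rcases k with _ | k
      · omega
      · rw [AS k (by omega), BS k (by omega)]
        rcases k with _ | k
        · have := c1 0
          show α 0 < β 0
          omega
        · exact c2 ⟨k+1, by omega⟩ (by simp) (by simpa using hk'))
    (by
      intro k l hkl hl
      obtain ⟨l, rfl⟩ : ∃ l', l = l' + 1 := ⟨l - 1, by omega⟩
      rw [AS l (by omega)]
      rcases k with _ | k
      · rw [B0, C0]
        rcases l with _ | l
        · have := c1 0
          show α 0 + 0 < 0 + C 1
          omega
        · have := c3 0 ⟨l+1, by omega⟩ (by simp [Fin.lt_def])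
          have e := CI 0 (l+1) (by omega) (by omega) (by omega)
          have e' : (⟨0, by omega⟩ : Fin (N+1)) = 0 := rfl
          rw [e'] at e
          simp only [zero_add] at e
          omega
      · rw [BS k (by omega)]
        have := c3 ⟨k, by omega⟩ ⟨l, by omega⟩ (by simp [Fin.lt_def]; omega)
        have := CI k l (by omega) (by omega) (by omega)
        omega) i (by omega)
  have s2' : ∀ k : Fin (N+1), s k ≤ s (k+1) ∧ s (k+1) ≤ s k + b k := by
    intro k
    have := s2 k k.2
    have := CS k k.2
    simp only [Fin.eta] at this
    omega
  have s1' : ∀ k : Fin (N+1), α k ≤ s (k+1) ∧ s (k+1) ≤ β k := by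
    intro k
    have := s1 (k+1) (by omega)
    rw [AS k k.2, BS k k.2] at this
    exact this
  refine ⟨_, PLP_of_path b α β (fun k => if k = i + 1 then s k + 1 else s k) ?_ ?_ ?_,
    _, PLP_of_path b α β s s0 s1' s2', ?_⟩
  · simp [s0]
  · intro k
    have := s1' k
    by_cases hk : (k : ℕ) = i
    · have e := BS i (by omega)
      have e' : (⟨i, by omega⟩ : Fin (N+1)) = k := Fin.ext hk.symm
      rw [e'] at e
      simp only [hk, if_true] at this ⊢
      omega
    · simpa [hk] using this
  · intro k
    have := s2' k
    by_cases hk : (k : ℕ) = i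
    · have e := CS i (by omega)
      have e' : (⟨i, by omega⟩ : Fin (N+1)) = k := Fin.ext hk.symm
      rw [e'] at e
      simp only [hk, if_true] at this ⊢
      rw [if_neg (by omega)]
      omega
    · by_cases hk' : (k : ℕ) = i + 1
      · simp only [hk', if_true] at this ⊢
        have : s (i+1+1) = s (i+2) := rfl
        rw [if_neg (by omega)]
        omega
      · simpa [hk, hk'] using this
  · ext k
    have := s2' k
    simp only [Finsupp.add_apply, Finsupp.equivFunOnFinite_symm_apply_apply,
      Finsupp.single_apply, Fin.ext_iff]
    have : s (i+1+1) = s (i+2) := rfl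
    by_cases hk : (k : ℕ) = i
    · simp only [hk] at this ⊢
      simp
      have := (s2 i (by omega)).1
      omega
    · by_cases hk' : (k : ℕ) = i + 1
      · simp only [hk']
        simp
        have r1 : s (i+1+1) = s (i+2) := rfl
        omega
      · simp [hk, hk', Ne.symm hk, Ne.symm hk']

lemma PLP_Q_le {n : ℕ} (P : Set (Fin n →₀ ℕ)) (i : Fin n) (c m : ℕ) (h : ∀ u ∈ P, u i ≤ c) :
    ∀ w ∈ PLPQ P m, w i ≤ m * c := by
  induction m with
  | zero => intro w hw; obtain rfl : w = 0 := hw; simp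
  | succ m ih =>
    rintro w ⟨q, hq, u, hu, rfl⟩
    have := ih q hq
    have := h u hu
    rw [Finsupp.add_apply, Nat.succ_mul]
    omega

lemma PLP_Q_ge {n : ℕ} (P : Set (Fin n →₀ ℕ)) (i : Fin n) (c m : ℕ) (h : ∀ u ∈ P, c ≤ u i) :
    ∀ w ∈ PLPQ P m, m * c ≤ w i := by
  induction m with
  | zero => intro w hw; simp
  | succ m ih =>
    rintro w ⟨q, hq, u, hu, rfl⟩
    have := ih q hq
    have := h u hu
    rw [Finsupp.add_apply, Nat.succ_mul]
    omega

/-- Mixing two exponent vectors at a cut `i`. -/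
noncomputable def PLPmix {n : ℕ} (i : Fin n) (u u' : Fin n →₀ ℕ) : Fin n →₀ ℕ :=
  Finsupp.equivFunOnFinite.symm (fun k => if k ≤ i then u k else u' k)

lemma PLP_Q_mix {n : ℕ} (P : Set (Fin n →₀ ℕ)) (i : Fin n) (m : ℕ)
    (h : ∀ u ∈ P, ∀ u' ∈ P, PLPmix i u u' ∈ P) :
    ∀ w ∈ PLPQ P m, ∀ w' ∈ PLPQ P m, PLPmix i w w' ∈ PLPQ P m := by
  induction m with
  | zero =>
    intro w hw w' hw'
    obtain rfl : w = 0 := hw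
    obtain rfl : w' = 0 := hw'
    show _ = _
    ext k
    simp [PLPmix]
  | succ m ih =>
    rintro w ⟨q, hq, u, hu, rfl⟩ w' ⟨q', hq', u', hu', rfl⟩
    refine ⟨_, ih q hq q' hq', _, h u hu u' hu', ?_⟩
    ext k
    simp only [PLPmix, Finsupp.add_apply, Finsupp.equivFunOnFinite_symm_apply_apply]
    split_ifs <;> rfl

lemma PLP_mix_mem {n : ℕ} (b α β : Fin n → ℕ) (i : Fin n) (hi : β i ≤ α i) :
    ∀ u ∈ PLPset b α β, ∀ u' ∈ PLPset b α β, PLPmix i u u' ∈ PLPset b α β := by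
  intro u hu u' hu'
  have hle : ∀ k, k ≤ i → ∑ j ∈ Finset.Iic k, PLPmix i u u' j = ∑ j ∈ Finset.Iic k, u j := by
    intro k hk
    apply Finset.sum_congr rfl
    intro j hj
    have := (Finset.mem_Iic.mp hj).trans hk
    simp [PLPmix, this]
  refine ⟨?_, ?_⟩
  · intro k
    have := hu.1 k
    have := hu'.1 k
    simp only [PLPmix, Finsupp.equivFunOnFinite_symm_apply_apply]
    split_ifs <;> assumption
  · intro k
    by_cases hk : k ≤ i
    · rw [hle k hk]
      exact hu.2 k
    · have hik : i ≤ k := le_of_not_ge hk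
      have e1 := PLP_sum_Ioc (PLPmix i u u') i k hik
      have e2 := PLP_sum_Ioc u' i k hik
      have e3 : ∑ j ∈ Finset.Ioc i k, PLPmix i u u' j = ∑ j ∈ Finset.Ioc i k, u' j := by
        apply Finset.sum_congr rfl
        intro j hj
        have := not_le_of_gt (Finset.mem_Ioc.mp hj).1
        simp [PLPmix, this]
      have e4 := hle i le_rfl
      have := hu.2 i
      have := hu'.2 i
      have := hu'.2 k
      omega

lemma PLP_mp {N : ℕ} (hN : 1 ≤ N) (b α β : Fin (N+1) → ℕ) (m : ℕ)
    (v : Fin (N+1) →₀ ℕ) (hv : ¬ ∃ w ∈ PLPQ (PLPset b α β) m, w ≤ v)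
    (hv' : ∀ i, ∃ w ∈ PLPQ (PLPset b α β) m, w ≤ v + Finsupp.single i 1) :
    (∀ i, 1 ≤ b i) ∧
    (∀ i : Fin (N+1), 1 ≤ (i : ℕ) → (i : ℕ) + 1 < N + 1 → α i + 1 ≤ β i) ∧
    (∀ i j : Fin (N+1), i < j → α j < β i + ∑ l ∈ Finset.Ioc i j, b l) := by
  choose w hw hwv using hv'
  have hoff : ∀ i k, k ≠ i → w i k ≤ v k := by
    intro i k hk
    have := hwv i k
    simpa [Finsupp.single_apply, hk.symm] using this
  have hdiag : ∀ i, v i + 1 ≤ w i i := by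
    intro i
    by_contra hcon
    apply hv
    refine ⟨w i, hw i, ?_⟩
    intro k
    by_cases hk : k = i
    · subst hk; omega
    · exact hoff i k hk
  have hub : ∀ i, w i i ≤ m * b i := fun i => PLP_Q_le _ i (b i) m (fun u hu => hu.1 i) _ (hw i)
  refine ⟨?_, ?_, ?_⟩
  · intro i
    have h1 := hdiag i
    have h2 := hub i
    by_contra hcon
    have : b i = 0 := by omega
    rw [this] at h2
    omega
  · intro i hi hi'
    by_contra hcon
    apply hv
    refine ⟨_, PLP_Q_mix _ i m (PLP_mix_mem b α β i (by omega)) _ (hw (Fin.last N)) _ (hw 0), ?_⟩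
    intro k
    simp only [PLPmix, Finsupp.equivFunOnFinite_symm_apply_apply]
    split_ifs with hk
    · apply hoff
      rintro rfl
      rw [Fin.le_def, Fin.val_last] at hk
      omega
    · apply hoff
      rintro rfl
      exact hk (Fin.zero_le _)
  · intro i j hij
    by_contra hcon
    have hge : ∀ u ∈ PLPset b α β, b j ≤ u j := by
      intro u hu
      have h1 := hu.2 i
      have h2 := hu.2 j
      have h3 := PLP_sum_Ioc u i j hij.le
      by_contra hlt
      have h4 : ∑ l ∈ Finset.Ioc i j, u l < ∑ l ∈ Finset.Ioc i j, b l :=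
        Finset.sum_lt_sum (fun l _ => hu.1 l) ⟨j, Finset.mem_Ioc.mpr ⟨hij, le_rfl⟩, by omega⟩
      omega
    have h1 := PLP_Q_ge _ j (b j) m hge _ (hw i)
    have h2 := hoff i j hij.ne'
    have h3 := hdiag j
    have h4 := hub j
    omega



/-- For a basic PLP-polymatroidal ideal `I` of type `(0, b | α, β)`,
`Soc*(I) ≠ 0` (i.e. `(Iᵐ : 𝔪) ≠ Iᵐ` for some `m ≥ 1`, equivalently `ℓ(I) = n`) if and
only if `bᵢ ≥ 1` for all `i`, `αᵢ ≤ βᵢ - 1` for `i = 2,…,n-1`, and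
`βᵢ + b_{i+1} + ⋯ + b_j > α_j` for all `1 ≤ i < j ≤ n`.
(Indices are 1-based in the paper; below `Fin n` is 0-based.) -/
theorem socle_star_nonzero_of_PLP_iff
    {K : Type*} [Field K] {n : ℕ} (hn : 0 < n) (d : ℕ) (hd : 1 ≤ d)
    (b α β : Fin n → ℕ)
    (hαmono : Monotone α) (hβmono : Monotone β)
    (hαlast : α ⟨n - 1, by omega⟩ = d) (hβlast : β ⟨n - 1, by omega⟩ = d)
    (hαβ : ∀ i, α i ≤ β i)
    (hα1 : α ⟨0, hn⟩ = 0) (hβ1 : β ⟨0, hn⟩ = b ⟨0, hn⟩)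
    (I : Ideal (MvPolynomial (Fin n) K))
    (hI : I = Ideal.span {f | ∃ u : Fin n → ℕ, (∀ i, u i ≤ b i) ∧
        (∀ i, α i ≤ ∑ j ∈ Finset.Iic i, u j ∧ ∑ j ∈ Finset.Iic i, u j ≤ β i) ∧
        f = ∏ i, X i ^ u i})
    (mI : Ideal (MvPolynomial (Fin n) K)) (hmI : mI = Ideal.span (Set.range X)) :
    (∃ m : ℕ, 1 ≤ m ∧ (I ^ m).colon mI ≠ I ^ m) ↔
      ((∀ i, 1 ≤ b i) ∧
       (∀ i : Fin n, 1 ≤ (i : ℕ) → (i : ℕ) + 1 < n → α i + 1 ≤ β i) ∧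
       (∀ i j : Fin n, i < j → α j < β i + ∑ l ∈ Finset.Ioc i j, b l)) := by
  obtain ⟨N, rfl⟩ : ∃ N, n = N + 1 := ⟨n - 1, by omega⟩
  have hN : 1 ≤ N := by
    by_contra hcon
    obtain rfl : N = 0 := by omega
    have e : (⟨0 + 1 - 1, by omega⟩ : Fin (0+1)) = ⟨0, hn⟩ := rfl
    rw [e] at hαlast
    omega
  have hIP : I = Ideal.span ((fun s => monomial s (1 : K)) '' PLPset b α β) := by
    rw [hI]
    congr 1
    ext f
    constructor
    · rintro ⟨u, h1, h2, rfl⟩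
      refine ⟨Finsupp.equivFunOnFinite.symm u, ⟨by simpa using h1, by simpa using h2⟩, ?_⟩
      simp [monomial_eq, Finsupp.prod_fintype]
    · rintro ⟨u, ⟨h1, h2⟩, rfl⟩
      refine ⟨u, h1, h2, ?_⟩
      simp [monomial_eq, Finsupp.prod_fintype]
  constructor
  · rintro ⟨m, hm, hne⟩
    rw [hIP, hmI, PLP_pow, PLP_socle] at hne
    obtain ⟨v, hv, hv'⟩ := hne
    exact PLP_mp hN b α β m v hv hv'
  · rintro ⟨c1, c2, c3⟩
    refine ⟨N, hN, ?_⟩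
    rw [hIP, hmI, PLP_pow, PLP_socle]
    exact PLP_mpr hN d b α β hαmono hβmono hαlast hβlast hαβ hα1 hβ1 c1 c2 c3
end

section
/- Let a = (a₁,…,a_n) with a_i ≥ 1 for all i, let d ≥ 1 with a₁ + ⋯ + a_n > d, let I = I_{a,d} ⊆ S = K[x₁,…,x_n] be the corresponding ideal of Veronese type, and let k₀ be the least integer k ≥ 1 such that k(a₁+⋯+a_n − d) ≥ n − 1. Then the following are equivalent: (i) (I^{k+1} : 𝔪) = I^{k+1} + I·(I^k : 𝔪) for every k ≥ k₀ (i.e., Soc*(I) is equi-generated, equivalently Soc(I) is equi-generated); (ii) for every subset A ⊆ {1,…,n} with a(A) := Σ_{i∈A} a_i > d, one has k₀(a(A) − d) ≥ |A| − 1. -/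
open MvPolynomial

lemma vs_interval {n : ℕ} (l h : Fin n → ℕ) (hlh : ∀ i, l i ≤ h i) (m : ℕ)
    (h1 : ∑ i, l i ≤ m) (h2 : m ≤ ∑ i, h i) :
    ∃ u : Fin n → ℕ, (∀ i, l i ≤ u i) ∧ (∀ i, u i ≤ h i) ∧ ∑ i, u i = m := by
  induction m, h1 using Nat.le_induction with
  | base => exact ⟨l, fun i => le_rfl, hlh, rfl⟩
  | succ m hm ih =>
    obtain ⟨u, hu1, hu2, hu3⟩ := ih (by omega)
    obtain ⟨j, hj⟩ : ∃ j, u j < h j := by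
      by_contra! hc
      have : ∑ i, h i ≤ ∑ i, u i := Finset.sum_le_sum fun i _ => hc i
      omega
    refine ⟨fun i => u i + if i = j then 1 else 0, fun i => ?_, fun i => ?_, ?_⟩
    · exact (hu1 i).trans (Nat.le_add_right _ _)
    · by_cases hij : i = j
      · subst hij; simp; omega
      · simp [hij, hu2 i]
    · simp [Finset.sum_add_distrib, hu3]

/-- exponent vectors of generators -/
def vsP {n : ℕ} (c : Fin n → ℕ) (e : ℕ) : Set (Fin n →₀ ℕ) :=
  {u | ∑ i, u i = e ∧ ∀ i, u i ≤ c i}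

lemma vs_split {n : ℕ} (a w : Fin n → ℕ) (d k z : ℕ) (hz1 : z ≤ 1) (hkz : z ≤ k)
    (hz : ∀ i, z ≤ k * a i)
    (hA : ∀ A : Finset (Fin n), d < ∑ i ∈ A, a i →
      z * A.card + k * d ≤ k * ∑ i ∈ A, a i + z)
    (hw : ∀ i, w i + z ≤ (k + 1) * a i) (hs : ∑ i, w i + z = (k + 1) * d) :
    ∃ u v : Fin n → ℕ, (∀ i, u i + v i = w i) ∧ (∀ i, u i ≤ a i) ∧ ∑ i, u i = d ∧
      (∀ i, v i + z ≤ k * a i) ∧ ∑ i, v i + z = k * d := by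
  have hlow : ∑ i, (w i + z - k * a i) ≤ d := by
    set A := Finset.univ.filter (fun i => k * a i < w i + z) with hAdef
    have e1 : ∑ i, (w i + z - k * a i) = ∑ i ∈ A, (w i + z - k * a i) := by
      symm
      apply Finset.sum_subset (Finset.subset_univ _)
      intro i _ hi
      simp [hAdef] at hi
      omega
    have e2 : ∑ i ∈ A, (w i + z - k * a i) + k * ∑ i ∈ A, a i
        = ∑ i ∈ A, w i + z * A.card := by
      have : z * A.card = ∑ i ∈ A, z := by simp [mul_comm]
      rw [this, Finset.mul_sum, ← Finset.sum_add_distrib, ← Finset.sum_add_distrib]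
      apply Finset.sum_congr rfl
      intro i hi
      simp [hAdef] at hi
      omega
    have e3 : ∑ i ∈ A, w i ≤ ∑ i, w i :=
      Finset.sum_le_sum_of_subset (Finset.subset_univ _)
    have e4 : ∑ i ∈ A, (w i + z - k * a i) ≤ ∑ i ∈ A, a i := by
      apply Finset.sum_le_sum
      intro i _
      have := hw i
      rw [add_mul, one_mul] at this
      omega
    rw [e1]
    by_cases hd : d < ∑ i ∈ A, a i
    · have := hA A hd
      rw [add_mul, one_mul] at hs
      omega
    · omega
  have hupp : d ≤ ∑ i, min (a i) (w i) := by
    by_contra! hc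
    set B := Finset.univ.filter (fun i => a i ≤ w i) with hB
    have e1 : ∑ i, w i + z * B.card ≤ ∑ i, min (a i) (w i) + k * ∑ i ∈ B, a i := by
      have h1 : z * B.card = ∑ i, if a i ≤ w i then z else 0 := by
        rw [← Finset.sum_filter]; simp [hB, mul_comm]
      have h2 : k * ∑ i ∈ B, a i = ∑ i, if a i ≤ w i then k * a i else 0 := by
        rw [← Finset.sum_filter, Finset.mul_sum]
      rw [h1, h2, ← Finset.sum_add_distrib, ← Finset.sum_add_distrib]
      apply Finset.sum_le_sum
      intro i _
      have := hw i
      rw [add_mul, one_mul] at this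
      split_ifs <;> omega
    have e2 : ∑ i ∈ B, a i ≤ ∑ i, min (a i) (w i) := by
      calc ∑ i ∈ B, a i = ∑ i ∈ B, min (a i) (w i) := by
            apply Finset.sum_congr rfl
            intro i hi
            simp [hB] at hi
            omega
        _ ≤ _ := Finset.sum_le_sum_of_subset (Finset.subset_univ _)
    have e3 : k * (∑ i ∈ B, a i + 1) ≤ k * d := Nat.mul_le_mul_left _ (by omega)
    rw [add_mul, one_mul] at hs
    rw [mul_add, mul_one] at e3
    omega
  obtain ⟨u, h1, h2, h3⟩ := vs_interval (fun i => w i + z - k * a i)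
    (fun i => min (a i) (w i)) (by
      intro i
      have := hw i
      have := hz i
      rw [add_mul, one_mul] at *
      omega) d hlow hupp
  have h4 : ∀ i, u i + (w i - u i) = w i := fun i => by have := h2 i; omega
  have h5 : ∑ i, u i + ∑ i, (w i - u i) = ∑ i, w i := by
    rw [← Finset.sum_add_distrib]; exact Finset.sum_congr rfl fun i _ => h4 i
  refine ⟨u, fun i => w i - u i, h4, fun i => ?_, h3, fun i => ?_, ?_⟩
  · have := h2 i; omega
  · have := h1 i; have := h2 i; have := hz i; beta_reduce; omega
  · rw [add_mul, one_mul] at hs; beta_reduce; omega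

/-- monomial ideal -/
noncomputable def vsM (K : Type*) [Field K] {n : ℕ} (S : Set (Fin n →₀ ℕ)) :
    Ideal (MvPolynomial (Fin n) K) := Ideal.span ((fun s => monomial s (1 : K)) '' S)

lemma vs_mem {K : Type*} [Field K] {n : ℕ} (S : Set (Fin n →₀ ℕ)) (f : MvPolynomial (Fin n) K) :
    f ∈ vsM K S ↔ ∀ s ∈ f.support, ∃ t ∈ S, t ≤ s := mem_ideal_span_monomial_image

lemma vs_mem_mon {K : Type*} [Field K] {n : ℕ} (S : Set (Fin n →₀ ℕ)) (s : Fin n →₀ ℕ) :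
    monomial s (1 : K) ∈ vsM K S ↔ ∃ t ∈ S, t ≤ s := by
  classical
  rw [vs_mem, support_monomial]; simp

lemma vs_le {K : Type*} [Field K] {n : ℕ} (S T : Set (Fin n →₀ ℕ)) :
    vsM K S ≤ vsM K T ↔ ∀ s ∈ S, ∃ t ∈ T, t ≤ s := by
  rw [vsM, Ideal.span_le]
  constructor
  · intro h s hs
    exact (vs_mem_mon (K := K) T s).1 (h ⟨s, hs, rfl⟩)
  · rintro h _ ⟨s, hs, rfl⟩
    exact (vs_mem_mon T s).2 (h s hs)

lemma vs_sup {K : Type*} [Field K] {n : ℕ} (S T : Set (Fin n →₀ ℕ)) :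
    vsM K S ⊔ vsM K T = vsM K (S ∪ T) := by
  rw [vsM, vsM, vsM, Set.image_union, Ideal.span_union]

open Pointwise in
lemma vs_mul {K : Type*} [Field K] {n : ℕ} (S T : Set (Fin n →₀ ℕ)) :
    vsM K S * vsM K T = vsM K (S + T) := by
  rw [vsM, vsM, vsM, Ideal.span_mul_span']
  congr 1
  ext f
  constructor
  · rintro ⟨_, ⟨s, hs, rfl⟩, _, ⟨t, ht, rfl⟩, rfl⟩
    exact ⟨s + t, Set.add_mem_add hs ht, by simp [monomial_mul]⟩
  · rintro ⟨_, ⟨s, hs, t, ht, rfl⟩, rfl⟩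
    exact ⟨_, ⟨s, hs, rfl⟩, _, ⟨t, ht, rfl⟩, by simp [monomial_mul]⟩

def vsCol {n : ℕ} (S : Set (Fin n →₀ ℕ)) : Set (Fin n →₀ ℕ) :=
  {s | ∀ i, ∃ t ∈ S, t ≤ s + Finsupp.single i 1}

lemma vs_colon {K : Type*} [Field K] {n : ℕ} (S : Set (Fin n →₀ ℕ)) :
    (vsM K S).colon (Ideal.span (Set.range X) : Ideal (MvPolynomial (Fin n) K))
      = vsM K (vsCol S) := by
  ext f
  have h1 : f ∈ (vsM K S).colon (Ideal.span (Set.range X) : Ideal (MvPolynomial (Fin n) K))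
      ↔ ∀ i, f * X i ∈ vsM K S := by
    rw [Submodule.mem_colon]
    constructor
    · intro h i
      exact h _ (Ideal.subset_span ⟨i, rfl⟩)
    · intro h p hp
      have : Ideal.span (Set.range X) ≤ Submodule.comap (LinearMap.lsmul (MvPolynomial (Fin n) K) (MvPolynomial (Fin n) K) f) (vsM K S) := by
        rw [Ideal.span_le]
        rintro _ ⟨i, rfl⟩
        exact h i
      exact this hp
  rw [h1, vs_mem]
  constructor
  · intro h s hs
    refine ⟨s, fun i => ?_, le_rfl⟩
    refine (vs_mem _ _).1 (h i) _ ?_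
    rw [support_mul_X]
    simpa using hs
  · intro h i
    rw [vs_mem]
    intro s hs
    rw [support_mul_X] at hs
    obtain ⟨r, hr, rfl⟩ := Finset.mem_map.1 hs
    obtain ⟨t, ht, htr⟩ := h r hr
    obtain ⟨q, hq, hqt⟩ := ht i
    exact ⟨q, hq, hqt.trans (by simpa using htr)⟩

def vsJ {n : ℕ} (c : Fin n → ℕ) (e : ℕ) : Set (Fin n →₀ ℕ) :=
  {u | ∑ i, u i + 1 = e ∧ ∀ i, u i + 1 ≤ c i}

lemma vs_J_col {n : ℕ} (c : Fin n → ℕ) (e : ℕ) : vsJ c e ⊆ vsCol (vsP c e) := by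
  rintro s ⟨h1, h2⟩ i
  refine ⟨s + Finsupp.single i 1, ⟨?_, fun j => ?_⟩, le_rfl⟩
  · simp [Finset.sum_add_distrib, Finsupp.single_apply, h1]
  · have := h2 j
    simp only [Finsupp.add_apply, Finsupp.single_apply]
    split_ifs <;> omega

lemma vs_col_cases {n : ℕ} (hn : 0 < n) (c : Fin n → ℕ) (e : ℕ) (s : Fin n →₀ ℕ)
    (hs : s ∈ vsCol (vsP c e)) : (∃ t ∈ vsP c e, t ≤ s) ∨ s ∈ vsJ c e := by
  by_cases hm : e ≤ ∑ i, min (s i) (c i)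
  · left
    obtain ⟨u, -, h2, h3⟩ := vs_interval (fun _ => 0) (fun i => min (s i) (c i))
      (fun i => Nat.zero_le _) e (by simp) hm
    refine ⟨Finsupp.equivFunOnFinite.symm u, ⟨by simpa using h3, fun i => ?_⟩, fun i => ?_⟩
    · have := h2 i; simp at this ⊢; omega
    · have := h2 i; simp at this ⊢; omega
  · right
    have key : ∀ j, e ≤ ∑ i, min (s i) (c i) + (if s j < c j then 1 else 0) := by
      intro j
      obtain ⟨t, ⟨ht1, ht2⟩, hts⟩ := hs j
      have : (if s j < c j then 1 else 0)
          = ∑ i, if j = i then (if s i < c i then 1 else 0) else 0 := by simp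
      rw [this, ← Finset.sum_add_distrib, ← ht1]
      apply Finset.sum_le_sum
      intro i _
      have h1 := ht2 i
      have h2 := hts i
      simp only [Finsupp.add_apply, Finsupp.single_apply] at h2
      split_ifs at * <;> omega
    have hlt : ∀ j, s j < c j := by
      intro j
      have := key j
      split_ifs at this with h
      · exact h
      · omega
    have he : ∑ i, min (s i) (c i) = ∑ i, s i :=
      Finset.sum_congr rfl fun i _ => by have := hlt i; omega
    refine ⟨?_, fun i => hlt i⟩
    have := key ⟨0, hn⟩
    rw [if_pos (hlt _)] at this
    omega

open Pointwise in
lemma vs_pow {K : Type*} [Field K] {n : ℕ} (a : Fin n → ℕ) (d k : ℕ) :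
    (vsM K (vsP a d)) ^ k = vsM K (vsP (fun i => k * a i) (k * d)) := by
  induction k with
  | zero =>
    rw [pow_zero, Ideal.one_eq_top, eq_comm, Ideal.eq_top_iff_one]
    exact (vs_mem_mon _ 0).2 ⟨0, ⟨by simp, by simp⟩, le_rfl⟩
  | succ k ih =>
    rw [pow_succ', ih, vs_mul]
    congr 1
    ext w
    constructor
    · rintro ⟨u, ⟨hu1, hu2⟩, v, ⟨hv1, hv2⟩, rfl⟩
      refine ⟨?_, fun i => ?_⟩
      · simp [Finset.sum_add_distrib, hu1, hv1]; ring
      · have := hu2 i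
        have := hv2 i
        simp only [Finsupp.add_apply, add_mul, one_mul] at *
        omega
    · rintro ⟨h1, h2⟩
      obtain ⟨u, v, huv, hu1, hu2, hv1, hv2⟩ := vs_split a w d k 0 (by simp) (by simp) (by simp)
        (fun A hA => by simpa using Nat.mul_le_mul_left k hA.le) (by simpa using h2)
        (by simpa using h1)
      refine ⟨Finsupp.equivFunOnFinite.symm u, ⟨by simpa using hu2, by simpa using hu1⟩,
        Finsupp.equivFunOnFinite.symm v, ⟨by simpa using hv2, by simpa using hv1⟩, ?_⟩
      ext i; simpa using huv i

lemma vs_I {K : Type*} [Field K] {n : ℕ} (a : Fin n → ℕ) (d : ℕ) :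
    Ideal.span {f : MvPolynomial (Fin n) K | ∃ u : Fin n → ℕ, (∑ i, u i) = d ∧ (∀ i, u i ≤ a i) ∧
        f = ∏ i, X i ^ u i} = vsM K (vsP a d) := by
  rw [vsM]
  have hm : ∀ s : Fin n →₀ ℕ, monomial s (1 : K) = ∏ i, X i ^ s i := by
    intro s
    rw [monomial_eq, Finsupp.prod_fintype _ _ (by simp)]; simp
  congr 1
  ext f
  constructor
  · rintro ⟨u, h1, h2, rfl⟩
    exact ⟨Finsupp.equivFunOnFinite.symm u, ⟨by simpa using h1, by simpa using h2⟩, by simp [hm]⟩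
  · rintro ⟨s, ⟨h1, h2⟩, rfl⟩
    exact ⟨s, h1, h2, hm s⟩

open Pointwise in
lemma vs_cond {K : Type*} [Field K] {n : ℕ} (hn : 0 < n) (a : Fin n → ℕ) (d k : ℕ) :
    ((vsM K (vsP a d)) ^ (k + 1)).colon (Ideal.span (Set.range X) : Ideal (MvPolynomial (Fin n) K))
      = (vsM K (vsP a d)) ^ (k + 1) ⊔ vsM K (vsP a d) * ((vsM K (vsP a d)) ^ k).colon
        (Ideal.span (Set.range X) : Ideal (MvPolynomial (Fin n) K)) ↔
    ∀ w : Fin n →₀ ℕ, w ∈ vsJ (fun i => (k + 1) * a i) ((k + 1) * d) →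
      ∃ u ∈ vsP a d, ∃ v ∈ vsJ (fun i => k * a i) (k * d), w = u + v := by
  have hge : (vsM K (vsP a d)) ^ (k + 1) ⊔ vsM K (vsP a d) * ((vsM K (vsP a d)) ^ k).colon
        (Ideal.span (Set.range X) : Ideal (MvPolynomial (Fin n) K)) ≤
     ((vsM K (vsP a d)) ^ (k + 1)).colon
        (Ideal.span (Set.range X) : Ideal (MvPolynomial (Fin n) K)) := by
    refine sup_le (fun f hf => ?_) (Ideal.mul_le.2 fun f hf g hg => ?_)
    · rw [Submodule.mem_colon]
      intro p _
      exact Ideal.mul_mem_right _ _ hf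
    · rw [Submodule.mem_colon] at hg ⊢
      intro p hp
      rw [smul_eq_mul, mul_assoc, pow_succ']
      exact Ideal.mul_mem_mul hf (hg p hp)
  rw [← hge.ge_iff_eq', vs_pow, vs_pow, vs_colon, vs_colon, vs_mul, vs_sup, vs_le]
  constructor
  · rintro h w hw
    obtain ⟨t, ht, htw⟩ := h w (vs_J_col _ _ hw)
    have hsum : ∑ i, t i ≤ ∑ i, w i := Finset.sum_le_sum fun i _ => htw i
    have hw1 := hw.1
    rcases ht with ht | ⟨u, hu, v, hv, rfl⟩
    · have := ht.1
      omega
    · simp only [Finsupp.add_apply, Finset.sum_add_distrib, hu.1] at hsum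
      rw [add_mul, one_mul] at hw1
      rcases vs_col_cases hn _ _ _ hv with ⟨t, ht, htv⟩ | hv
      · have h1 : ∑ i, t i ≤ ∑ i, v i := Finset.sum_le_sum fun i _ => htv i
        have := ht.1
        omega
      · refine ⟨u, hu, v, hv, ?_⟩
        have := hv.1
        have hu1 := hu.1
        have heq : ∑ i, (u + v) i = ∑ i, w i := by
          simp only [Finsupp.add_apply, Finset.sum_add_distrib]
          omega
        ext i
        exact ((Finset.sum_eq_sum_iff_of_le fun i _ => htw i).1 heq i (Finset.mem_univ _)).symm
  · intro h s hs
    rcases vs_col_cases hn _ _ _ hs with ⟨t, ht, hts⟩ | hs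
    · exact ⟨t, Or.inl ht, hts⟩
    · obtain ⟨u, hu, v, hv, rfl⟩ := h s hs
      exact ⟨u + v, Or.inr (Set.add_mem_add hu (vs_J_col _ _ hv)), le_rfl⟩

lemma vs_exists {n : ℕ} (c : Fin n → ℕ) (A : Finset (Fin n)) (m p : ℕ) (hpm : p ≤ m)
    (hm : m ≤ ∑ i, c i) (hp : p ≤ ∑ i ∈ A, c i) :
    ∃ w : Fin n → ℕ, (∀ i, w i ≤ c i) ∧ ∑ i, w i = m ∧ p ≤ ∑ i ∈ A, w i := by
  obtain ⟨l, -, h2, h3⟩ := vs_interval (fun _ => 0) (fun i => if i ∈ A then c i else 0)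
    (fun i => Nat.zero_le _) p (by simp) (by simpa using hp)
  have h4 : ∀ i, l i ≤ c i := fun i => (h2 i).trans (by split_ifs <;> omega)
  obtain ⟨w, hw1, hw2, hw3⟩ := vs_interval l c h4 m (by omega) hm
  refine ⟨w, hw2, hw3, ?_⟩
  have : ∑ i ∈ A, l i = ∑ i, l i := by
    apply Finset.sum_subset (Finset.subset_univ _)
    intro i _ hi
    have := h2 i
    simpa [hi] using this
  rw [← h3, ← this]
  exact Finset.sum_le_sum fun i _ => hw1 i

/-- For an ideal `I = I_{a,d}` of Veronese type with `aᵢ ≥ 1` for all `i`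
and `a₁ + ⋯ + aₙ > d`, and `k₀` the least `k ≥ 1` with `k(Σa - d) ≥ n - 1`, the module
`Soc*(I)` is equi-generated (i.e. `(I^{k+1} : 𝔪) = I^{k+1} + I·(I^k : 𝔪)` for every
`k ≥ k₀`) if and only if for every `A ⊆ [n]` with `a(A) > d` one has
`k₀(a(A) - d) ≥ |A| - 1`. -/
theorem veronese_socle_equigenerated_iff
    {K : Type*} [Field K] {n : ℕ} (a : Fin n → ℕ) (d : ℕ)
    (ha : ∀ i, 1 ≤ a i) (hd : 1 ≤ d) (hsum : d < ∑ i, a i)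
    (I : Ideal (MvPolynomial (Fin n) K))
    (hI : I = Ideal.span {f | ∃ u : Fin n → ℕ, (∑ i, u i) = d ∧ (∀ i, u i ≤ a i) ∧
        f = ∏ i, X i ^ u i})
    (mI : Ideal (MvPolynomial (Fin n) K)) (hmI : mI = Ideal.span (Set.range X))
    (k₀ : ℕ) (hk₀1 : 1 ≤ k₀) (hk₀2 : n - 1 ≤ k₀ * ((∑ i, a i) - d))
    (hk₀min : ∀ k : ℕ, 1 ≤ k → n - 1 ≤ k * ((∑ i, a i) - d) → k₀ ≤ k) :
    (∀ k : ℕ, k₀ ≤ k →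
        (I ^ (k + 1)).colon mI = I ^ (k + 1) ⊔ I * ((I ^ k).colon mI)) ↔
    (∀ A : Finset (Fin n), d < ∑ i ∈ A, a i →
        A.card - 1 ≤ k₀ * ((∑ i ∈ A, a i) - d)) := by
  have hn : 0 < n := by
    rcases Nat.eq_zero_or_pos n with rfl | h
    · simp at hsum
    · exact h
  subst hmI
  rw [vs_I] at hI
  subst hI
  simp only [vs_cond hn]
  constructor
  · intro h A hA
    by_contra! hc
    obtain ⟨q, hq⟩ := Nat.exists_eq_add_of_lt hA
    obtain ⟨r, hr⟩ := Nat.exists_eq_add_of_lt hsum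
    have hc1 : ∀ i, (k₀ + 1) * a i - 1 + 1 = (k₀ + 1) * a i := by
      intro i
      have : 1 ≤ (k₀ + 1) * a i := Nat.mul_pos (by omega) (ha i)
      omega
    have hcs : ∀ B : Finset (Fin n), ∑ i ∈ B, ((k₀ + 1) * a i - 1) + B.card
        = (k₀ + 1) * ∑ i ∈ B, a i := by
      intro B
      rw [Finset.card_eq_sum_ones, ← Finset.sum_add_distrib, Finset.mul_sum]
      exact Finset.sum_congr rfl fun i _ => hc1 i
    have hcA := hcs A
    have hcU := hcs Finset.univ
    rw [Finset.card_univ, Fintype.card_fin] at hcU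
    have hd1 : 1 ≤ (k₀ + 1) * d := Nat.mul_pos (by omega) hd
    have e1 : d + q + 1 - d = q + 1 := by omega
    have e2 : d + r + 1 - d = r + 1 := by omega
    rw [hq, e1] at hc
    rw [hr, e2] at hk₀2
    rw [hq] at hcA
    rw [hr] at hcU
    have ka : A.card ≤ k₀ * ∑ i ∈ A, a i := by
      rw [Finset.card_eq_sum_ones, Finset.mul_sum]
      exact Finset.sum_le_sum fun i _ => Nat.mul_pos (by omega) (ha i)
    rw [hq] at ka
    obtain ⟨w, hw1, hw2, hw3⟩ := vs_exists (fun i => (k₀ + 1) * a i - 1) A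
      ((k₀ + 1) * d - 1) (d + 1 + k₀ * (d + q + 1) - A.card)
      (by ring_nf at *; omega) (by ring_nf at *; omega) (by ring_nf at *; omega)
    obtain ⟨u, hu, v, hv, huv⟩ := h k₀ le_rfl (Finsupp.equivFunOnFinite.symm w)
      ⟨by simp [hw2]; omega, fun i => by have := hw1 i; have := hc1 i; simp at *; omega⟩
    have hwu : ∀ i, w i = u i + v i := fun i => by
      have := DFunLike.congr_fun huv i
      simpa using this
    have h1 : ∑ i ∈ A, w i + A.card ≤ ∑ i ∈ A, u i + k₀ * ∑ i ∈ A, a i := by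
      rw [Finset.card_eq_sum_ones, Finset.mul_sum, ← Finset.sum_add_distrib,
        ← Finset.sum_add_distrib]
      refine Finset.sum_le_sum fun i _ => ?_
      have := hv.2 i
      have := hwu i
      simp only at *
      omega
    have h2 : ∑ i ∈ A, u i ≤ ∑ i, u i := Finset.sum_le_sum_of_subset (Finset.subset_univ _)
    rw [hu.1] at h2
    rw [hq] at h1
    omega
  · intro h k hk w hw
    obtain ⟨u, v, huv, hu1, hu2, hv1, hv2⟩ := vs_split a w d k 1 le_rfl (by omega)
      (fun i => Nat.mul_pos (by omega) (ha i))
      (fun A hA => by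
        have h1 := h A hA
        obtain ⟨q, hq⟩ := Nat.exists_eq_add_of_lt hA
        have e1 : d + q + 1 - d = q + 1 := by omega
        rw [hq, e1] at h1
        have h2 : k₀ * (q + 1) ≤ k * (q + 1) := Nat.mul_le_mul_right _ hk
        rw [hq]
        have h3 : k * (d + q + 1) = k * d + k * (q + 1) := by ring
        omega) hw.2 hw.1
    refine ⟨Finsupp.equivFunOnFinite.symm u, ⟨by simpa using hu2, by simpa using hu1⟩,
        Finsupp.equivFunOnFinite.symm v, ⟨by simpa using hv2, by simpa using hv1⟩, ?_⟩
    ext i; simpa using (huv i).symm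
end
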